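/- arXiv:1307.5727 — 2 statements merged into one kernel-verified Lean document; each statement's English description precedes it below -/
import Mathlib

section
/- Let m:ℕ→ℕ satisfy n ≤ m(n) ≤ 3n−6 for all sufficiently large n. Then liminf_{n→∞} (|𝒫(n,m(n))|/n!)^{1/n} ≥ e. -/
/-!
The lower bound comes from an explicit family of planar graphs, the upper bound, without which the
`liminf` of a real sequence carries no information, from the scarcity of graphs without a
`K₅`-minor.

**Upper bound.** `|𝒫(n,m)| ≤ n! · 2 ^ (K n)` (`ncard_planarSet_le`). By Mader's argument a graph
without a `K₅`-minor has linearly many edges (`exists_complete_minor`, `K5Free.arcs_le`), so a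
positive fraction of its vertices can be grouped in pairs, each consisting of two adjacent vertices
or of two vertices with the same neighbours, and merged into a smaller graph of the same kind
(`exists_compression`). Undoing the merging costs `O(n)` bits, because the smaller graph has linearly
many edges; hence, by induction, there are only exponentially many such graphs up to isomorphism.

**Lower bound.** Fix `s`. Start with a triangle, stack `(m - n) / 2` vertices one after the other,
each joined to the three corners of the current triangle and then replacing one of these corners
(three choices), add one vertex of degree two if `m - n` is odd, and arrange the remaining vertices
in layers of size `s`, each vertex being joined to one of the `s` candidates in the preceding layer
(`s` choices). Every such graph is planar (`planarIn_canon`) and has `m` edges. Permuting the labels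
in all `n!` ways, a given labelled graph arises rarely: the graph together with its initial triangle
determines the levels (`level_eq_of_renumber_eq`), so only the order inside the layers is free, which
is a factor of about `(s!) ^ ((n - E) / s)` (`card_choices_le`), where `E` is the number of vertices
outside the layers. With Stirling's bound for `s!` and `3 ≥ e` this gives a lower bound tending to
`e / (e s) ^ (1 / s)` for the `n`-th root (`lowerSeq_le`, `tendsto_lowerSeq`), and `s` is arbitrary.
-/

open SimpleGraph Filter Asymptotics

/-- `H` is a minor of `G`: to each vertex of `H` we can assign a connected nonempty
branch set in `G`, pairwise disjoint, with an edge of `G` between the branch sets of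
any two adjacent vertices of `H`. -/
def IsMinor {α β : Type*} (H : SimpleGraph α) (G : SimpleGraph β) : Prop :=
  ∃ f : α → Set β,
    (∀ a, (G.induce (f a)).Connected) ∧
    (∀ a b, a ≠ b → Disjoint (f a) (f b)) ∧
    (∀ a b, H.Adj a b → ∃ u ∈ f a, ∃ v ∈ f b, G.Adj u v)

/-- A graph is planar iff it has neither a `K₅`-minor nor a `K₃,₃`-minor
(Wagner's theorem). -/
def IsPlanar {V : Type*} (G : SimpleGraph V) : Prop :=
  ¬ IsMinor (completeGraph (Fin 5)) G ∧
    ¬ IsMinor (completeBipartiteGraph (Fin 3) (Fin 3)) G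

/-- The number of edges of a graph. -/
noncomputable def edgeCount {V : Type*} (G : SimpleGraph V) : ℕ :=
  G.edgeSet.ncard

/-- The degree of a vertex. -/
noncomputable def vertexDegree {V : Type*} (G : SimpleGraph V) (v : V) : ℕ :=
  (G.neighborSet v).ncard

/-- `𝒫(n,m)`: the set of labelled planar graphs on `{1,…,n}` with exactly `m` edges. -/
def planarSet (n m : ℕ) : Set (SimpleGraph (Fin n)) :=
  {G | IsPlanar G ∧ edgeCount G = m}

/-- The probability that the uniform random planar graph `P_{n,m}` satisfies `P`. -/
noncomputable def planarProb (n m : ℕ) (P : SimpleGraph (Fin n) → Prop) : ℝ :=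
  ({G ∈ planarSet n m | P G}.ncard : ℝ) / ((planarSet n m).ncard : ℝ)

/-- The number of pendant edges (edges incident to a vertex of degree 1). -/
noncomputable def pendantCount {V : Type*} (G : SimpleGraph V) : ℕ :=
  {e ∈ G.edgeSet | ∃ v ∈ e, vertexDegree G v = 1}.ncard

/-- The set of addable non-edges of `G`: non-edges whose addition keeps the graph planar. -/
def addableSet {V : Type*} (G : SimpleGraph V) : Set (Sym2 V) :=
  {e | ¬ e.IsDiag ∧ e ∉ G.edgeSet ∧ IsPlanar (G ⊔ SimpleGraph.fromEdgeSet {e})}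

/-- `add(n,m)`: the minimum number of addable non-edges over all graphs in `𝒫(n,m)`. -/
noncomputable def addMin (n m : ℕ) : ℕ :=
  sInf ((fun G => (addableSet G).ncard) '' planarSet n m)

/-- `W` carries an induced order-preserving copy of `H` in `G`: the increasing bijection
from `{1,…,h}` to `W` is an isomorphism between `H` and the induced subgraph `G[W]`. -/
def IsOrderCopy {h n : ℕ} (H : SimpleGraph (Fin h)) (G : SimpleGraph (Fin n))
    (W : Finset (Fin n)) : Prop :=
  ∃ hW : W.card = h,
    ∀ i j : Fin h,
      H.Adj i j ↔ G.Adj ((W.orderIsoOfFin hW i : Fin n)) ((W.orderIsoOfFin hW j : Fin n))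

/-- `W` is the vertex set of a connected component of `G`. -/
def IsComponent {V : Type*} (G : SimpleGraph V) (W : Finset V) : Prop :=
  (G.induce (W : Set V)).Connected ∧ ∀ v ∈ W, ∀ u, G.Adj v u → u ∈ W

/-- The number of components of `G` admitting an order-preserving isomorphism to `H`. -/
noncomputable def numOrderComponents {h n : ℕ} (H : SimpleGraph (Fin h))
    (G : SimpleGraph (Fin n)) : ℕ :=
  {W : Finset (Fin n) | IsComponent G W ∧ IsOrderCopy H G W}.ncard

/-- The number of distinct cycles (as subgraphs, identified with their edge sets) of
length at most `k` in `S`. -/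
noncomputable def cycleCountLe {V : Type*} (S : SimpleGraph V) (k : ℕ) : ℕ :=
  {E : Set (Sym2 V) | ∃ (v : V) (c : S.Walk v v),
    c.IsCycle ∧ c.length ≤ k ∧ {e | e ∈ c.edges} = E}.ncard

namespace PlanarGrowth

/-! ### Minor models -/

section MinorBasics

variable {V W α : Type*}

/-- Connectedness of the subgraph of `G` induced on `S`, phrased through cuts: `S` is nonempty and
every partition of `S` into two nonempty parts is crossed by an edge of `G`. -/
def ConnIn (G : SimpleGraph V) (S : Set V) : Prop :=
  S.Nonempty ∧ ∀ A ⊆ S, A.Nonempty → (S \ A).Nonempty → ∃ u ∈ A, ∃ v ∈ S \ A, G.Adj u v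

lemma connected_induce_iff (G : SimpleGraph V) (S : Set V) :
    (G.induce S).Connected ↔ ConnIn G S := by
  constructor
  · intro h
    refine ⟨Set.nonempty_coe_sort.1 h.nonempty, ?_⟩
    rintro A hA ⟨a, ha⟩ ⟨b, hb, hbA⟩
    obtain ⟨p⟩ := h.preconnected ⟨a, hA ha⟩ ⟨b, hb⟩
    obtain ⟨d, -, hd1, hd2⟩ := p.exists_boundary_dart {x | x.1 ∈ A} ha hbA
    exact ⟨d.fst, hd1, d.snd, ⟨d.snd.2, hd2⟩, d.adj⟩
  · rintro ⟨⟨a, ha⟩, h⟩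
    rw [connected_iff_exists_forall_reachable]
    refine ⟨⟨a, ha⟩, ?_⟩
    by_contra! hcon
    obtain ⟨w, hw⟩ := hcon
    obtain ⟨u, ⟨hu, hu'⟩, v, ⟨hv, hv'⟩, huv⟩ :=
      h {x | ∃ hx : x ∈ S, (G.induce S).Reachable ⟨a, ha⟩ ⟨x, hx⟩}
        (fun x hx => hx.1) ⟨a, ha, Reachable.refl _⟩ ⟨w, w.2, fun hx => hw hx.2⟩
    refine hv' ⟨hv, hu'.trans (Adj.reachable ?_)⟩
    exact huv

lemma connIn_star {G : SimpleGraph V} {S : Set V} {c : V} (hc : c ∈ S)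
    (h : ∀ x ∈ S, x ≠ c → G.Adj c x) : ConnIn G S := by
  refine ⟨⟨c, hc⟩, ?_⟩
  rintro A hA ⟨a, ha⟩ ⟨b, hb, hbA⟩
  by_cases hcA : c ∈ A
  · exact ⟨c, hcA, b, ⟨hb, hbA⟩, h b hb (fun e => hbA (e ▸ hcA))⟩
  · exact ⟨a, ha, c, ⟨hc, hcA⟩, (h a (hA ha) (fun e => hcA (e ▸ ha))).symm⟩

lemma connIn_singleton (G : SimpleGraph V) (v : V) : ConnIn G {v} :=
  connIn_star (c := v) rfl fun _ hx hne => absurd hx hne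

/-- A model of the minor `K` in `G` all of whose branch sets lie inside the vertex set `S`. -/
structure IsModelIn (K : SimpleGraph α) (G : SimpleGraph V) (S : Set V) (f : α → Set V) :
    Prop where
  sub : ∀ a, f a ⊆ S
  conn : ∀ a, ConnIn G (f a)
  disj : ∀ a b, a ≠ b → Disjoint (f a) (f b)
  adj : ∀ a b, K.Adj a b → ∃ u ∈ f a, ∃ v ∈ f b, G.Adj u v

lemma isMinor_iff (K : SimpleGraph α) (G : SimpleGraph V) :
    IsMinor K G ↔ ∃ f, IsModelIn K G Set.univ f := by
  constructor
  · rintro ⟨f, h1, h2, h3⟩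
    exact ⟨f, fun a => Set.subset_univ _, fun a => (connected_induce_iff _ _).1 (h1 a), h2, h3⟩
  · rintro ⟨f, -, h1, h2, h3⟩
    exact ⟨f, fun a => (connected_induce_iff _ _).2 (h1 a), h2, h3⟩

lemma ConnIn.biUnion {H : SimpleGraph W} {G : SimpleGraph V} {g : W → Set V}
    (hg : IsModelIn H G Set.univ g) {S : Set W} (hS : ConnIn H S) :
    ConnIn G (⋃ w ∈ S, g w) := by
  obtain ⟨⟨w0, hw0⟩, hcut⟩ := hS
  refine ⟨?_, ?_⟩
  · obtain ⟨x, hx⟩ := (hg.conn w0).1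
    exact ⟨x, Set.mem_biUnion hw0 hx⟩
  rintro A hA ⟨a, ha⟩ ⟨b, hb, hbA⟩
  obtain ⟨wa, hwa, haw⟩ := Set.mem_iUnion₂.1 (hA ha)
  obtain ⟨wb, hwb, hbw⟩ := Set.mem_iUnion₂.1 hb
  by_cases hsplit : ∃ w ∈ S, (g w ∩ A).Nonempty ∧ (g w \ A).Nonempty
  · obtain ⟨w, hw, h1, h2⟩ := hsplit
    obtain ⟨u, hu, v, hv, huv⟩ := (hg.conn w).2 (g w ∩ A) Set.inter_subset_left h1
      (by simpa using h2)
    refine ⟨u, hu.2, v, ⟨Set.mem_biUnion hw hv.1, fun h => hv.2 ⟨hv.1, h⟩⟩, huv⟩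
  · push Not at hsplit
    obtain ⟨x, hx, y, hy, hxy⟩ := hcut {w ∈ S | (g w ∩ A).Nonempty} (fun w hw => hw.1)
      ⟨wa, hwa, a, haw, ha⟩
      ⟨wb, hwb, fun h => by
        have := hsplit wb hwb h.2
        exact (Set.eq_empty_iff_forall_notMem.1 this) b ⟨hbw, hbA⟩⟩
    obtain ⟨u, hu, v, hv, huv⟩ := hg.adj x y hxy
    refine ⟨u, ?_, v, ⟨Set.mem_biUnion hy.1 hv, fun h => hy.2 ⟨hy.1, v, hv, h⟩⟩, huv⟩
    by_contra huA
    exact (Set.eq_empty_iff_forall_notMem.1 (hsplit x hx.1 hx.2)) u ⟨hu, huA⟩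

lemma isMinor_trans {K : SimpleGraph α} {H : SimpleGraph W} {G : SimpleGraph V}
    (h1 : IsMinor K H) (h2 : IsMinor H G) : IsMinor K G := by
  rw [isMinor_iff] at *
  obtain ⟨f, hf⟩ := h1
  obtain ⟨g, hg⟩ := h2
  refine ⟨fun a => ⋃ w ∈ f a, g w, fun a => Set.subset_univ _,
    fun a => (hf.conn a).biUnion hg, ?_, ?_⟩
  · intro a b hab
    rw [Set.disjoint_left]
    intro x hx hx'
    obtain ⟨w, hw, hxw⟩ := Set.mem_iUnion₂.1 hx
    obtain ⟨w', hw', hxw'⟩ := Set.mem_iUnion₂.1 hx'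
    by_cases h : w = w'
    · subst h; exact Set.disjoint_left.1 (hf.disj a b hab) hw hw'
    · exact Set.disjoint_left.1 (hg.disj w w' h) hxw hxw'
  · intro a b hab
    obtain ⟨x, hx, y, hy, hxy⟩ := hf.adj a b hab
    obtain ⟨u, hu, v, hv, huv⟩ := hg.adj x y hxy
    exact ⟨u, Set.mem_biUnion hx hu, v, Set.mem_biUnion hy hv, huv⟩

lemma isMinor_of_injective {H : SimpleGraph W} {G : SimpleGraph V} (φ : W → V)
    (hφ : Function.Injective φ) (h : ∀ a b, H.Adj a b → G.Adj (φ a) (φ b)) : IsMinor H G := by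
  rw [isMinor_iff]
  refine ⟨fun a => {φ a}, fun a => Set.subset_univ _, fun a => connIn_singleton _ _, ?_, ?_⟩
  · intro a b hab
    simpa using fun h => hab (hφ h)
  · intro a b hab
    exact ⟨φ a, rfl, φ b, rfl, h a b hab⟩

/-- Removing a vertex whose neighbours inside `S` are pairwise adjacent keeps `S` connected. -/
lemma ConnIn.diff_singleton {G : SimpleGraph V} {S : Set V} {v : V} (hS : ConnIn G S)
    (hne : (S \ {v}).Nonempty)
    (hcl : ∀ x ∈ S, ∀ y ∈ S, G.Adj v x → G.Adj v y → x ≠ y → G.Adj x y) :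
    ConnIn G (S \ {v}) := by
  refine ⟨hne, ?_⟩
  rintro A hA ⟨a, ha⟩ ⟨b, hb, hbA⟩
  have hvA : v ∉ A := fun h => (hA h).2 rfl
  by_cases h1 : ∃ x ∈ A, G.Adj v x
  · by_cases h2 : ∃ y ∈ (S \ {v}) \ A, G.Adj v y
    · obtain ⟨x, hx, hvx⟩ := h1
      obtain ⟨y, hy, hvy⟩ := h2
      exact ⟨x, hx, y, hy, hcl x (hA hx).1 y hy.1.1 hvx hvy (fun h => hy.2 (h ▸ hx))⟩
    · push Not at h2
      by_cases hvS : v ∈ S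
      · obtain ⟨u, hu, w, hw, huw⟩ := hS.2 (insert v A)
          (Set.insert_subset hvS (fun x hx => (hA hx).1)) ⟨a, Or.inr ha⟩
          ⟨b, hb.1, by rintro (h | h); exacts [hb.2 h, hbA h]⟩
        have hw' : w ∈ (S \ {v}) \ A :=
          ⟨⟨hw.1, fun h => hw.2 (Or.inl h)⟩, fun h => hw.2 (Or.inr h)⟩
        rcases hu with rfl | hu
        · exact absurd huw (h2 w hw')
        · exact ⟨u, hu, w, hw', huw⟩
      · rw [Set.sdiff_singleton_eq_self hvS] at *
        exact hS.2 A hA ⟨a, ha⟩ ⟨b, hb, hbA⟩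
  · push Not at h1
    obtain ⟨u, hu, w, hw, huw⟩ := hS.2 A (fun x hx => (hA hx).1) ⟨a, ha⟩ ⟨b, hb.1, hbA⟩
    refine ⟨u, hu, w, ⟨⟨hw.1, ?_⟩, hw.2⟩, huw⟩
    rintro rfl
    exact h1 u hu huw.symm

/-- Several pairwise disjoint sets that all meet `N` number at most `|N|`. -/
lemma card_le_of_disjoint_meet {ι : Type*} [Fintype ι] {f : ι → Set V} {N : Finset V}
    (hd : ∀ i j, i ≠ j → Disjoint (f i) (f j)) (h : ∀ i, ∃ u ∈ f i, u ∈ N) :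
    Fintype.card ι ≤ N.card := by
  choose g hg hgN using h
  rw [← Finset.card_univ]
  refine Finset.card_le_card_of_injOn g (fun i _ => hgN i) ?_
  intro i _ j _ hij
  by_contra hne
  exact Set.disjoint_left.1 (hd i j hne) (hg i) (hij ▸ hg j)

end MinorBasics

/-! ### Linearly many edges -/

section EdgeBound

open Classical in
/-- The number of ordered pairs of adjacent vertices, i.e. twice the number of edges. -/
noncomputable def arcs {V : Type} [Fintype V] (G : SimpleGraph V) : ℕ :=
  (Finset.univ.filter fun p : V × V => G.Adj p.1 p.2).card

open Classical in
lemma arcs_eq_sum {V : Type} [Fintype V] (G : SimpleGraph V) :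
    arcs G = ∑ v, (Finset.univ.filter fun u => G.Adj v u).card := by
  unfold arcs
  rw [Finset.card_eq_sum_card_fiberwise (f := Prod.fst) (t := Finset.univ) (by simp)]
  refine Finset.sum_congr rfl fun v _ => ?_
  refine Finset.card_bij' (fun p _ => p.2) (fun u _ => (v, u)) ?_ ?_ ?_ ?_
  · rintro ⟨a, b⟩; simp; rintro h rfl; exact h
  · intro u; simp
  · rintro ⟨a, b⟩; simp; rintro h rfl; rfl
  · intro u; simp

/-- Contraction of the edge `uv` of `G`: the vertex `v` disappears and `u` inherits its
neighbours. -/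
def contractEdge {V : Type} (G : SimpleGraph V) (u v : V) : SimpleGraph {x // x ≠ v} where
  Adj a b := a ≠ b ∧ (G.Adj a b ∨ (a.1 = u ∧ G.Adj v b) ∨ (b.1 = u ∧ G.Adj v a))
  symm := ⟨by
    rintro a b ⟨h, h'⟩
    refine ⟨h.symm, ?_⟩
    rcases h' with h' | h' | h'
    exacts [Or.inl h'.symm, Or.inr (Or.inr h'), Or.inr (Or.inl h')]⟩
  loopless := ⟨fun a h => h.1 rfl⟩

lemma contractEdge_isMinor {V : Type} (G : SimpleGraph V) {u v : V} (huv : G.Adj u v) :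
    IsMinor (contractEdge G u v) G := by
  rw [isMinor_iff]
  refine ⟨fun w => {x | x = w.1 ∨ (w.1 = u ∧ x = v)}, fun a => Set.subset_univ _, ?_, ?_, ?_⟩
  · intro w
    refine connIn_star (c := w.1) (Or.inl rfl) ?_
    rintro x (h | ⟨h, rfl⟩) hx
    · exact absurd h hx
    · rw [h]; exact huv
  · intro a b hab
    rw [Set.disjoint_left]
    rintro x (h1 | ⟨h1, h2⟩) (h3 | ⟨h3, h4⟩)
    · exact hab (Subtype.ext (h1.symm.trans h3))
    · exact a.2 (h1.symm.trans h4)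
    · exact b.2 (h3.symm.trans h2)
    · exact hab (Subtype.ext (h1.trans h3.symm))
  · rintro a b ⟨-, h | ⟨h, h'⟩ | ⟨h, h'⟩⟩
    · exact ⟨a, Or.inl rfl, b, Or.inl rfl, h⟩
    · exact ⟨v, Or.inr ⟨h, rfl⟩, b, Or.inl rfl, h'⟩
    · exact ⟨a, Or.inl rfl, v, Or.inr ⟨h, rfl⟩, h'.symm⟩

open Classical in
lemma arcs_le_contractEdge {V : Type} [Fintype V] (G : SimpleGraph V) {u v : V}
    (huv : G.Adj u v) :
    arcs G ≤ arcs (contractEdge G u v) +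
      (2 + 2 * (Finset.univ.filter fun w => G.Adj u w ∧ G.Adj v w).card) := by
  set C := Finset.univ.filter fun w => G.Adj u w ∧ G.Adj v w with hC
  set bad : Finset (V × V) := {(u, v), (v, u)} ∪ (C.image fun w => (v, w)) ∪
    (C.image fun w => (w, v)) with hbad
  have hbadcard : bad.card ≤ 2 + 2 * C.card := by
    have h1 : ({(u, v), (v, u)} : Finset (V × V)).card ≤ 2 := Finset.card_le_two
    have h2 : (C.image fun w => (v, w)).card ≤ C.card := Finset.card_image_le
    have h3 : (C.image fun w => (w, v)).card ≤ C.card := Finset.card_image_le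
    have h4 := Finset.card_union_le ({(u, v), (v, u)} ∪ (C.image fun w => (v, w)))
      (C.image fun w => (w, v))
    have h5 := Finset.card_union_le ({(u, v), (v, u)}) (C.image fun w => (v, w))
    rw [hbad]
    omega
  have huv' : u ≠ v := huv.ne
  let π : V → {x // x ≠ v} := fun x => if h : x = v then ⟨u, huv'⟩ else ⟨x, h⟩
  have hπv : ∀ x, (π x).1 = if x = v then u else x := by
    intro x; by_cases h : x = v <;> simp [π, h]
  have key : ((Finset.univ.filter fun p : V × V => G.Adj p.1 p.2) \ bad).card ≤
      arcs (contractEdge G u v) := by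
    refine Finset.card_le_card_of_injOn (fun p => (π p.1, π p.2)) ?_ ?_
    · rintro ⟨x, y⟩ hp
      simp only [Finset.coe_sdiff, Finset.coe_filter, Finset.mem_univ, true_and, Set.mem_sdiff,
        Set.mem_ofPred_eq, Finset.mem_coe] at hp
      obtain ⟨hxy, hb⟩ := hp
      simp only [hbad, Finset.mem_union, Finset.mem_insert, Finset.mem_singleton,
        Finset.mem_image, not_or, hC, Finset.mem_filter, Finset.mem_univ, true_and] at hb
      have hne := hxy.ne
      simp only [Finset.coe_filter, Finset.mem_univ, true_and, Set.mem_ofPred_eq, contractEdge, ne_eq,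
        Subtype.ext_iff, hπv]
      have := hxy.symm
      grind
    · rintro ⟨x, y⟩ hp ⟨x', y'⟩ hp' heq
      simp only [Finset.coe_sdiff, Finset.coe_filter, Finset.mem_univ, true_and, Set.mem_sdiff,
        Set.mem_ofPred_eq, Finset.mem_coe] at hp hp'
      obtain ⟨hxy, hb⟩ := hp
      obtain ⟨hxy', hb'⟩ := hp'
      simp only [hbad, Finset.mem_union, Finset.mem_insert, Finset.mem_singleton,
        Finset.mem_image, not_or, hC, Finset.mem_filter, Finset.mem_univ, true_and,
        not_exists, not_and, and_imp] at hb hb'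
      simp only [Prod.mk.injEq, Subtype.ext_iff, hπv] at heq
      have hne := hxy.ne
      have hne' := hxy'.ne
      have := hxy.symm
      have := hxy'.symm
      grind
  have := Finset.le_card_sdiff bad (Finset.univ.filter fun p : V × V => G.Adj p.1 p.2)
  have h0 : arcs G = (Finset.univ.filter fun p : V × V => G.Adj p.1 p.2).card := rfl
  omega

/-- The density that forces a complete minor in `exists_complete_minor`. -/
def denseConst : ℕ → ℕ
  | 0 => 0
  | t + 1 => 2 * denseConst t + 2

lemma isMinor_complete_succ {V : Type} (G : SimpleGraph V) (v : V) (t : ℕ)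
    (h : IsMinor (completeGraph (Fin t)) (G.induce {w | G.Adj v w})) :
    IsMinor (completeGraph (Fin (t + 1))) G := by
  have h2 : IsMinor (completeGraph (Fin (t + 1)))
      (completeGraph (Option (Fin t))) :=
    isMinor_of_injective (finSuccEquiv t) (finSuccEquiv t).injective
      (fun a b hab => by simpa [completeGraph] using hab)
  refine isMinor_trans h2 ?_
  have h3 : ∃ f, IsModelIn (completeGraph (Fin t)) G {w | G.Adj v w} f := by
    rw [isMinor_iff] at h
    obtain ⟨f, hf⟩ := h
    refine ⟨fun a => Subtype.val '' f a, ?_, ?_, ?_, ?_⟩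
    · rintro a _ ⟨x, -, rfl⟩; exact x.2
    · intro a
      refine ⟨(hf.conn a).1.image _, ?_⟩
      rintro A hA ⟨a', ha'⟩ ⟨b', ⟨b, hb, rfl⟩, hbA⟩
      obtain ⟨x, hx, y, hy, hxy⟩ := (hf.conn a).2 (f a ∩ Subtype.val ⁻¹' A)
        Set.inter_subset_left
        (by obtain ⟨z, hz, rfl⟩ := hA ha'; exact ⟨z, hz, ha'⟩) ⟨b, hb, fun h => hbA h.2⟩
      exact ⟨x, hx.2, y, ⟨⟨y, hy.1, rfl⟩, fun h => hy.2 ⟨hy.1, h⟩⟩, hxy⟩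
    · intro a b hab
      exact (Set.disjoint_image_iff Subtype.val_injective).2 (hf.disj a b hab)
    · intro a b hab
      obtain ⟨x, hx, y, hy, hxy⟩ := hf.adj a b hab
      exact ⟨x, ⟨x, hx, rfl⟩, y, ⟨y, hy, rfl⟩, hxy⟩
  obtain ⟨f, hf⟩ := h3
  rw [isMinor_iff]
  have hv : ∀ a, v ∉ f a := fun a ha => G.irrefl (hf.sub a ha)
  refine ⟨fun o => o.elim {v} f, fun _ => Set.subset_univ _, ?_, ?_, ?_⟩
  · rintro (_ | a)
    exacts [connIn_singleton _ _, hf.conn a]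
  · rintro (_ | a) (_ | b) hab
    · exact absurd rfl hab
    · simpa using hv b
    · simpa using hv a
    · exact hf.disj a b (fun h => hab (by rw [h]))
  · rintro (_ | a) (_ | b) hab
    · simp at hab
    · obtain ⟨x, hx⟩ := (hf.conn b).1
      exact ⟨v, rfl, x, hx, hf.sub b hx⟩
    · obtain ⟨x, hx⟩ := (hf.conn a).1
      exact ⟨x, hx, v, rfl, (hf.sub a hx : G.Adj v x).symm⟩
    · exact hf.adj a b (by simpa [completeGraph] using hab)

open Classical in
/-- Mader's bound: linearly many edges force a `K_t` minor. While some edge lies in few triangles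
it can be contracted without losing density; otherwise the neighbourhood of a vertex is dense, and
the vertex completes a `K_{t-1}` minor of its neighbourhood. -/
lemma exists_complete_minor (t : ℕ) : ∀ (N : ℕ) (V : Type) [Fintype V] [Nonempty V]
    (G : SimpleGraph V), Fintype.card V = N → denseConst t * Fintype.card V ≤ arcs G →
    IsMinor (completeGraph (Fin t)) G := by
  induction t with
  | zero =>
    intro N V _ _ G _ _
    exact ⟨fun a => a.elim0, fun a => a.elim0, fun a => a.elim0, fun a => a.elim0⟩
  | succ t ih =>
    intro N
    induction N with
    | zero =>
      intro V _ _ G h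
      exact absurd h Fintype.card_ne_zero
    | succ N ihN =>
      intro V _ _ G hN hG
      by_cases hex : ∃ u v, G.Adj u v ∧
          (Finset.univ.filter fun w => G.Adj u w ∧ G.Adj v w).card ≤ denseConst t
      · obtain ⟨u, v, huv, hc⟩ := hex
        refine isMinor_trans ?_ (contractEdge_isMinor G huv)
        have hcard : Fintype.card {x // x ≠ v} = N := by
          rw [Fintype.card_subtype_compl, Fintype.card_subtype_eq, hN]; rfl
        have : Nonempty {x // x ≠ v} := ⟨⟨u, huv.ne⟩⟩
        refine ihN _ _ hcard ?_
        have := arcs_le_contractEdge G huv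
        rw [hN] at hG
        rw [hcard]
        simp only [denseConst] at hG ⊢
        nlinarith
      · push Not at hex
        have hpos : 0 < arcs G := by
          refine lt_of_lt_of_le ?_ hG
          have : 0 < Fintype.card V := Fintype.card_pos
          simp only [denseConst]; positivity
        obtain ⟨⟨v, u⟩, huv⟩ := Finset.card_pos.1 hpos
        simp only [Finset.mem_filter, Finset.mem_univ, true_and] at huv
        refine isMinor_complete_succ G v t ?_
        have : Nonempty {w | G.Adj v w} := ⟨⟨u, huv⟩⟩
        refine ih _ _ _ rfl ?_
        rw [arcs_eq_sum, mul_comm, ← smul_eq_mul, ← Finset.card_univ]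
        refine Finset.card_nsmul_le_sum _ _ _ ?_
        rintro ⟨w, hw⟩ -
        refine (hex v w hw).le.trans ?_
        refine Finset.card_le_card_of_surjOn Subtype.val ?_
        intro x hx
        simp only [Finset.coe_filter, Finset.mem_univ, true_and, Set.mem_ofPred_eq] at hx
        exact ⟨⟨x, hx.1⟩, by simpa using hx.2, rfl⟩

/-- Graphs without a `K₅` minor. -/
def K5Free {V : Type} (G : SimpleGraph V) : Prop := ¬ IsMinor (completeGraph (Fin 5)) G

lemma K5Free.of_isMinor {V W : Type} {G : SimpleGraph V} {H : SimpleGraph W} (hG : K5Free G)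
    (h : IsMinor H G) : K5Free H := fun h' => hG (isMinor_trans h' h)

/-- The constant is `62 = denseConst 5`. -/
lemma K5Free.arcs_le {V : Type} [Fintype V] {G : SimpleGraph V} (hG : K5Free G) :
    arcs G ≤ 62 * Fintype.card V := by
  rcases isEmpty_or_nonempty V with h | h
  · simp [arcs]
  · by_contra! hlt
    exact hG (exists_complete_minor 5 _ V G rfl hlt.le)

end EdgeBound

/-! ### Compression of graphs without a `K₅`-minor -/

section Compression

open Classical in
lemma K5Free.exists_low_degree {V : Type} [Fintype V] {G : SimpleGraph V} (hG : K5Free G)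
    (S : Finset V) (hS : S.Nonempty) : ∃ v ∈ S, (S.filter (G.Adj v)).card ≤ 62 := by
  by_contra! hcon
  have hfree : K5Free (G.induce (S : Set V)) :=
    hG.of_isMinor (isMinor_of_injective Subtype.val Subtype.val_injective fun a b h => h)
  have h1 : (∑ v : (S : Set V), (Finset.univ.filter fun u => (G.induce (S : Set V)).Adj v u).card)
      ≤ 62 * Fintype.card (S : Set V) := by
    have := hfree.arcs_le
    rw [arcs_eq_sum] at this
    convert this
  have h2 : ∀ v : (S : Set V),
      63 ≤ (Finset.univ.filter fun u => (G.induce (S : Set V)).Adj v u).card := by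
    intro v
    refine le_trans (hcon v.1 v.2) (Finset.card_le_card_of_surjOn Subtype.val ?_)
    intro x hx
    simp only [Finset.coe_filter, Set.mem_ofPred_eq] at hx
    exact ⟨⟨x, hx.1⟩, by simpa using hx.2, rfl⟩
  have h3 := Finset.card_nsmul_le_sum Finset.univ _ 63 (fun v _ => h2 v)
  have h4 : 0 < Fintype.card (S : Set V) := Fintype.card_pos_iff.2 ⟨⟨_, hS.choose_spec⟩⟩
  rw [smul_eq_mul, Finset.card_univ] at h3
  omega

open Classical in
/-- A `d`-degenerate graph has at most linearly many cliques. -/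
lemma card_cliques_le {V : Type} [Fintype V] (H : SimpleGraph V) (d : ℕ)
    (hd : ∀ S : Finset V, S.Nonempty → ∃ v ∈ S, (S.filter (H.Adj v)).card ≤ d) (k : ℕ) :
    ∀ S : Finset V, S.card = k →
      (S.powerset.filter fun T : Finset V => H.IsClique (T : Set V)).card ≤ 2 ^ d * k + 1 := by
  induction k with
  | zero =>
    intro S hS
    rw [Finset.card_eq_zero] at hS
    subst hS
    refine (Finset.card_filter_le _ _).trans (by simp)
  | succ k ih =>
    intro S hS
    obtain ⟨v, hv, hdeg⟩ := hd S (Finset.card_pos.1 (by omega))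
    have hsub : (S.powerset.filter fun T : Finset V => H.IsClique (T : Set V)) ⊆
        ((S.erase v).powerset.filter fun T : Finset V => H.IsClique (T : Set V)) ∪
        ((S.filter (H.Adj v)).powerset.image (insert v)) := by
      intro T hT
      simp only [Finset.mem_filter, Finset.mem_powerset, Finset.mem_union, Finset.mem_image] at hT ⊢
      by_cases hvT : v ∈ T
      · right
        refine ⟨T.erase v, ?_, Finset.insert_erase hvT⟩
        intro x hx
        rw [Finset.mem_erase] at hx
        simp only [Finset.mem_filter]
        exact ⟨hT.1 hx.2, hT.2 hvT hx.2 hx.1.symm⟩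
      · left
        exact ⟨fun x hx => Finset.mem_erase.2 ⟨fun h => hvT (h ▸ hx), hT.1 hx⟩, hT.2⟩
    have h1 := ih (S.erase v) (by rw [Finset.card_erase_of_mem hv, hS]; rfl)
    have h2 : ((S.filter (H.Adj v)).powerset.image (insert v)).card ≤ 2 ^ d := by
      refine Finset.card_image_le.trans ?_
      rw [Finset.card_powerset]
      exact Nat.pow_le_pow_right (by norm_num) hdeg
    refine (Finset.card_le_card hsub).trans ((Finset.card_union_le _ _).trans ?_)
    rw [Nat.mul_succ]
    omega

/-- The constant of `card_le_of_distinct_neighbors`. -/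
def nbrConst : ℕ := 62 + 2 ^ 62

open Classical in
/-- An independent set whose vertices have pairwise different neighbourhoods, all inside `C`, has
size `O(|C|)` in a `K₅`-minor-free graph. As long as possible, vertices `v` of `I` are contracted
onto a neighbour so as to create a new edge on `C`; this happens at most `62|C|` times, and the
neighbourhoods of the remaining vertices are distinct cliques of the resulting minor on `C`. -/
lemma card_le_of_distinct_neighbors {V : Type} [Fintype V] {G : SimpleGraph V} (hG : K5Free G)
    (I C : Finset V) (hdisj : ∀ v ∈ I, v ∉ C) (hN : ∀ v ∈ I, ∀ w, G.Adj v w → w ∈ C)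
    (hdist : ∀ u ∈ I, ∀ v ∈ I, (∀ w, G.Adj u w ↔ G.Adj v w) → u = v) :
    I.card ≤ nbrConst * C.card + 1 := by
  let P : Finset V × (V → V × V) → Prop := fun q =>
    q.1 ⊆ I ∧ (∀ v ∈ q.1, (q.2 v).1 ≠ (q.2 v).2 ∧ G.Adj v (q.2 v).1 ∧ G.Adj v (q.2 v).2) ∧
    (∀ v ∈ q.1, ∀ w ∈ q.1, s((q.2 v).1, (q.2 v).2) = s((q.2 w).1, (q.2 w).2) → v = w)
  obtain ⟨⟨A, φ⟩, hA, hmax⟩ := Finset.exists_max_image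
    (Finset.univ.filter P) (fun q => q.1.card)
    ⟨(∅, fun v => (v, v)), by simp [P]⟩
  simp only [Finset.mem_filter, Finset.mem_univ, true_and] at hA hmax
  obtain ⟨hAI, hφ, hinj⟩ := hA
  dsimp only at hAI hφ hinj
  let H : SimpleGraph {x // x ∈ C} :=
    { Adj := fun a b => a ≠ b ∧ (G.Adj a b ∨ ∃ v ∈ A, s((φ v).1, (φ v).2) = s(a.1, b.1))
      symm := ⟨by
        rintro a b ⟨h, h'⟩
        refine ⟨h.symm, ?_⟩
        rcases h' with h' | ⟨v, hv, h'⟩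
        · exact Or.inl h'.symm
        · exact Or.inr ⟨v, hv, h'.trans Sym2.eq_swap⟩⟩
      loopless := ⟨fun a h => h.1 rfl⟩ }
  have hH : K5Free H := by
    refine hG.of_isMinor ?_
    rw [isMinor_iff]
    refine ⟨fun c => {x | x = c.1 ∨ (x ∈ A ∧ (φ x).1 = c.1)}, fun _ => Set.subset_univ _,
      ?_, ?_, ?_⟩
    · intro c
      refine connIn_star (c := c.1) (Or.inl rfl) ?_
      rintro x (h | ⟨h, h'⟩) hx
      · exact absurd h hx
      · rw [← h']; exact (hφ x h).2.1.symm
    · intro a b hab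
      rw [Set.disjoint_left]
      rintro x (h1 | ⟨h1, h2⟩) (h3 | ⟨h3, h4⟩)
      · exact hab (Subtype.ext (h1.symm.trans h3))
      · exact hdisj x (hAI h3) (h1 ▸ a.2)
      · exact hdisj x (hAI h1) (h3 ▸ b.2)
      · exact hab (Subtype.ext (h2.symm.trans h4))
    · rintro a b ⟨-, h | ⟨v, hv, h⟩⟩
      · exact ⟨a, Or.inl rfl, b, Or.inl rfl, h⟩
      · rcases Sym2.eq_iff.1 h with ⟨h1, h2⟩ | ⟨h1, h2⟩
        · exact ⟨v, Or.inr ⟨hv, h1⟩, b, Or.inl rfl, h2 ▸ (hφ v hv).2.2⟩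
        · exact ⟨a, Or.inl rfl, v, Or.inr ⟨hv, h1⟩, h2 ▸ (hφ v hv).2.2.symm⟩
  have hcardC : Fintype.card {x // x ∈ C} = C.card := Fintype.card_coe C
  have hAcard : A.card ≤ 62 * C.card := by
    rw [← hcardC]
    refine le_trans ?_ hH.arcs_le
    refine Finset.card_le_card_of_surjOn
      (fun p => if h : ∃ v ∈ A, φ v = (p.1.1, p.2.1) then h.choose else (p.1.1 : V)) ?_
    intro v hv
    have hv' : v ∈ A := hv
    refine ⟨(⟨(φ v).1, hN v (hAI hv) _ (hφ v hv).2.1⟩, ⟨(φ v).2, hN v (hAI hv) _ (hφ v hv).2.2⟩),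
      ?_, ?_⟩
    · simp only [Finset.coe_filter, Finset.mem_univ, true_and, Set.mem_ofPred_eq]
      exact ⟨fun h => (hφ v hv).1 (congrArg Subtype.val h), Or.inr ⟨v, hv, rfl⟩⟩
    · have hex : ∃ w ∈ A, φ w = ((φ v).1, (φ v).2) := ⟨v, hv, rfl⟩
      dsimp only
      rw [dif_pos hex]
      refine hinj _ hex.choose_spec.1 _ hv ?_
      rw [hex.choose_spec.2]
  have hrest : (I \ A).card ≤ 2 ^ 62 * C.card + 1 := by
    have hcl := card_cliques_le H 62 (fun S hS => hH.exists_low_degree S hS) C.card Finset.univ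
      (by rw [Finset.card_univ, hcardC])
    refine le_trans ?_ hcl
    refine Finset.card_le_card_of_injOn (fun v => Finset.univ.filter fun c : {x // x ∈ C} => G.Adj v c.1) ?_ ?_
    · intro v hv
      have hv' : v ∈ I ∧ v ∉ A := by simpa using hv
      obtain ⟨hvI, hvA⟩ := hv'
      simp only [Finset.powerset_univ, Finset.coe_filter, Finset.mem_univ, true_and,
        Set.mem_ofPred_eq]
      intro x hx y hy hxy
      simp only [Set.mem_ofPred_eq] at hx hy
      by_contra hnot
      -- otherwise `v` could be contracted as well, creating the new edge `xy`
      have hnot' : ∀ w ∈ A, s((φ w).1, (φ w).2) ≠ s(x.1, y.1) := fun w hw h =>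
        hnot ⟨hxy, Or.inr ⟨w, hw, h⟩⟩
      have hne : ∀ w ∈ A, w ≠ v := fun w hw h => hvA (h ▸ hw)
      have := hmax (insert v A, Function.update φ v (x.1, y.1)) ⟨?_, ?_, ?_⟩
      · rw [Finset.card_insert_of_notMem hvA] at this
        omega
      · exact Finset.insert_subset hvI hAI
      · intro w hw
        rcases Finset.mem_insert.1 hw with rfl | hw
        · simp only [Function.update_self]
          exact ⟨fun h => hxy (Subtype.ext h), hx, hy⟩
        · simp only [Function.update_of_ne (hne w hw)]
          exact hφ w hw
      · intro w hw w' hw' heq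
        rcases Finset.mem_insert.1 hw with rfl | hw1 <;>
          rcases Finset.mem_insert.1 hw' with rfl | hw2
        · rfl
        · simp only [Function.update_self, Function.update_of_ne (hne w' hw2)] at heq
          exact absurd heq.symm (hnot' _ hw2)
        · simp only [Function.update_self, Function.update_of_ne (hne w hw1)] at heq
          exact absurd heq (hnot' _ hw1)
        · simp only [Function.update_of_ne (hne w hw1), Function.update_of_ne (hne w' hw2)] at heq
          exact hinj w hw1 w' hw2 heq
    · intro u hu v hv huv
      have hu' : u ∈ I ∧ u ∉ A := by simpa using hu
      have hv' : v ∈ I ∧ v ∉ A := by simpa using hv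
      refine hdist u hu'.1 v hv'.1 fun w => ?_
      have hmem := fun c : {x // x ∈ C} => Finset.ext_iff.1 huv c
      simp only [Finset.mem_filter, Finset.mem_univ, true_and] at hmem
      constructor
      · intro h; exact (hmem ⟨w, hN u hu'.1 w h⟩).1 h
      · intro h; exact (hmem ⟨w, hN v hv'.1 w h⟩).2 h
  have := Finset.card_sdiff_add_card_eq_card hAI
  have : nbrConst * C.card = 62 * C.card + 2 ^ 62 * C.card := by rw [nbrConst, add_mul]
  omega

/-- The constant of `exists_compression`. -/
def comprConst : ℕ := 2 + 2 * nbrConst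

open Classical in
/-- A positive fraction of the vertices of a `K₅`-minor-free graph can be merged away in disjoint
pairs, the result being `K₅`-minor-free again. The pairs are edges or pairs of twins; a maximal
family of disjoint such pairs is large because the uncovered vertices are independent with
pairwise different neighbourhoods. -/
lemma exists_compression {V : Type} [Fintype V] {G : SimpleGraph V} (hG : K5Free G) :
    ∃ (A : Finset V) (π : V → {v // v ∉ A}) (G' : SimpleGraph {v // v ∉ A}), K5Free G' ∧
      Fintype.card V ≤ comprConst * A.card + 1 ∧
      (∀ u v, G.Adj u v → π u = π v ∨ G'.Adj (π u) (π v)) ∧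
      (∀ u v, π u = π v → (u ∈ A ↔ v ∈ A) → u = v) := by
  let R : V → V → Prop := fun u v => u ≠ v ∧ (G.Adj u v ∨ ∀ w, G.Adj u w ↔ G.Adj v w)
  let P : Finset V × (V → V) → Prop := fun q =>
    (∀ a ∈ q.1, q.2 a ∉ q.1 ∧ R a (q.2 a)) ∧ Set.InjOn q.2 q.1
  obtain ⟨⟨A, τ⟩, hA, hmax⟩ := Finset.exists_max_image
    (Finset.univ.filter P) (fun q => q.1.card) ⟨(∅, id), by simp [P]⟩
  simp only [Finset.mem_filter, Finset.mem_univ, true_and] at hA hmax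
  obtain ⟨hR, hinj⟩ := hA
  dsimp only at hR hinj
  set C := A ∪ A.image τ with hC
  have hCcard : C.card ≤ 2 * A.card := by
    have h1 := Finset.card_union_le A (A.image τ)
    have h2 : (A.image τ).card ≤ A.card := Finset.card_image_le
    rw [hC]
    omega
  have hext : ∀ u ∉ C, ∀ v ∉ C, ¬ R u v := by
    intro u hu v hv huv
    simp only [hC, Finset.mem_union, Finset.mem_image, not_or, not_exists, not_and] at hu hv
    have hne : ∀ a ∈ A, a ≠ u := fun a ha h => hu.1 (h ▸ ha)
    have := hmax (insert u A, Function.update τ u v) ⟨?_, ?_⟩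
    · rw [Finset.card_insert_of_notMem hu.1] at this
      omega
    · intro a ha
      rcases Finset.mem_insert.1 ha with rfl | ha
      · simp only [Function.update_self, Finset.mem_insert, not_or]
        exact ⟨⟨huv.1.symm, hv.1⟩, huv⟩
      · simp only [Function.update_of_ne (hne a ha), Finset.mem_insert, not_or]
        exact ⟨⟨hu.2 a ha, (hR a ha).1⟩, (hR a ha).2⟩
    · intro a ha b hb hab
      rcases Finset.mem_insert.1 (Finset.mem_coe.1 ha) with rfl | ha1 <;>
        rcases Finset.mem_insert.1 (Finset.mem_coe.1 hb) with rfl | hb1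
      · rfl
      · simp only [Function.update_self, Function.update_of_ne (hne b hb1)] at hab
        exact absurd hab.symm (hv.2 b hb1)
      · simp only [Function.update_self, Function.update_of_ne (hne a ha1)] at hab
        exact absurd hab (hv.2 a ha1)
      · simp only [Function.update_of_ne (hne a ha1), Function.update_of_ne (hne b hb1)] at hab
        exact hinj ha1 hb1 hab
  have hI := card_le_of_distinct_neighbors hG Cᶜ C (fun v hv => Finset.mem_compl.1 hv)
    (by
      intro v hv w hvw
      by_contra hw
      exact hext v (Finset.mem_compl.1 hv) w hw ⟨hvw.ne, Or.inl hvw⟩)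
    (by
      intro u hu v hv huv
      by_contra hne
      exact hext u (Finset.mem_compl.1 hu) v (Finset.mem_compl.1 hv) ⟨hne, Or.inr huv⟩)
  let π : V → {v // v ∉ A} := fun v => if h : v ∈ A then ⟨τ v, (hR v h).1⟩ else ⟨v, h⟩
  have hπA : ∀ v (h : v ∈ A), (π v).1 = τ v := fun v h => by simp [π, h]
  have hπn : ∀ v (h : v ∉ A), (π v).1 = v := fun v h => by simp [π, h]
  let G' : SimpleGraph {v // v ∉ A} :=
    { Adj := fun a b => a ≠ b ∧ ∃ u v, π u = a ∧ π v = b ∧ G.Adj u v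
      symm := ⟨by
        rintro a b ⟨h, u, v, h1, h2, h3⟩
        exact ⟨h.symm, v, u, h2, h1, h3.symm⟩⟩
      loopless := ⟨fun a h => h.1 rfl⟩ }
  refine ⟨A, π, G', ?_, ?_, ?_, ?_⟩
  · refine hG.of_isMinor ?_
    rw [isMinor_iff]
    let f : {v // v ∉ A} → Set V := fun w => {x | x = w.1 ∨ (x ∈ A ∧ τ x = w.1 ∧ G.Adj w.1 x)}
    -- a twin outside its branch set can be replaced by the representative
    have hrep : ∀ u v, G.Adj u v → ∃ u' ∈ f (π u), G.Adj u' v := by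
      intro u v huv
      by_cases hu : u ∈ A
      · by_cases had : G.Adj u (τ u)
        · exact ⟨u, Or.inr ⟨hu, (hπA u hu).symm, by rw [hπA u hu]; exact had.symm⟩, huv⟩
        · have htw := (hR u hu).2.2.resolve_left had
          exact ⟨τ u, Or.inl (hπA u hu).symm, (htw v).1 huv⟩
      · exact ⟨u, Or.inl (hπn u hu).symm, huv⟩
    refine ⟨f, fun _ => Set.subset_univ _, ?_, ?_, ?_⟩
    · intro w
      refine connIn_star (c := w.1) (Or.inl rfl) ?_
      rintro x (h | ⟨-, -, h⟩) hx
      · exact absurd h hx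
      · exact h
    · intro a b hab
      rw [Set.disjoint_left]
      rintro x (h1 | ⟨h1, h2, -⟩) (h3 | ⟨h3, h4, -⟩)
      · exact hab (Subtype.ext (h1.symm.trans h3))
      · exact a.2 (h1 ▸ h3)
      · exact b.2 (h3 ▸ h1)
      · exact hab (Subtype.ext (h2.symm.trans h4))
    · rintro a b ⟨-, u, v, rfl, rfl, huv⟩
      obtain ⟨u', hu', h1⟩ := hrep u v huv
      obtain ⟨v', hv', h2⟩ := hrep v u' h1.symm
      exact ⟨u', hu', v', hv', h2.symm⟩
  · have h1 := Finset.card_add_card_compl C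
    have h2 : nbrConst * C.card ≤ nbrConst * (2 * A.card) := Nat.mul_le_mul_left _ hCcard
    have h3 : comprConst * A.card = 2 * A.card + nbrConst * (2 * A.card) := by
      rw [comprConst]; ring
    omega
  · intro u v huv
    by_cases h : π u = π v
    · exact Or.inl h
    · exact Or.inr ⟨h, u, v, rfl, rfl, huv⟩
  · intro u v huv hiff
    have h := congrArg Subtype.val huv
    by_cases hu : u ∈ A
    · have hv := hiff.1 hu
      rw [hπA u hu, hπA v hv] at h
      exact hinj hu hv h
    · have hv : v ∉ A := fun hv => hu (hiff.2 hv)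
      rwa [hπn u hu, hπn v hv] at h

end Compression

/-! ### The exponential upper bound -/

section UpperBound

open Classical in
/-- The pairs of vertices of `Fin k × Bool` that are equal or adjacent after every vertex of `H`
has been doubled. -/
noncomputable def blowPairs {k : ℕ} (H : SimpleGraph (Fin k)) :
    Finset ((Fin k × Bool) × (Fin k × Bool)) :=
  Finset.univ.filter fun p => p.1.1 = p.2.1 ∨ H.Adj p.1.1 p.2.1

open Classical in
lemma card_blowPairs_le {k : ℕ} {H : SimpleGraph (Fin k)} (hH : K5Free H) :
    (blowPairs H).card ≤ 252 * k := by
  have h1 : (Finset.univ.filter fun p : Fin k × Fin k => p.1 = p.2 ∨ H.Adj p.1 p.2).card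
      ≤ 63 * k := by
    rw [Finset.filter_or]
    refine (Finset.card_union_le _ _).trans ?_
    have h2 : (Finset.univ.filter fun p : Fin k × Fin k => p.1 = p.2).card ≤ k := by
      have : (Finset.univ.filter fun p : Fin k × Fin k => p.1 = p.2).card ≤
          (Finset.univ : Finset (Fin k)).card :=
        Finset.card_le_card_of_injOn Prod.fst (by simp) (by
          rintro ⟨a, b⟩ h ⟨c, d⟩ h' hh
          simp at h h' hh
          grind)
      simpa using this
    have h3 : (Finset.univ.filter fun p : Fin k × Fin k => H.Adj p.1 p.2).card ≤ 62 * k := by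
      have := hH.arcs_le
      rw [Fintype.card_fin] at this
      exact this
    omega
  have h2 : (blowPairs H).card ≤
      ((Finset.univ.filter fun p : Fin k × Fin k => p.1 = p.2 ∨ H.Adj p.1 p.2) ×ˢ
        (Finset.univ : Finset (Bool × Bool))).card := by
    refine Finset.card_le_card_of_injOn (fun p => ((p.1.1, p.2.1), (p.1.2, p.2.2))) ?_ ?_
    · rintro ⟨⟨a, b⟩, c, d⟩ h
      simpa [blowPairs] using h
    · rintro ⟨⟨a, b⟩, c, d⟩ h ⟨⟨a', b'⟩, c', d'⟩ h' hh
      simp at hh ⊢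
      tauto
  rw [Finset.card_product] at h2
  have h4 : (Finset.univ : Finset (Bool × Bool)).card = 4 := rfl
  rw [h4] at h2
  omega

open Classical in
/-- The graph on `Fin n` obtained by numbering the elements of `S` and taking the edges that
the set `T` of pairs prescribes. -/
noncomputable def decodeGraph (n : ℕ) {k : ℕ} (S : Finset (Fin k × Bool))
    (T : Finset ((Fin k × Bool) × (Fin k × Bool))) : SimpleGraph (Fin n) :=
  if h : S.card = n then
    SimpleGraph.fromRel fun i j =>
      (((S.equivFinOfCardEq h).symm i).1, ((S.equivFinOfCardEq h).symm j).1) ∈ T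
  else ⊥

/-- Base-two logarithm of the growth constant in the upper bound. -/
def growthExp : ℕ := 255 * (2 * comprConst)

open Classical in
/-- A graph without a `K₅`-minor is recovered, up to isomorphism, from a smaller one `H`, the set
`S` of those copies in the doubled vertex set of `H` that are in use, and a set `T` of pairs that
are equal or adjacent in the doubling. -/
lemma exists_decode {n : ℕ} (hn : 2 ≤ n) {G : SimpleGraph (Fin n)} (hG : K5Free G)
    (F : (k : ℕ) → Finset (SimpleGraph (Fin k)))
    (hF : ∀ k < n, ∀ H : SimpleGraph (Fin k), K5Free H → ∃ H' ∈ F k, Nonempty (H ≃g H')) :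
    ∃ k < n, n ≤ 2 * comprConst * (n - k) ∧ ∃ H ∈ F k, ∃ S, ∃ T ⊆ blowPairs H,
      Nonempty (G ≃g decodeGraph n S T) := by
  obtain ⟨A, π, G', hG', hcard, hadj, hinj⟩ := exists_compression hG
  rw [Fintype.card_fin] at hcard
  have hA1 : 1 ≤ comprConst * A.card := by omega
  have hA : 0 < A.card := Nat.pos_of_mul_pos_left hA1
  have hAn : A.card ≤ n := by simpa using Finset.card_le_univ A
  have hW : Fintype.card {v // v ∉ A} = n - A.card := by
    rw [Fintype.card_subtype_compl, Fintype.card_fin, Fintype.card_coe]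
  set k := n - A.card with hk
  have hkn : k < n := by omega
  let e : {v // v ∉ A} ≃ Fin k := Fintype.equivFinOfCardEq hW
  have hfree : K5Free (G'.map e.toEmbedding) :=
    hG'.of_isMinor (isMinor_of_injective e.symm e.symm.injective (by
      intro a b hab
      rw [SimpleGraph.map_adj] at hab
      obtain ⟨u, v, h, rfl, rfl⟩ := hab
      simpa using h))
  obtain ⟨H, hHF, ⟨ψ⟩⟩ := hF k hkn _ hfree
  let θ : {v // v ∉ A} ≃ Fin k := e.trans ψ.toEquiv
  have hθ : ∀ a b, G'.Adj a b → H.Adj (θ a) (θ b) := by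
    intro a b hab
    refine ψ.map_adj_iff.2 ?_
    rw [SimpleGraph.map_adj]
    exact ⟨a, b, hab, rfl, rfl⟩
  let j : Fin n → Fin k × Bool := fun v => (θ (π v), decide (v ∈ A))
  have hj : Function.Injective j := by
    intro u v huv
    simp only [j, Prod.mk.injEq, EmbeddingLike.apply_eq_iff_eq, decide_eq_decide] at huv
    exact hinj u v huv.1 huv.2
  let S : Finset (Fin k × Bool) := Finset.univ.image j
  have hS : S.card = n := by
    rw [Finset.card_image_of_injective _ hj, Finset.card_univ, Fintype.card_fin]
  let T := (Finset.univ.filter fun p : Fin n × Fin n => G.Adj p.1 p.2).image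
    fun p => (j p.1, j p.2)
  have hT : ∀ u v, (j u, j v) ∈ T ↔ G.Adj u v := by
    intro u v
    simp only [T, Finset.mem_image, Finset.mem_filter, Finset.mem_univ, true_and, Prod.mk.injEq,
      Prod.exists]
    constructor
    · rintro ⟨a, b, h, h1, h2⟩
      rwa [← hj h1, ← hj h2]
    · intro h
      exact ⟨u, v, h, rfl, rfl⟩
  refine ⟨k, hkn, ?_, H, hHF, S, T, ?_, ?_⟩
  · have : n - k = A.card := by omega
    rw [this, mul_assoc]
    omega
  · intro p hp
    simp only [T, Finset.mem_image, Finset.mem_filter, Finset.mem_univ, true_and,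
      Prod.exists] at hp
    obtain ⟨u, v, huv, rfl⟩ := hp
    simp only [blowPairs, Finset.mem_filter, Finset.mem_univ, true_and, j]
    rcases hadj u v huv with h | h
    · exact Or.inl (by rw [h])
    · exact Or.inr (hθ _ _ h)
  · let ε : Fin n ≃ Fin n := (Equiv.ofBijective
      (fun v => (⟨j v, Finset.mem_image_of_mem _ (Finset.mem_univ v)⟩ : S)) ⟨by
        intro u v huv
        exact hj (congrArg Subtype.val huv), by
        rintro ⟨x, hx⟩
        obtain ⟨v, -, hv⟩ := Finset.mem_image.1 hx
        exact ⟨v, Subtype.ext hv⟩⟩).trans (S.equivFinOfCardEq hS)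
    have hε : ∀ v, ((S.equivFinOfCardEq hS).symm (ε v)).1 = j v := by
      intro v
      simp [ε]
      rfl
    refine ⟨⟨ε, ?_⟩⟩
    intro u v
    unfold decodeGraph
    rw [dif_pos hS, SimpleGraph.fromRel_adj, hε, hε, hT, hT, G.adj_comm v u, or_self]
    exact ⟨fun h => h.2, fun h => ⟨fun h' => h.ne (ε.injective h'), h⟩⟩

open Classical in
/-- Up to isomorphism there are only exponentially many `K₅`-minor-free graphs on `n` vertices. -/
lemma exists_family (n : ℕ) : ∃ F : Finset (SimpleGraph (Fin n)),
    F.card ≤ 2 ^ (growthExp * n) ∧ (∀ H ∈ F, K5Free H) ∧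
      ∀ G : SimpleGraph (Fin n), K5Free G → ∃ H ∈ F, Nonempty (G ≃g H) := by
  induction n using Nat.strong_induction_on with
  | _ n ih =>
  rcases Nat.lt_or_ge n 2 with hn | hn
  · have hsub : Subsingleton (SimpleGraph (Fin n)) := by
      have : Subsingleton (Fin n) := Fin.subsingleton_iff_le_one.2 (by omega)
      infer_instance
    refine ⟨Finset.univ.filter K5Free, ?_, by simp, ?_⟩
    · refine le_trans (Finset.card_le_one_of_subsingleton _) Nat.one_le_two_pow
    · intro G hG
      exact ⟨G, by simpa using hG, ⟨SimpleGraph.Iso.refl⟩⟩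
  · have ih' : ∀ k, ∃ F : Finset (SimpleGraph (Fin k)), k < n →
        F.card ≤ 2 ^ (growthExp * k) ∧ (∀ H ∈ F, K5Free H) ∧
        ∀ G : SimpleGraph (Fin k), K5Free G → ∃ H ∈ F, Nonempty (G ≃g H) := by
      intro k
      by_cases hk : k < n
      · obtain ⟨F, hF⟩ := ih k hk
        exact ⟨F, fun _ => hF⟩
      · exact ⟨∅, fun h => absurd h hk⟩
    choose F hF using ih'
    let D : ℕ → Finset (SimpleGraph (Fin n)) := fun k => (F k).biUnion fun H =>
      ((Finset.univ : Finset (Finset (Fin k × Bool))) ×ˢ (blowPairs H).powerset).image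
        fun q => decodeGraph n q.1 q.2
    have hD : ∀ k < n, n ≤ 2 * comprConst * (n - k) →
        (D k).card ≤ 2 ^ (growthExp * n - n) := by
      intro k hk hkn
      have h1 : (D k).card ≤ (F k).card * 2 ^ (254 * k) := by
        refine Finset.card_biUnion_le_card_mul _ _ _ ?_
        intro H hH
        refine Finset.card_image_le.trans ?_
        rw [Finset.card_product, Finset.card_powerset, Finset.card_univ, Fintype.card_finset,
          Fintype.card_prod, Fintype.card_fin, Fintype.card_bool, ← pow_add]
        refine Nat.pow_le_pow_right (by norm_num) ?_
        have := card_blowPairs_le ((hF k hk).2.1 H hH)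
        omega
      refine h1.trans ((Nat.mul_le_mul_right _ (hF k hk).1).trans ?_)
      rw [← pow_add]
      refine Nat.pow_le_pow_right (by norm_num) ?_
      have h2 : growthExp * (n - k) = 255 * (2 * comprConst * (n - k)) := by
        rw [growthExp]; ring
      have h3 : growthExp * n = growthExp * k + growthExp * (n - k) := by
        rw [← mul_add]; congr 1; omega
      omega
    refine ⟨(((Finset.range n).filter fun k => n ≤ 2 * comprConst * (n - k)).biUnion D).filter
      K5Free, ?_, by simp, ?_⟩
    · refine (Finset.card_filter_le _ _).trans ?_
      refine (Finset.card_biUnion_le_card_mul _ _ (2 ^ (growthExp * n - n)) ?_).trans ?_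
      · intro k hk
        simp only [Finset.mem_filter, Finset.mem_range] at hk
        exact hD k hk.1 hk.2
      · have h1 : ((Finset.range n).filter fun k => n ≤ 2 * comprConst * (n - k)).card ≤ 2 ^ n :=
          (Finset.card_filter_le _ _).trans (by
            rw [Finset.card_range]; exact Nat.lt_two_pow_self.le)
        refine (Nat.mul_le_mul_right _ h1).trans ?_
        rw [← pow_add]
        refine Nat.pow_le_pow_right (by norm_num) ?_
        have : n ≤ growthExp * n := Nat.le_mul_of_pos_left _ (by
          simp [growthExp, comprConst])
        omega
    · intro G hG
      obtain ⟨k, hk, hkn, H, hH, S, T, hT, ⟨φ⟩⟩ :=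
        exists_decode hn hG F (fun k hk => (hF k hk).2.2)
      refine ⟨decodeGraph n S T, ?_, ⟨φ⟩⟩
      rw [Finset.mem_filter]
      constructor
      · rw [Finset.mem_biUnion]
        refine ⟨k, by simp [hk, hkn], ?_⟩
        rw [Finset.mem_biUnion]
        refine ⟨H, hH, ?_⟩
        rw [Finset.mem_image]
        exact ⟨(S, T), by simpa using hT, rfl⟩
      · exact hG.of_isMinor (isMinor_of_injective φ.symm φ.symm.injective
          (fun a b h => φ.symm.map_adj_iff.2 h))

open Classical in
lemma ncard_planarSet_le (n m : ℕ) :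
    (planarSet n m).ncard ≤ n.factorial * 2 ^ (growthExp * n) := by
  obtain ⟨F, hcard, -, hF⟩ := exists_family n
  have hsub : planarSet n m ⊆
      (((Finset.univ : Finset (Equiv.Perm (Fin n))) ×ˢ F).image
        (fun q => q.2.comap q.1) : Finset (SimpleGraph (Fin n))) := by
    intro G hG
    obtain ⟨H, hH, ⟨φ⟩⟩ := hF G hG.1.1
    simp only [Finset.coe_image, Set.mem_image, Finset.mem_coe, Finset.mem_product]
    refine ⟨(φ.toEquiv, H), ⟨Finset.mem_univ _, hH⟩, ?_⟩
    ext u v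
    exact φ.map_adj_iff
  refine (Set.ncard_le_ncard hsub (Finset.finite_toSet _)).trans ?_
  rw [Set.ncard_coe_finset]
  refine Finset.card_image_le.trans ?_
  rw [Finset.card_product, Finset.card_univ, Fintype.card_perm, Fintype.card_fin]
  exact Nat.mul_le_mul_left _ hcard

end UpperBound

/-! ### Inserting vertices into planar graphs -/

section StackedModels

variable {V W α : Type*}

/-- Deleting a vertex `v` with clique neighbourhood from all branch sets of a model leaves a model,
provided `v` does not form a branch set on its own. -/
lemma IsModelIn.diff_singleton {K : SimpleGraph α} {G : SimpleGraph V} {S : Set V} {v : V}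
    {f : α → Set V} (hf : IsModelIn K G (insert v S) f)
    (hcl : ∀ x ∈ S, ∀ y ∈ S, G.Adj v x → G.Adj v y → x ≠ y → G.Adj x y)
    (hne : ∀ a, f a ≠ {v}) : IsModelIn K G S (fun a => f a \ {v}) := by
  have hmem : ∀ a, ∀ x ∈ f a, x ≠ v → x ∈ S := fun a x hx hxv =>
    (hf.sub a hx).resolve_left hxv
  have hnon : ∀ a, (f a \ {v}).Nonempty := by
    intro a
    by_contra hemp
    rw [Set.not_nonempty_iff_eq_empty, Set.sdiff_eq_empty] at hemp
    exact hne a (((hf.conn a).1.subset_singleton_iff).1 hemp)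
  have hnb : ∀ a, v ∈ f a → ∃ x ∈ f a \ {v}, G.Adj v x := by
    intro a hva
    obtain ⟨u, rfl, x, hx, hux⟩ := (hf.conn a).2 {v} (by simpa using hva) ⟨v, rfl⟩ (hnon a)
    exact ⟨x, hx, hux⟩
  refine ⟨fun a x hx => hmem a x hx.1 hx.2, fun a => (hf.conn a).diff_singleton (hnon a) ?_,
    fun a b hab => (hf.disj a b hab).mono Set.sdiff_subset Set.sdiff_subset, ?_⟩
  · intro x hx y hy hvx hvy
    exact hcl x (hmem a x hx hvx.ne') y (hmem a y hy hvy.ne') hvx hvy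
  · intro a b hab
    have hdis := hf.disj a b hab.ne
    obtain ⟨u, hu, w, hw, huw⟩ := hf.adj a b hab
    by_cases huv : u = v
    · subst huv
      obtain ⟨x, hx, hux⟩ := hnb a hu
      exact ⟨x, hx, w, ⟨hw, huw.ne'⟩, hcl x (hmem a x hx.1 hx.2) w (hmem b w hw huw.ne') hux huw
        (fun h => Set.disjoint_left.1 hdis hx.1 (h ▸ hw))⟩
    · by_cases hwv : w = v
      · subst hwv
        obtain ⟨x, hx, hwx⟩ := hnb b hw
        exact ⟨u, ⟨hu, huv⟩, x, hx, hcl u (hmem a u hu huv) x (hmem b x hx.1 hx.2) huw.symm hwx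
          (fun h => Set.disjoint_left.1 hdis hu (h ▸ hx.1))⟩
      · exact ⟨u, ⟨hu, huv⟩, w, ⟨hw, hwv⟩, huw⟩

/-- If `{v}` is the branch set of `a`, then the branch sets of the neighbours of `a` all meet the
neighbourhood of `v`. -/
lemma IsModelIn.meet_of_singleton {K : SimpleGraph α} {G : SimpleGraph V} {S : Set V} {v : V}
    {N : Set V} {f : α → Set V} (hf : IsModelIn K G (insert v S) f)
    (hN : ∀ x ∈ S, G.Adj v x → x ∈ N) {a b : α} (ha : f a = {v}) (hab : K.Adj a b) :
    ∃ u ∈ f b, u ∈ N := by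
  obtain ⟨u, hu, w, hw, huw⟩ := hf.adj a b hab
  rw [ha] at hu
  obtain rfl : u = v := hu
  exact ⟨w, hw, hN w ((hf.sub b hw).resolve_left huw.ne') huw⟩

lemma IsModelIn.card_le [Fintype α] {K : SimpleGraph α} {G : SimpleGraph V} {S : Finset V}
    {f : α → Set V} (hf : IsModelIn K G S f) : Fintype.card α ≤ S.card :=
  card_le_of_disjoint_meet hf.disj fun a => by
    obtain ⟨x, hx⟩ := (hf.conn a).1
    exact ⟨x, hx, hf.sub a hx⟩

lemma ConnIn.image {H : SimpleGraph W} {G : SimpleGraph V} (φ : W → V)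
    (h : ∀ a b, H.Adj a b → G.Adj (φ a) (φ b)) {S : Set W} (hS : ConnIn H S) :
    ConnIn G (φ '' S) := by
  refine ⟨hS.1.image φ, ?_⟩
  rintro A hA ⟨a, ha⟩ ⟨b, hb, hbA⟩
  obtain ⟨a, haS, rfl⟩ := hA ha
  obtain ⟨b, hbS, rfl⟩ := hb
  obtain ⟨u, hu, v, hv, huv⟩ := hS.2 {x ∈ S | φ x ∈ A} (fun x hx => hx.1) ⟨a, haS, ha⟩
    ⟨b, hbS, fun hx => hbA hx.2⟩
  exact ⟨φ u, hu.2, φ v, ⟨⟨v, hv.1, rfl⟩, fun hx => hv.2 ⟨hv.1, hx⟩⟩, h u v huv⟩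

lemma IsModelIn.image {K : SimpleGraph α} {H : SimpleGraph W} {G : SimpleGraph V} {φ : W → V}
    (hφ : Function.Injective φ) (h : ∀ a b, H.Adj a b → G.Adj (φ a) (φ b)) {S : Set W}
    {f : α → Set W} (hf : IsModelIn K H S f) : IsModelIn K G (φ '' S) (fun a => φ '' f a) := by
  refine ⟨fun a => Set.image_mono (hf.sub a), fun a => (hf.conn a).image φ h,
    fun a b hab => Set.disjoint_image_of_injective hφ (hf.disj a b hab), ?_⟩
  intro a b hab
  obtain ⟨u, hu, v, hv, huv⟩ := hf.adj a b hab
  exact ⟨φ u, ⟨u, hu, rfl⟩, φ v, ⟨v, hv, rfl⟩, h u v huv⟩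

/-- The subgraph induced on `S` has no `K₅` and no `K₃,₃` minor. -/
def PlanarIn (G : SimpleGraph V) (S : Set V) : Prop :=
  (∀ f, ¬ IsModelIn (completeGraph (Fin 5)) G S f) ∧
    ∀ f, ¬ IsModelIn (completeBipartiteGraph (Fin 3) (Fin 3)) G S f

/-- `S` contains no `K₂,₃` minor whose three vertices of degree two are rooted in `N`. For a
triangle `N` this says, combinatorially, that `N` bounds a face: a new vertex joined to `N` creates
no `K₃,₃` minor. -/
def FaceLike (G : SimpleGraph V) (S N : Set V) : Prop :=
  ∀ f, IsModelIn (completeBipartiteGraph (Fin 2) (Fin 3)) G S f →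
    ¬ ∀ i, ∃ u ∈ f (Sum.inr i), u ∈ N

lemma planarIn_of_card_lt {G : SimpleGraph V} {S : Finset V} (h : S.card < 5) :
    PlanarIn G S := by
  constructor <;> intro f hf <;> have := hf.card_le <;> simp at this <;> omega

lemma faceLike_of_card_lt {G : SimpleGraph V} {S : Finset V} {N : Set V} (h : S.card < 5) :
    FaceLike G S N := by
  intro f hf
  have := hf.card_le
  simp at this
  omega

/-- Adding a vertex joined to a clique of size at most two, or to a clique of size three that is
face-like, preserves planarity. -/
lemma PlanarIn.insert {G : SimpleGraph V} {S : Set V} {v : V} {N : Finset V}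
    (hP : PlanarIn G S) (hN : ∀ x ∈ S, G.Adj v x → x ∈ N)
    (hcl : ∀ x ∈ S, ∀ y ∈ S, G.Adj v x → G.Adj v y → x ≠ y → G.Adj x y)
    (hcard : N.card ≤ 2 ∨ N.card ≤ 3 ∧ FaceLike G S N) : PlanarIn G (insert v S) := by
  have h3 : N.card ≤ 3 := by omega
  constructor
  · intro f hf
    by_cases hne : ∀ a, f a ≠ {v}
    · exact hP.1 _ (hf.diff_singleton hcl hne)
    · push Not at hne
      obtain ⟨a, ha⟩ := hne
      have := card_le_of_disjoint_meet (ι := {b : Fin 5 // b ≠ a}) (f := fun b => f b.1) (N := N)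
        (fun b b' hbb => hf.disj _ _ (fun h => hbb (Subtype.ext h)))
        (fun b => hf.meet_of_singleton (N := N) hN ha (by simpa using b.2.symm))
      simp at this
      omega
  · intro f hf
    by_cases hne : ∀ a, f a ≠ {v}
    · exact hP.2 _ (hf.diff_singleton hcl hne)
    push Not at hne
    -- the two sides of `K₃,₃` are interchangeable, so let the singleton be on the left
    obtain ⟨f, hf, i, hi⟩ : ∃ f, IsModelIn (completeBipartiteGraph (Fin 3) (Fin 3)) G
        (Insert.insert v S) f ∧ ∃ i, f (Sum.inl i) = {v} := by
      obtain ⟨i | i, ha⟩ := hne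
      · exact ⟨f, hf, i, ha⟩
      · refine ⟨fun a => f a.swap, ⟨fun a => hf.sub _, fun a => hf.conn _,
          fun a b hab => hf.disj _ _ (fun h => hab (Sum.swap_leftInverse.injective h)),
          fun a b hab => hf.adj _ _ ?_⟩, i, ha⟩
        rcases a with a | a <;> rcases b with b | b <;> simp_all
    have hmeet : ∀ j, ∃ u ∈ f (Sum.inr j), u ∈ (N : Set V) := fun j =>
      hf.meet_of_singleton hN hi (by simp)
    rcases hcard with h2 | ⟨-, hface⟩
    · have := card_le_of_disjoint_meet (f := fun j => f (Sum.inr j)) (N := N)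
        (fun b b' hbb => hf.disj _ _ (fun h => hbb (Sum.inr_injective h))) hmeet
      simp at this
      omega
    · let e : Fin 2 ⊕ Fin 3 → Fin 3 ⊕ Fin 3 := Sum.map i.succAbove id
      have he : Function.Injective e :=
        Sum.map_injective.2 ⟨Fin.succAbove_right_injective, Function.injective_id⟩
      have hnv : ∀ a, v ∉ f (e a) := by
        intro a hva
        have hne : Sum.inl i ≠ e a := by
          rcases a with a | a
          · exact fun h => Fin.succAbove_ne i a (Sum.inl_injective h).symm
          · simp [e]
        exact Set.disjoint_left.1 (hf.disj _ _ hne) (hi ▸ rfl) hva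
      refine hface (fun a => f (e a)) ⟨fun a x hx => (hf.sub _ hx).resolve_left ?_,
        fun a => hf.conn _, fun a b hab => hf.disj _ _ (he.ne hab),
        fun a b hab => hf.adj _ _ ?_⟩ hmeet
      · rintro rfl
        exact hnv a hx
      · rcases a with a | a <;> rcases b with b | b <;> simp_all [e]

/-- Stacking a vertex `r` onto a face-like triangle `N` makes the new triangles through `r`
face-like. -/
lemma FaceLike.insert [DecidableEq V] {G : SimpleGraph V} {S : Set V} {r d : V} {N : Finset V}
    (hF : FaceLike G S N) (hN : ∀ x ∈ S, G.Adj r x → x ∈ N) (h3 : N.card ≤ 3) (hd : d ∈ N)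
    (hcl : ∀ x ∈ S, ∀ y ∈ S, G.Adj r x → G.Adj r y → x ≠ y → G.Adj x y) :
    FaceLike G (insert r S) (insert r (N.erase d) : Finset V) := by
  intro f hf hroot
  have hr : ∃ i, r ∈ f (Sum.inr i) := by
    by_contra! hcon
    have := card_le_of_disjoint_meet (f := fun j => f (Sum.inr j)) (N := N.erase d)
      (fun b b' hbb => hf.disj _ _ (fun h => hbb (Sum.inr_injective h))) (fun i => by
        obtain ⟨u, hu, huN⟩ := hroot i
        refine ⟨u, hu, ?_⟩
        rw [Finset.coe_insert] at huN
        rcases huN with rfl | h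
        · exact absurd hu (hcon i)
        · exact h)
    rw [Finset.card_erase_of_mem hd] at this
    simp at this
    omega
  obtain ⟨i, hi⟩ := hr
  have hother : ∀ a, a ≠ Sum.inr i → r ∉ f a := fun a ha hra =>
    Set.disjoint_left.1 (hf.disj _ _ ha) hra hi
  have hmeet : ∀ j, j ≠ i → ∃ u ∈ f (Sum.inr j), u ∈ N := by
    intro j hj
    obtain ⟨u, hu, huN⟩ := hroot j
    refine ⟨u, hu, ?_⟩
    rw [Finset.coe_insert] at huN
    rcases huN with rfl | h
    · exact absurd hu (hother _ (fun h => hj (Sum.inr_injective h)))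
    · exact Finset.mem_of_mem_erase h
  by_cases hsing : f (Sum.inr i) = {r}
  · have := card_le_of_disjoint_meet (ι := {b : Fin 2 ⊕ Fin 3 // b ≠ Sum.inr i})
      (f := fun b => f b.1) (N := N)
      (fun b b' hbb => hf.disj _ _ (fun h => hbb (Subtype.ext h))) (by
        rintro ⟨b | b, hb⟩
        · exact hf.meet_of_singleton (N := N) (b := Sum.inl b) hN hsing (by simp)
        · exact hmeet b (fun h => hb (h ▸ rfl)))
    simp at this
    omega
  · have hne : ∀ a, f a ≠ {r} := by
      intro a ha
      by_cases h : a = Sum.inr i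
      · exact hsing (h ▸ ha)
      · exact hother a h (ha ▸ rfl)
    have hf' := hf.diff_singleton hcl hne
    refine hF _ hf' fun j => ?_
    by_cases hj : j = i
    · subst hj
      obtain ⟨u, rfl, x, hx, hux⟩ := (hf.conn (Sum.inr j)).2 {r} (by simpa using hi) ⟨r, rfl⟩
        (hf'.conn (Sum.inr j)).1
      exact ⟨x, hx, hN x (hf'.sub _ hx) hux⟩
    · obtain ⟨u, hu, huN⟩ := hmeet j hj
      refine ⟨u, ⟨hu, ?_⟩, huN⟩
      rintro rfl
      exact hother _ (fun h => hj (Sum.inr_injective h)) hu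

end StackedModels

/-! ### The canonical graphs -/

section Canonical

/-- The current triangle of the stacking process after `k` stacked vertices. Vertex `k + 3` is
stacked on triangle `k`, and replaces its `c k`-th corner to form triangle `k + 1`. -/
def tri (c : ℕ → Fin 3) : ℕ → Fin 3 → ℕ
  | 0 => fun x => x
  | k + 1 => Function.update (tri c k) (c k) (k + 3)

lemma tri_lt (c : ℕ → Fin 3) (k : ℕ) (x : Fin 3) : tri c k x < k + 3 := by
  induction k with
  | zero => simp [tri]
  | succ k ih =>
    rw [tri, Function.update_apply]
    split_ifs <;> omega

lemma tri_injective (c : ℕ → Fin 3) (k : ℕ) : Function.Injective (tri c k) := by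
  induction k with
  | zero => exact Fin.val_injective
  | succ k ih =>
    intro x y hxy
    simp only [tri, Function.update_apply] at hxy
    have hx := tri_lt c k x
    have hy := tri_lt c k y
    split_ifs at hxy with h1 h2 h2
    · rw [h1, h2]
    · omega
    · omega
    · exact ih hxy

/-- The vertex set of the triangle `tri c k`. -/
def triSet (c : ℕ → Fin 3) (k : ℕ) : Finset ℕ := Finset.univ.image (tri c k)

lemma mem_triSet {c : ℕ → Fin 3} {k y : ℕ} : y ∈ triSet c k ↔ ∃ x, tri c k x = y := by
  simp [triSet]

lemma card_triSet (c : ℕ → Fin 3) (k : ℕ) : (triSet c k).card = 3 := by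
  rw [triSet, Finset.card_image_of_injective _ (tri_injective c k)]
  simp

lemma triSet_succ (c : ℕ → Fin 3) (k : ℕ) :
    triSet c (k + 1) = insert (k + 3) ((triSet c k).erase (tri c k (c k))) := by
  ext y
  simp only [mem_triSet, Finset.mem_insert, Finset.mem_erase, tri, Function.update_apply]
  constructor
  · rintro ⟨x, rfl⟩
    split_ifs with h
    · exact Or.inl rfl
    · exact Or.inr ⟨fun h' => h (tri_injective c k h'), x, rfl⟩
  · rintro (rfl | ⟨hy, x, rfl⟩)
    · exact ⟨c k, by simp⟩
    · exact ⟨x, by rw [if_neg]; rintro rfl; exact hy rfl⟩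

lemma add_two_mem_triSet (c : ℕ → Fin 3) (k : ℕ) : k + 2 ∈ triSet c k := by
  cases k with
  | zero => exact mem_triSet.2 ⟨2, rfl⟩
  | succ k => rw [triSet_succ]; exact Finset.mem_insert_self _ _

/-- The earlier neighbours of vertex `i` in the canonical graph: a triangle on `0, 1, 2`, stacked
vertices `3, …, D - 1`, vertices `D, …, E - 1` joined to the edge `{D - 2, D - 1}`, and then
layers of `s` vertices each. The vertices of the first layer are attached to `E - 1`, and vertex `i`
of a later layer to the `p i`-th vertex of the preceding layer. -/
def backNbrs (D E s : ℕ) (c : ℕ → Fin 3) (p : ℕ → ℕ) (i : ℕ) : Finset ℕ :=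
  if i < 3 then Finset.range i
  else if i < D then triSet c (i - 3)
  else if i < E then {D - 1, D - 2}
  else if i < E + s then {E - 1}
  else {E + ((i - E) / s - 1) * s + p i}

/-- The level of a vertex of the canonical graph: the initial triangle has level `0`, the vertices
`3, …, E - 1` have distinct consecutive levels, and each layer is one level. -/
def level (E s : ℕ) (i : ℕ) : ℕ := if i < E then i - 2 else E - 2 + (i - E) / s

variable {D E s : ℕ} {c : ℕ → Fin 3} {p : ℕ → ℕ}

/-- The constraints on the parameters of the canonical graph. -/
structure Params (D E s : ℕ) (p : ℕ → ℕ) : Prop where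
  hD : 3 ≤ D
  hDE : D ≤ E
  hED : E ≤ D + 1
  hs : 0 < s
  hp : ∀ i, p i < s

lemma layer_lt (hs : 0 < s) {i q : ℕ} (hi : E + s ≤ i) (hq : q < s) :
    E + ((i - E) / s - 1) * s + q < i := by
  obtain ⟨j, rfl⟩ : ∃ j, i = E + s + j := ⟨i - (E + s), by omega⟩
  have h1 : E + s + j - E = j + s := by omega
  rw [h1, Nat.add_div_right _ hs, Nat.add_sub_cancel]
  have := Nat.div_mul_le_self j s
  omega

lemma lt_of_mem_backNbrs (h : Params D E s p) {i x : ℕ} (hx : x ∈ backNbrs D E s c p i) :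
    x < i := by
  have := h.hD
  have := h.hDE
  unfold backNbrs at hx
  split_ifs at hx with h1 h2 h3 h4
  · simpa using hx
  · obtain ⟨y, rfl⟩ := mem_triSet.1 hx
    have := tri_lt c (i - 3) y
    omega
  · simp at hx
    omega
  · simp at hx
    omega
  · rw [Finset.mem_singleton] at hx
    rw [hx]
    exact layer_lt h.hs (by omega) (h.hp i)

/-- The canonical graph, on all natural numbers. -/
def canon (D E s : ℕ) (c : ℕ → Fin 3) (p : ℕ → ℕ) : SimpleGraph ℕ :=
  SimpleGraph.fromRel fun a b => a ∈ backNbrs D E s c p b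

lemma canon_adj (h : Params D E s p) {a b : ℕ} :
    (canon D E s c p).Adj a b ↔ a ∈ backNbrs D E s c p b ∨ b ∈ backNbrs D E s c p a := by
  rw [canon, SimpleGraph.fromRel_adj]
  refine ⟨fun hab => hab.2, fun hab => ⟨?_, hab⟩⟩
  rintro rfl
  rcases hab with hab | hab <;> exact (lt_of_mem_backNbrs h hab).false

lemma canon_adj_of_lt (h : Params D E s p) {a b : ℕ} (hab : a < b) :
    (canon D E s c p).Adj a b ↔ a ∈ backNbrs D E s c p b := by
  rw [canon_adj h, or_iff_left]
  intro hba
  exact absurd (lt_of_mem_backNbrs h hba) (by omega)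

lemma backNbrs_stack {k : ℕ} (hk : k + 3 < D) : backNbrs D E s c p (k + 3) = triSet c k := by
  rw [backNbrs, if_neg (by omega), if_pos hk, Nat.add_sub_cancel]

lemma canon_triSet_clique (h : Params D E s p) {k : ℕ} (hk : k + 3 ≤ D) :
    ∀ x ∈ triSet c k, ∀ y ∈ triSet c k, x ≠ y → (canon D E s c p).Adj x y := by
  induction k with
  | zero =>
    have key : ∀ x y : ℕ, y < 3 → x < y → (canon D E s c p).Adj x y := by
      intro x y hy hxy
      rw [canon_adj_of_lt h hxy, backNbrs, if_pos hy]
      simpa using hxy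
    intro x hx y hy hxy
    obtain ⟨a, rfl⟩ := mem_triSet.1 hx
    obtain ⟨b, rfl⟩ := mem_triSet.1 hy
    have ha := tri_lt c 0 a
    have hb := tri_lt c 0 b
    rcases Nat.lt_or_gt_of_ne hxy with hlt | hlt
    · exact key _ _ hb hlt
    · exact (key _ _ ha hlt).symm
  | succ k ih =>
    have ih := ih (by omega)
    have key : ∀ x ∈ triSet c k, (canon D E s c p).Adj x (k + 3) := by
      intro x hx
      rw [canon_adj h, backNbrs_stack (by omega)]
      exact Or.inl hx
    intro x hx y hy hxy
    rw [triSet_succ, Finset.mem_insert, Finset.mem_erase] at hx hy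
    rcases hx with rfl | ⟨-, hx⟩ <;> rcases hy with rfl | ⟨-, hy⟩
    · exact absurd rfl hxy
    · exact (key y hy).symm
    · exact key x hx
    · exact ih x hx y hy hxy

lemma backNbrs_clique (h : Params D E s p) (i : ℕ) (hi : 3 ≤ i) :
    ∀ x ∈ backNbrs D E s c p i, ∀ y ∈ backNbrs D E s c p i, x ≠ y →
      (canon D E s c p).Adj x y := by
  have hD := h.hD
  have hedge : (canon D E s c p).Adj (D - 2) (D - 1) := by
    rw [canon_adj_of_lt h (by omega)]
    by_cases hD3 : D = 3
    · subst hD3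
      simp [backNbrs]
    · obtain ⟨k, rfl⟩ : ∃ k, D = k + 4 := ⟨D - 4, by omega⟩
      rw [show k + 4 - 1 = k + 3 by omega, backNbrs_stack (by omega)]
      exact add_two_mem_triSet c k
  intro x hx y hy hxy
  unfold backNbrs at hx hy
  split_ifs at hx hy with h1 h2 h3 h4
  · omega
  · exact canon_triSet_clique h (by omega) x hx y hy hxy
  · simp only [Finset.mem_insert, Finset.mem_singleton] at hx hy
    rcases hx with rfl | rfl <;> rcases hy with rfl | rfl
    · exact absurd rfl hxy
    · exact hedge.symm
    · exact hedge
    · exact absurd rfl hxy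
  · simp only [Finset.mem_singleton] at hx hy
    exact absurd (hx.trans hy.symm) hxy
  · simp only [Finset.mem_singleton] at hx hy
    exact absurd (hx.trans hy.symm) hxy

lemma faceLike_triSet (h : Params D E s p) (k : ℕ) (hk : k + 3 ≤ D) :
    FaceLike (canon D E s c p) (Finset.range (k + 3) : Finset ℕ) (triSet c k : Finset ℕ) := by
  induction k with
  | zero => exact faceLike_of_card_lt (by simp)
  | succ k ih =>
    have hN : ∀ x ∈ ((Finset.range (k + 3) : Finset ℕ) : Set ℕ),
        (canon D E s c p).Adj (k + 3) x → x ∈ triSet c k := by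
      intro x hx hadj
      rwa [SimpleGraph.adj_comm, canon_adj_of_lt h (by simpa using hx),
        backNbrs_stack (by omega)] at hadj
    have := (ih (by omega)).insert (r := k + 3) (d := tri c k (c k)) hN (card_triSet c k).le
      (mem_triSet.2 ⟨_, rfl⟩) (fun x hx y hy hx' hy' =>
        canon_triSet_clique h (by omega) x (hN x hx hx') y (hN y hy hy'))
    rwa [← triSet_succ, ← Finset.coe_insert, ← Finset.range_add_one] at this

lemma card_backNbrs (h : Params D E s p) {i : ℕ} (hi : 3 ≤ i) :
    (backNbrs D E s c p i).card = if i < D then 3 else if i < E then 2 else 1 := by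
  have hD := h.hD
  have hDE := h.hDE
  unfold backNbrs
  rw [if_neg (by omega)]
  split_ifs with h1 h2 h3
  · exact card_triSet _ _
  · rw [Finset.card_pair (by omega)]
  · simp
  · simp

lemma planarIn_canon (h : Params D E s p) (k : ℕ) :
    PlanarIn (canon D E s c p) (Finset.range k : Finset ℕ) := by
  induction k with
  | zero => exact planarIn_of_card_lt (by simp)
  | succ k ih =>
    by_cases hk : k < 3
    · exact planarIn_of_card_lt (by simp; omega)
    have hN : ∀ x ∈ ((Finset.range k : Finset ℕ) : Set ℕ),
        (canon D E s c p).Adj k x → x ∈ backNbrs D E s c p k := by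
      intro x hx hadj
      rwa [SimpleGraph.adj_comm, canon_adj_of_lt h (by simpa using hx)] at hadj
    have := ih.insert (v := k) hN (fun x hx y hy hx' hy' =>
        backNbrs_clique h k (by omega) x (hN x hx hx') y (hN y hy hy')) (by
      have hc := card_backNbrs (c := c) h (i := k) (by omega)
      by_cases hkD : k < D
      · obtain ⟨j, rfl⟩ : ∃ j, k = j + 3 := ⟨k - 3, by omega⟩
        right
        rw [backNbrs_stack hkD]
        exact ⟨(card_triSet c j).le, faceLike_triSet h j (by omega)⟩
      · left
        rw [hc, if_neg hkD]
        split_ifs <;> omega)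
    rwa [← Finset.coe_insert, ← Finset.range_add_one] at this

lemma level_of_lt {i : ℕ} (hi : i < E) : level E s i = i - 2 := if_pos hi

lemma level_of_le {i : ℕ} (hi : E ≤ i) : level E s i = E - 2 + (i - E) / s :=
  if_neg (by omega)

lemma le_level {i : ℕ} (hi : E ≤ i) : E - 2 ≤ level E s i := by
  rw [level_of_le hi]
  exact Nat.le_add_right _ _

lemma level_layer (hs : 0 < s) {i q : ℕ} (hi : E + s ≤ i) (hq : q < s) :
    level E s (E + ((i - E) / s - 1) * s + q) + 1 = level E s i := by
  have h1 : 1 ≤ (i - E) / s := (Nat.one_le_div_iff hs).2 (by omega)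
  rw [level_of_le (by omega), level_of_le (by omega), Nat.add_assoc E, Nat.add_sub_cancel_left,
    Nat.add_comm _ q, Nat.add_mul_div_right _ _ hs, Nat.div_eq_of_lt hq]
  omega

lemma level_first (hE : 3 ≤ E) {i : ℕ} (hi : E ≤ i) (hi' : i < E + s) :
    level E s (E - 1) + 1 = level E s i := by
  rw [level_of_le hi, level_of_lt (by omega), Nat.div_eq_of_lt (by omega)]
  omega

lemma level_lt_of_mem (h : Params D E s p) {i x : ℕ} (hi : 3 ≤ i)
    (hx : x ∈ backNbrs D E s c p i) : level E s x < level E s i := by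
  have hD := h.hD
  have hDE := h.hDE
  have hlt := lt_of_mem_backNbrs h hx
  by_cases hiE : i < E
  · rw [level, level, if_pos hiE, if_pos (by omega)]
    omega
  · unfold backNbrs at hx
    rw [if_neg (by omega), if_neg (by omega), if_neg hiE] at hx
    split_ifs at hx with h4
    · rw [Finset.mem_singleton] at hx
      rw [hx, ← level_first (by omega) (by omega) h4]
      omega
    · rw [Finset.mem_singleton] at hx
      rw [hx]
      have := level_layer h.hs (by omega : E + s ≤ i) (h.hp i)
      omega

lemma exists_level_pred (h : Params D E s p) {i : ℕ} (hi : 3 ≤ i) :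
    ∃ x ∈ backNbrs D E s c p i, level E s x + 1 = level E s i := by
  have hD := h.hD
  have hDE := h.hDE
  have hED := h.hED
  by_cases hiE : i < E
  · refine ⟨i - 1, ?_, by rw [level, level, if_pos hiE, if_pos (by omega)]; omega⟩
    by_cases hiD : i < D
    · obtain ⟨k, rfl⟩ : ∃ k, i = k + 3 := ⟨i - 3, by omega⟩
      rw [backNbrs_stack hiD]
      exact add_two_mem_triSet c k
    · obtain rfl : i = D := by omega
      rw [backNbrs, if_neg (by omega), if_neg hiD, if_pos hiE]
      simp
  · by_cases his : i < E + s
    · refine ⟨E - 1, ?_, level_first (by omega) (by omega) his⟩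
      simp [backNbrs, show ¬ i < 3 by omega, show ¬ i < D by omega, hiE, his]
    · refine ⟨_, ?_, level_layer h.hs (by omega) (h.hp i)⟩
      simp [backNbrs, show ¬ i < 3 by omega, show ¬ i < D by omega, hiE, his]

lemma level_eq_zero_iff (hE : 3 ≤ E) {i : ℕ} : level E s i = 0 ↔ i < 3 := by
  by_cases hi : i < E
  · rw [level_of_lt hi]
    omega
  · have := le_level (s := s) (by omega : E ≤ i)
    omega

/-- The number of earlier neighbours does not increase with the level. -/
lemma card_backNbrs_le (h : Params D E s p) {p' : ℕ → ℕ} {c' : ℕ → Fin 3} (h' : Params D E s p')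
    {i j : ℕ} (hi : 3 ≤ i) (hij : level E s i ≤ level E s j) :
    (backNbrs D E s c p j).card ≤ (backNbrs D E s c' p' i).card := by
  have hD := h.hD
  have hDE := h.hDE
  have hj : 3 ≤ j := by
    by_contra hj
    have h1 := (level_eq_zero_iff (s := s) (by omega : 3 ≤ E)).2 (by omega : j < 3)
    have h2 := (level_eq_zero_iff (s := s) (i := i) (by omega : 3 ≤ E)).1 (by omega)
    omega
  have hiD : j < D → i < D := by
    intro hjD
    rw [level_of_lt (by omega : j < E)] at hij
    by_cases hi' : i < E
    · rw [level_of_lt hi'] at hij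
      omega
    · have := le_level (s := s) (by omega : E ≤ i)
      omega
  have hiE : j < E → i < E := by
    intro hjE
    rw [level_of_lt hjE] at hij
    by_contra hi'
    have := le_level (s := s) (by omega : E ≤ i)
    omega
  rw [card_backNbrs h hj, card_backNbrs h' hi]
  split_ifs <;> omega

end Canonical

/-! ### Renumbering, and reading off the levels -/

section Renumber

variable {D E s n : ℕ} {c c' : ℕ → Fin 3} {p p' : ℕ → ℕ}

/-- The canonical graph on the first `n` vertices, with vertex `v` playing the part of `σ v`. -/
def renumber (D E s : ℕ) (c : ℕ → Fin 3) (p : ℕ → ℕ) (σ : Equiv.Perm (Fin n)) :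
    SimpleGraph (Fin n) :=
  (canon D E s c p).comap fun v => (σ v : ℕ)

lemma val_perm_injective (σ : Equiv.Perm (Fin n)) : Function.Injective fun v => (σ v : ℕ) :=
  Fin.val_injective.comp σ.injective

lemma isPlanar_renumber (h : Params D E s p) (σ : Equiv.Perm (Fin n)) :
    IsPlanar (renumber D E s c p σ) := by
  have key : ∀ {α : Type} (K : SimpleGraph α), IsMinor K (renumber D E s c p σ) →
      ∃ f, IsModelIn K (canon D E s c p) (Finset.range n : Finset ℕ) f := by
    intro α K hK
    obtain ⟨f, hf⟩ := (isMinor_iff _ _).1 hK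
    have hf' := hf.image (G := canon D E s c p) (val_perm_injective σ) (fun a b hab => hab)
    refine ⟨_, fun a x hx => ?_, hf'.conn, hf'.disj, hf'.adj⟩
    obtain ⟨v, -, rfl⟩ := hx
    simp
  constructor
  · intro hK
    obtain ⟨f, hf⟩ := key _ hK
    exact (planarIn_canon h n).1 f hf
  · intro hK
    obtain ⟨f, hf⟩ := key _ hK
    exact (planarIn_canon h n).2 f hf

lemma edgeCount_renumber (h : Params D E s p) (σ : Equiv.Perm (Fin n)) :
    edgeCount (renumber D E s c p σ) = ∑ i ∈ Finset.range n, (backNbrs D E s c p i).card := by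
  rw [edgeCount, ← Set.ncard_image_of_injective _ (Sym2.map.injective (val_perm_injective σ)),
    ← Finset.card_sigma, ← Set.ncard_coe_finset]
  have hinj : Set.InjOn (fun x : (_ : ℕ) × ℕ => s(x.1, x.2))
      ((Finset.range n).sigma (backNbrs D E s c p) : Finset _) := by
    rintro ⟨i, x⟩ hx ⟨j, y⟩ hy hxy
    have h1 := lt_of_mem_backNbrs h (Finset.mem_sigma.1 hx).2
    have h2 := lt_of_mem_backNbrs h (Finset.mem_sigma.1 hy).2
    simp only [Sym2.eq_iff] at hxy
    rcases hxy with ⟨rfl, rfl⟩ | ⟨rfl, rfl⟩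
    · rfl
    · dsimp at h1 h2
      omega
  rw [← hinj.ncard_image]
  congr 1
  ext e
  simp only [Set.mem_image, Finset.mem_coe, Finset.mem_sigma, Finset.mem_range]
  constructor
  · rintro ⟨e, he, rfl⟩
    induction e with
    | h a b =>
      have hab : (canon D E s c p).Adj (σ a) (σ b) := he
      rcases (canon_adj h).1 hab with hab | hab
      · exact ⟨⟨σ b, σ a⟩, ⟨(σ b).2, hab⟩, Sym2.eq_swap⟩
      · exact ⟨⟨σ a, σ b⟩, ⟨(σ a).2, hab⟩, rfl⟩
  · rintro ⟨⟨i, x⟩, ⟨hi, hx⟩, rfl⟩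
    have hlt := lt_of_mem_backNbrs h hx
    dsimp at hi hx hlt
    refine ⟨s(σ.symm ⟨i, hi⟩, σ.symm ⟨x, by omega⟩), ?_, by simp⟩
    change (canon D E s c p).Adj _ _
    simpa using (canon_adj h).2 (Or.inr hx)

lemma sum_card_backNbrs (h : Params D E s p) (hn : E ≤ n) :
    ∑ i ∈ Finset.range n, (backNbrs D E s c p i).card + 6 = 3 * D + 2 * (E - D) + (n - E) := by
  have hD := h.hD
  have hDE := h.hDE
  have h1 : ∀ k, 3 ≤ k → k ≤ D →
      ∑ i ∈ Finset.range k, (backNbrs D E s c p i).card + 6 = 3 * k := by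
    intro k hk
    induction k, hk using Nat.le_induction with
    | base => intro _; simp [Finset.sum_range_succ, backNbrs]
    | succ k hk ih =>
      intro hkD
      have := ih (by omega)
      rw [Finset.sum_range_succ, card_backNbrs h hk, if_pos (by omega)]
      omega
  have h2 : ∀ k, D ≤ k → k ≤ E →
      ∑ i ∈ Finset.range k, (backNbrs D E s c p i).card + 6 = 3 * D + 2 * (k - D) := by
    intro k hk
    induction k, hk using Nat.le_induction with
    | base => intro _; rw [h1 D hD le_rfl]; omega
    | succ k hk ih =>
      intro hkD
      have := ih (by omega)
      rw [Finset.sum_range_succ, card_backNbrs h (by omega), if_neg (by omega), if_pos (by omega)]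
      omega
  induction n, hn using Nat.le_induction with
  | base => rw [h2 E hDE le_rfl]; omega
  | succ k hk ih =>
    rw [Finset.sum_range_succ, card_backNbrs h (by omega), if_neg (by omega), if_neg (by omega)]
    omega

lemma renumber_mem_planarSet (h : Params D E s p) (hn : E ≤ n) {m : ℕ}
    (hm : m + 6 = 3 * D + 2 * (E - D) + (n - E)) (σ : Equiv.Perm (Fin n)) :
    renumber D E s c p σ ∈ planarSet n m := by
  refine ⟨isPlanar_renumber h σ, ?_⟩
  have := sum_card_backNbrs (c := c) h hn
  rw [edgeCount_renumber h]
  omega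

/-- The neighbours of `v` on lower levels are exactly its earlier neighbours. -/
lemma image_lower (h : Params D E s p) (σ : Equiv.Perm (Fin n)) {v : Fin n} (hv : 3 ≤ (σ v : ℕ)) :
    {w | (renumber D E s c p σ).Adj v w ∧ level E s (σ w) < level E s (σ v)} =
      (fun w => (σ w : ℕ)) ⁻¹' (backNbrs D E s c p (σ v) : Finset ℕ) := by
  ext w
  simp only [Set.mem_ofPred_eq, Set.mem_preimage, Finset.mem_coe]
  constructor
  · rintro ⟨hadj, hlev⟩
    have hadj' : (canon D E s c p).Adj (σ v) (σ w) := hadj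
    rcases (canon_adj h).1 hadj' with hvw | hvw
    · by_cases hw : 3 ≤ (σ w : ℕ)
      · exact absurd (level_lt_of_mem h hw hvw) (by omega)
      · exact absurd (lt_of_mem_backNbrs h hvw) (by omega)
    · exact hvw
  · intro hw
    exact ⟨(canon_adj h).2 (Or.inr hw), level_lt_of_mem h hv hw⟩

lemma ncard_lower (h : Params D E s p) (σ : Equiv.Perm (Fin n)) {v : Fin n} (hv : 3 ≤ (σ v : ℕ)) :
    {w | (renumber D E s c p σ).Adj v w ∧ level E s (σ w) < level E s (σ v)}.ncard =
      (backNbrs D E s c p (σ v)).card := by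
  rw [image_lower h σ hv, ← Set.ncard_coe_finset,
    Set.ncard_preimage_of_injective_subset_range (val_perm_injective σ)]
  intro x hx
  have hlt : x < n := (lt_of_mem_backNbrs h hx).trans (σ v).2
  exact ⟨σ.symm ⟨x, hlt⟩, by simp⟩

/-- One direction of the reconstruction of the levels: if the levels below `t` are the same for two
labellings of one graph, a vertex on level `t` of the first cannot be on a higher level of the
second, where it would have too many neighbours below level `t + 1`. -/
lemma level_le_of_renumber_eq (h : Params D E s p) (h' : Params D E s p') {σ σ' : Equiv.Perm (Fin n)}
    (heq : renumber D E s c p σ = renumber D E s c' p' σ') {v : Fin n} (hv : 3 ≤ (σ v : ℕ))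
    (hlow : ∀ w, level E s (σ w) < level E s (σ v) ↔ level E s (σ' w) < level E s (σ v)) :
    level E s (σ' v) ≤ level E s (σ v) := by
  by_contra! hlt
  have hE : 3 ≤ E := h.hD.trans h.hDE
  have hv' : 3 ≤ (σ' v : ℕ) := by
    by_contra hcon
    have := (level_eq_zero_iff (s := s) hE).2 (by omega : (σ' v : ℕ) < 3)
    omega
  obtain ⟨x, hx, hxl⟩ := exists_level_pred (c := c') h' hv'
  have hxn : x < n := (lt_of_mem_backNbrs h' hx).trans (σ' v).2
  have hss : {w | (renumber D E s c p σ).Adj v w ∧ level E s (σ w) < level E s (σ v)} ⊂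
      {w | (renumber D E s c' p' σ').Adj v w ∧ level E s (σ' w) < level E s (σ' v)} := by
    rw [Set.ssubset_iff_of_subset]
    · refine ⟨σ'.symm ⟨x, hxn⟩, ⟨?_, ?_⟩, ?_⟩
      · refine (canon_adj h').2 (Or.inr ?_)
        simpa using hx
      · simp
        omega
      · rintro ⟨-, hcon⟩
        rw [hlow] at hcon
        simp at hcon
        omega
    · rintro w ⟨hadj, hw⟩
      exact ⟨heq ▸ hadj, ((hlow w).1 hw).trans hlt⟩
  have h1 := Set.ncard_lt_ncard hss (Set.toFinite _)
  rw [ncard_lower h σ hv, ncard_lower h' σ' hv'] at h1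
  exact absurd (card_backNbrs_le h' h (c := c') (c' := c) hv hlt.le) (by omega)

/-- The levels can be read off the graph: two labellings of the same graph
with the same initial triangle have the same levels. -/
lemma level_eq_of_renumber_eq (h : Params D E s p) (h' : Params D E s p')
    {σ σ' : Equiv.Perm (Fin n)} (heq : renumber D E s c p σ = renumber D E s c' p' σ')
    (h0 : ∀ v, (σ v : ℕ) < 3 ↔ (σ' v : ℕ) < 3) (v : Fin n) :
    level E s (σ v) = level E s (σ' v) := by
  have hE : 3 ≤ E := h.hD.trans h.hDE
  have key : ∀ t, ∀ v, level E s (σ v) = t ↔ level E s (σ' v) = t := by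
    intro t
    induction t using Nat.strong_induction_on with
    | _ t ih =>
      intro v
      rcases Nat.eq_zero_or_pos t with rfl | ht
      · rw [level_eq_zero_iff hE, level_eq_zero_iff hE, h0]
      have hlow : ∀ w, level E s (σ w) < t ↔ level E s (σ' w) < t := fun w =>
        ⟨fun hw => ((ih _ hw w).1 rfl).symm ▸ hw, fun hw => ((ih _ hw w).2 rfl).symm ▸ hw⟩
      have h3 : ∀ i, level E s i = t → 3 ≤ i := by
        intro i hi
        by_contra hcon
        have := (level_eq_zero_iff (s := s) hE).2 (by omega : i < 3)
        omega
      constructor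
      · intro hv
        have h1 := level_le_of_renumber_eq h h' heq (h3 _ hv) (by rw [hv]; exact hlow)
        have h2 := (hlow v).not
        omega
      · intro hv
        have h1 := level_le_of_renumber_eq h' h heq.symm (h3 _ hv)
          (by rw [hv]; exact fun w => (hlow w).symm)
        have h2 := (hlow v).not
        omega
  exact ((key _ v).1 rfl).symm

lemma backNbrs_eq_of_renumber_eq (h : Params D E s p) (h' : Params D E s p')
    {σ : Equiv.Perm (Fin n)} (heq : renumber D E s c p σ = renumber D E s c' p' σ) {i : ℕ}
    (hi : i < n) : backNbrs D E s c p i = backNbrs D E s c' p' i := by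
  have key : ∀ x, x < i → ((canon D E s c p).Adj x i ↔ (canon D E s c' p').Adj x i) := by
    intro x hx
    have := congrArg (fun G : SimpleGraph (Fin n) =>
      G.Adj (σ.symm ⟨x, by omega⟩) (σ.symm ⟨i, hi⟩)) heq
    simpa [renumber] using this
  ext x
  constructor
  · intro hx
    have hlt := lt_of_mem_backNbrs h hx
    rwa [← canon_adj_of_lt h hlt, key x hlt, canon_adj_of_lt h' hlt] at hx
  · intro hx
    have hlt := lt_of_mem_backNbrs h' hx
    rwa [← canon_adj_of_lt h' hlt, ← key x hlt, canon_adj_of_lt h hlt] at hx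

lemma corner_eq_of_triSet_eq {k : ℕ} (hk : tri c k = tri c' k)
    (hk' : triSet c (k + 1) = triSet c' (k + 1)) : c k = c' k := by
  by_contra hne
  have hmem : tri c k (c k) ∈ triSet c' (k + 1) :=
    mem_triSet.2 ⟨c k, by rw [tri, Function.update_of_ne hne, hk]⟩
  rw [← hk', triSet_succ, Finset.mem_insert] at hmem
  have := tri_lt c k (c k)
  rcases hmem with hmem | hmem
  · omega
  · simp at hmem

lemma corner_eq_of_renumber_eq (h : Params D E s p) (h' : Params D E s p') (hn : D ≤ n)
    {σ : Equiv.Perm (Fin n)} (heq : renumber D E s c p σ = renumber D E s c' p' σ) {k : ℕ}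
    (hk : k + 4 < D) : c k = c' k := by
  have htri : ∀ k, k + 4 < D → triSet c (k + 1) = triSet c' (k + 1) := by
    intro k hk
    have := backNbrs_eq_of_renumber_eq h h' heq (i := k + 1 + 3) (by omega)
    rwa [backNbrs_stack (by omega), backNbrs_stack (by omega)] at this
  have hall : ∀ k, k + 3 < D → tri c k = tri c' k := by
    intro k
    induction k with
    | zero => intro _; rfl
    | succ k ih =>
      intro hk
      have ih := ih (by omega)
      rw [tri, tri, ih, corner_eq_of_triSet_eq ih (htri k (by omega))]
  exact corner_eq_of_triSet_eq (hall k (by omega)) (htri k hk)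

lemma parent_eq_of_renumber_eq (h : Params D E s p) (h' : Params D E s p')
    {σ : Equiv.Perm (Fin n)} (heq : renumber D E s c p σ = renumber D E s c' p' σ) {i : ℕ}
    (hi : E + s ≤ i) (hin : i < n) : p i = p' i := by
  have := h.hD
  have := h.hDE
  have hb := backNbrs_eq_of_renumber_eq h h' heq hin
  rw [backNbrs, backNbrs, if_neg (by omega), if_neg (by omega), if_neg (by omega),
    if_neg (by omega), if_neg (by omega), if_neg (by omega), if_neg (by omega),
    if_neg (by omega), Finset.singleton_inj] at hb
  omega

end Renumber

/-! ### Counting the choices -/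

section Counting

variable {D E s n : ℕ}

lemma card_level_le (hE : 3 ≤ E) (hs : 0 < s) (i : ℕ) :
    (Fintype.card {a : Fin n // level E s a = i}).factorial ≤
      if i = 0 then 6 else if i < E - 2 then 1 else s.factorial := by
  split_ifs with h1 h2
  · subst h1
    refine (Nat.factorial_le ?_).trans (le_of_eq (rfl : Nat.factorial 3 = 6))
    refine (Fintype.card_le_of_injective (β := Fin 3)
      (fun a => ⟨a.1, (level_eq_zero_iff hE).1 a.2⟩) ?_).trans (by simp)
    intro a b hab
    exact Subtype.ext (Fin.ext (by simpa using hab))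
  · refine (Nat.factorial_le (m := _) (n := 1) ?_).trans (by simp)
    rw [Fintype.card_le_one_iff]
    have key : ∀ a : ℕ, level E s a = i → a = i + 2 := by
      intro a ha
      by_cases haE : a < E
      · rw [level_of_lt haE] at ha
        omega
      · have := le_level (s := s) (by omega : E ≤ a)
        omega
    intro a b
    exact Subtype.ext (Fin.ext ((key _ a.2).trans (key _ b.2).symm))
  · refine Nat.factorial_le ?_
    refine (Fintype.card_le_of_injective (β := Fin s)
      (fun a => ⟨(a.1 - E) % s, Nat.mod_lt _ hs⟩) ?_).trans (by simp)
    have key : ∀ a : ℕ, level E s a = i → E ≤ a ∧ (a - E) / s = i - (E - 2) := by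
      intro a ha
      by_cases haE : a < E
      · rw [level_of_lt haE] at ha
        omega
      · refine ⟨by omega, ?_⟩
        rw [level_of_le (by omega)] at ha
        omega
    intro a b hab
    have hab' : ((a.1 : ℕ) - E) % s = ((b.1 : ℕ) - E) % s := by simpa using hab
    have ha := key _ a.2
    have hb := key _ b.2
    have e1 := Nat.div_add_mod ((a.1 : ℕ) - E) s
    have e2 := Nat.div_add_mod ((b.1 : ℕ) - E) s
    rw [ha.2] at e1
    rw [hb.2] at e2
    exact Subtype.ext (Fin.ext (by omega))

/-- Few permutations preserve all levels. -/
lemma card_level_stabilizer_le (hE : 3 ≤ E) (hs : 0 < s) :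
    (Finset.univ.filter fun g : Equiv.Perm (Fin n) =>
      (fun v : Fin n => level E s v) ∘ g = fun v : Fin n => level E s v).card ≤
      6 * s.factorial ^ ((n - E) / s + 1) := by
  rw [← Fintype.card_subtype, DomMulAct.stabilizer_card']
  set w : ℕ → ℕ := fun i => if i = 0 then 6 else if i < E - 2 then 1 else s.factorial with hw
  have hw1 : ∀ i, 1 ≤ w i := by
    intro i
    rw [hw]
    dsimp only
    split_ifs
    · norm_num
    · norm_num
    · exact Nat.factorial_pos s
  calc _ ≤ ∏ i ∈ Finset.univ.image (fun v : Fin n => level E s v), w i :=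
        Finset.prod_le_prod' fun i _ => card_level_le hE hs i
    _ ≤ ∏ i ∈ Finset.range (E - 2 + ((n - E) / s + 1)), w i := by
        refine Finset.prod_le_prod_of_subset_of_one_le' ?_ (fun i _ _ => hw1 i)
        intro i hi
        obtain ⟨v, -, rfl⟩ := Finset.mem_image.1 hi
        rw [Finset.mem_range]
        by_cases hv : (v : ℕ) < E
        · rw [level_of_lt hv]
          have := Nat.zero_le ((n - E) / s)
          omega
        · rw [level_of_le (by omega)]
          have : ((v : ℕ) - E) / s ≤ (n - E) / s := Nat.div_le_div_right (by omega)
          omega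
    _ = 6 * s.factorial ^ ((n - E) / s + 1) := by
        rw [Finset.prod_range_add]
        congr 1
        · rw [show E - 2 = (E - 3) + 1 by omega, Finset.prod_range_succ', Finset.prod_eq_one]
          · simp [hw]
          · intro i hi
            rw [Finset.mem_range] at hi
            simp [hw, show i + 1 < E - 2 by omega]
        · rw [Finset.prod_congr rfl (g := fun _ => s.factorial)]
          · simp
          · intro i _
            simp [hw]
            omega

/-- A labelling together with all the choices made in building the canonical graph. -/
abbrev Choices (D E s n : ℕ) : Type :=
  Equiv.Perm (Fin n) × (Fin (D - 4) → Fin 3) × (Fin (n - E - s) → Fin s)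

/-- The corners chosen, as a function on all of `ℕ`. -/
def extCorner (c : Fin (D - 4) → Fin 3) (k : ℕ) : Fin 3 := if h : k < D - 4 then c ⟨k, h⟩ else 0

/-- The parents chosen, as a function on all of `ℕ`. -/
def extParent (p : Fin (n - E - s) → Fin s) (i : ℕ) : ℕ :=
  if h : i - (E + s) < n - E - s then p ⟨i - (E + s), h⟩ else 0

/-- The labelled graph resulting from the choices. -/
def choiceGraph (x : Choices D E s n) : SimpleGraph (Fin n) :=
  renumber D E s (extCorner x.2.1) (extParent x.2.2) x.1

lemma params_extParent (hD : 3 ≤ D) (hDE : D ≤ E) (hED : E ≤ D + 1) (hs : 0 < s)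
    (p : Fin (n - E - s) → Fin s) : Params D E s (extParent p) := by
  refine ⟨hD, hDE, hED, hs, fun i => ?_⟩
  unfold extParent
  split_ifs
  · exact Fin.is_lt _
  · exact hs

lemma choices_ext (hD : 3 ≤ D) (hDE : D ≤ E) (hED : E ≤ D + 1) (hs : 0 < s) (hn : E ≤ n)
    {x y : Choices D E s n} (hσ : x.1 = y.1) (hG : choiceGraph x = choiceGraph y) : x = y := by
  have hx := params_extParent hD hDE hED hs x.2.2
  have hy := params_extParent hD hDE hED hs y.2.2
  unfold choiceGraph at hG
  rw [← hσ] at hG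
  refine Prod.ext hσ (Prod.ext (funext fun k => ?_) (funext fun j => Fin.ext ?_))
  · have := corner_eq_of_renumber_eq hx hy (by omega) hG (k := k) (by omega)
    simpa [extCorner] using this
  · have := parent_eq_of_renumber_eq hx hy hG (i := j + (E + s)) (by omega) (by omega)
    simpa [extParent] using this

/-- Each labelled graph, together with the position of its initial triangle, arises from few
choices, as the labelling is determined up to a permutation preserving the levels. -/
lemma card_choices_le (hD : 3 ≤ D) (hDE : D ≤ E) (hED : E ≤ D + 1) (hs : 0 < s) (hn : E ≤ n)
    {m : ℕ} (hm : m + 6 = 3 * D + 2 * (E - D) + (n - E)) :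
    n.factorial * (3 ^ (D - 4) * s ^ (n - E - s)) ≤
      6 * s.factorial ^ ((n - E) / s + 1) * ((planarSet n m).ncard * n ^ 3) := by
  classical
  have hpos : ∀ i : Fin 3, (i : ℕ) < n := fun i => by omega
  let Φ : Choices D E s n → SimpleGraph (Fin n) × (Fin 3 → Fin n) := fun x =>
    (choiceGraph x, fun i => x.1.symm ⟨i, hpos i⟩)
  have hcard : (Finset.univ : Finset (Choices D E s n)).card =
      n.factorial * (3 ^ (D - 4) * s ^ (n - E - s)) := by
    simp [Fintype.card_perm]
  let T : Finset (SimpleGraph (Fin n) × (Fin 3 → Fin n)) :=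
    (Set.toFinite (planarSet n m)).toFinset ×ˢ Finset.univ
  have hT : T.card = (planarSet n m).ncard * n ^ 3 := by
    rw [Finset.card_product, ← Set.ncard_eq_toFinset_card]
    simp
  rw [← hcard, ← hT]
  refine Finset.card_le_mul_card_image_of_maps_to (f := Φ) ?_ _ ?_
  · intro x _
    simp only [T, Φ, Finset.mem_product, Set.Finite.mem_toFinset, Finset.mem_univ, and_true]
    exact renumber_mem_planarSet (params_extParent hD hDE hED hs x.2.2) hn hm x.1
  · intro b _
    refine le_trans ?_ (card_level_stabilizer_le (n := n) (by omega : 3 ≤ E) hs)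
    rcases Finset.eq_empty_or_nonempty (Finset.univ.filter fun x => Φ x = b) with hemp | ⟨x0, hx0⟩
    · rw [hemp]
      simp
    rw [Finset.mem_filter] at hx0
    refine Finset.card_le_card_of_injOn (fun x => x.1 * x0.1⁻¹) ?_ ?_
    · intro x hx
      rw [Finset.mem_coe, Finset.mem_filter] at hx
      rw [Finset.mem_coe, Finset.mem_filter]
      refine ⟨Finset.mem_univ _, funext fun v => ?_⟩
      have hΦ : Φ x = Φ x0 := hx.2.trans hx0.2.symm
      have hlt : ∀ y z : Choices D E s n, Φ y = Φ z → ∀ u, (y.1 u : ℕ) < 3 → (z.1 u : ℕ) < 3 := by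
        intro y z hyz u hu
        have hcoord := congrFun (congrArg Prod.snd hyz) ⟨y.1 u, hu⟩
        simp only [Φ, Fin.eta, Equiv.symm_apply_apply] at hcoord
        rw [hcoord]
        simpa using hu
      have := level_eq_of_renumber_eq (params_extParent hD hDE hED hs x.2.2)
        (params_extParent hD hDE hED hs x0.2.2) (congrArg Prod.fst hΦ)
        (fun u => ⟨hlt x x0 hΦ u, hlt x0 x hΦ.symm u⟩) (x0.1⁻¹ v)
      simpa using this
    · intro x hx y hy hxy
      rw [Finset.mem_coe, Finset.mem_filter] at hx hy
      exact choices_ext hD hDE hED hs hn (mul_right_cancel hxy)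
        (congrArg Prod.fst (hx.2.trans hy.2.symm))

end Counting

/-! ### Asymptotics -/

section Asymptotics

open Topology

lemma factorial_le_real (s : ℕ) (hs : 0 < s) :
    (s.factorial : ℝ) ≤ Real.exp 1 * s * (s / Real.exp 1) ^ s := by
  obtain ⟨k, rfl⟩ : ∃ k, s = k + 1 := ⟨s - 1, by omega⟩
  have h := Stirling.stirlingSeq'_antitone (Nat.zero_le k)
  simp only [Function.comp, Nat.succ_eq_add_one, zero_add] at h
  rw [Stirling.stirlingSeq_one, Stirling.stirlingSeq, div_le_iff₀ (by positivity)] at h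
  refine h.trans ?_
  rw [← mul_assoc]
  refine mul_le_mul_of_nonneg_right ?_ (by positivity)
  rw [Real.sqrt_mul (by norm_num), ← mul_assoc, div_mul_cancel₀ _ (by positivity)]
  refine mul_le_mul_of_nonneg_left ?_ (Real.exp_pos 1).le
  rw [Real.sqrt_le_left (by positivity)]
  have : (1 : ℝ) ≤ ((k + 1 : ℕ) : ℝ) := by push_cast; linarith [k.cast_nonneg (α := ℝ)]
  nlinarith

/-- The constant of the lower bound for layer size `s`. -/
noncomputable def lowerConst (s : ℕ) : ℝ := Real.exp 1 ^ 5 * (6 * s.factorial * (s : ℝ) ^ s)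

lemma lowerConst_pos {s : ℕ} (hs : 0 < s) : 0 < lowerConst s := by
  unfold lowerConst
  have := s.factorial_pos
  positivity

/-- The count of the canonical graphs, with `s!` bounded by Stirling's formula and the three choices
for each stacked vertex bounded below by `e`. -/
lemma exp_pow_le (s n m : ℕ) (hs : 3 ≤ s) (h1 : n ≤ m) (h2 : m + 6 ≤ 3 * n) :
    (n.factorial : ℝ) * Real.exp 1 ^ n ≤
      lowerConst s * (n : ℝ) ^ 3 * (Real.exp 1 * s) ^ ((n : ℝ) / s) * (planarSet n m).ncard := by
  obtain ⟨D, hDdef⟩ : ∃ D, D = (m - n) / 2 + 3 := ⟨_, rfl⟩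
  obtain ⟨E, hEdef⟩ : ∃ E, E = D + (m - n) % 2 := ⟨_, rfl⟩
  have hn : E ≤ n := by omega
  have hcount := card_choices_le (D := D) (E := E) (s := s) (n := n) (m := m) (by omega) (by omega)
    (by omega) (by omega) hn (by omega)
  set q := (n - E) / s with hq
  set P := (planarSet n m).ncard
  set e := Real.exp 1 with he
  have he0 : 0 < e := Real.exp_pos 1
  have he3 : e ≤ 3 := Real.exp_one_lt_three.le
  have he1 : 1 ≤ e := Real.one_le_exp zero_le_one
  have hs3 : (3 : ℝ) ≤ s := by exact_mod_cast hs
  have hs0 : (0 : ℝ) < s := by linarith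
  have hqs : s * q ≤ n - E := Nat.mul_div_le _ _
  have hcount' : (n.factorial : ℝ) * (3 ^ (D - 4) * (s : ℝ) ^ (n - E - s)) ≤
      6 * (s.factorial : ℝ) ^ (q + 1) * (P * (n : ℝ) ^ 3) := by exact_mod_cast hcount
  -- the layers contribute at most `(e s) ^ (n / s) * (s / e) ^ (n - E)` up to a constant
  have hfac : (s.factorial : ℝ) ^ q ≤
      (e * s) ^ ((n : ℝ) / s) * ((s : ℝ) / e) ^ (n - E) := by
    calc (s.factorial : ℝ) ^ q ≤ (e * s * (s / e) ^ s) ^ q :=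
          pow_le_pow_left₀ (by positivity) (factorial_le_real s (by omega)) q
      _ = (e * s) ^ q * ((s : ℝ) / e) ^ (s * q) := by rw [mul_pow, ← pow_mul]
      _ ≤ _ := by
          refine mul_le_mul ?_ ?_ (by positivity) (by positivity)
          · rw [← Real.rpow_natCast]
            refine Real.rpow_le_rpow_of_exponent_le (by nlinarith) ?_
            rw [le_div_iff₀ hs0, mul_comm]
            exact_mod_cast hqs.trans (Nat.sub_le _ _)
          · exact pow_le_pow_right₀ ((one_le_div he0).2 (by linarith)) hqs
  have hspow : (s : ℝ) ^ (n - E) ≤ (s : ℝ) ^ (n - E - s) * (s : ℝ) ^ s := by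
    rw [← pow_add]
    exact pow_le_pow_right₀ (by linarith) (by omega)
  have hepow : e ^ n ≤ e ^ 5 * (3 ^ (D - 4) * e ^ (n - E)) := by
    calc e ^ n ≤ e ^ (5 + ((D - 4) + (n - E))) := pow_le_pow_right₀ he1 (by omega)
      _ = e ^ 5 * (e ^ (D - 4) * e ^ (n - E)) := by rw [pow_add, pow_add]
      _ ≤ _ := by gcongr
  have hmain : (n.factorial : ℝ) * (3 ^ (D - 4) * e ^ (n - E)) * ((s : ℝ) / e) ^ (n - E) ≤
      (6 * s.factorial * (s : ℝ) ^ s) * (n : ℝ) ^ 3 * (e * s) ^ ((n : ℝ) / s) * P *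
        ((s : ℝ) / e) ^ (n - E) := by
    calc (n.factorial : ℝ) * (3 ^ (D - 4) * e ^ (n - E)) * ((s : ℝ) / e) ^ (n - E)
        = n.factorial * 3 ^ (D - 4) * (s : ℝ) ^ (n - E) := by
          rw [div_pow]
          field_simp
      _ ≤ n.factorial * 3 ^ (D - 4) * ((s : ℝ) ^ (n - E - s) * (s : ℝ) ^ s) := by gcongr
      _ = (n.factorial : ℝ) * (3 ^ (D - 4) * (s : ℝ) ^ (n - E - s)) * (s : ℝ) ^ s := by ring
      _ ≤ 6 * (s.factorial : ℝ) ^ (q + 1) * (P * (n : ℝ) ^ 3) * (s : ℝ) ^ s := by gcongr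
      _ = (6 * s.factorial * (s : ℝ) ^ s) * (n : ℝ) ^ 3 * P * (s.factorial : ℝ) ^ q := by ring
      _ ≤ (6 * s.factorial * (s : ℝ) ^ s) * (n : ℝ) ^ 3 * P *
          ((e * s) ^ ((n : ℝ) / s) * ((s : ℝ) / e) ^ (n - E)) := by gcongr
      _ = _ := by ring
  have hmain' := le_of_mul_le_mul_right hmain (by positivity)
  calc (n.factorial : ℝ) * e ^ n
      ≤ n.factorial * (e ^ 5 * (3 ^ (D - 4) * e ^ (n - E))) := by gcongr
    _ = e ^ 5 * (n.factorial * (3 ^ (D - 4) * e ^ (n - E))) := by ring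
    _ ≤ e ^ 5 * ((6 * s.factorial * (s : ℝ) ^ s) * (n : ℝ) ^ 3 * (e * s) ^ ((n : ℝ) / s) * P) := by
        gcongr
    _ = _ := by
        unfold lowerConst
        ring

/-- The comparison sequence for layer size `s`. -/
noncomputable def lowerSeq (s n : ℕ) : ℝ :=
  Real.exp 1 / (lowerConst s ^ ((n : ℝ)⁻¹) * (n : ℝ) ^ (3 / (1 * (n : ℝ) + 0)) *
    (Real.exp 1 * s) ^ ((s : ℝ)⁻¹))

lemma lowerSeq_le (s n m : ℕ) (hs : 3 ≤ s) (hn : 0 < n) (h1 : n ≤ m) (h2 : m + 6 ≤ 3 * n) :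
    lowerSeq s n ≤ (((planarSet n m).ncard : ℝ) / (n.factorial : ℝ)) ^ ((n : ℝ)⁻¹) := by
  have hn0 : (0 : ℝ) < n := by exact_mod_cast hn
  have hs0 : (0 : ℝ) < s := by exact_mod_cast (by omega : 0 < s)
  have hC := lowerConst_pos (by omega : 0 < s)
  have hfac : (0 : ℝ) < n.factorial := by exact_mod_cast n.factorial_pos
  have hes : 0 < Real.exp 1 * s := by positivity
  have key : Real.exp 1 ^ n / (lowerConst s * (n : ℝ) ^ 3 * (Real.exp 1 * s) ^ ((n : ℝ) / s)) ≤
      ((planarSet n m).ncard : ℝ) / n.factorial := by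
    rw [div_le_div_iff₀ (by positivity) hfac]
    have := exp_pow_le s n m hs h1 h2
    linarith
  refine le_of_eq_of_le ?_ (Real.rpow_le_rpow (by positivity) key (by positivity))
  rw [lowerSeq, Real.div_rpow (by positivity) (by positivity),
    Real.mul_rpow (x := lowerConst s * (n : ℝ) ^ 3) (by positivity) (by positivity),
    Real.mul_rpow (x := lowerConst s) (by positivity) (by positivity),
    Real.pow_rpow_inv_natCast (Real.exp_pos 1).le hn.ne', ← Real.rpow_mul hes.le,
    ← Real.rpow_natCast (n : ℝ) 3, ← Real.rpow_mul hn0.le]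
  congr 2
  · congr 2
    push_cast
    field_simp
    ring
  · congr 1
    field_simp

lemma tendsto_lowerSeq (s : ℕ) (hs : 0 < s) :
    Tendsto (lowerSeq s) atTop (𝓝 (Real.exp 1 / (Real.exp 1 * s) ^ ((s : ℝ)⁻¹))) := by
  have hC := lowerConst_pos hs
  have hs0 : (0 : ℝ) < s := by exact_mod_cast hs
  have h1 : Tendsto (fun n : ℕ => lowerConst s ^ ((n : ℝ)⁻¹)) atTop (𝓝 1) := by
    have := ((Real.continuous_const_rpow hC.ne').tendsto 0).comp
      (tendsto_inv_atTop_nhds_zero_nat (𝕜 := ℝ))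
    rwa [Real.rpow_zero] at this
  have h2 : Tendsto (fun n : ℕ => (n : ℝ) ^ (3 / (1 * (n : ℝ) + 0))) atTop (𝓝 1) :=
    (tendsto_rpow_div_mul_add 3 1 0 zero_ne_one).comp tendsto_natCast_atTop_atTop
  have h3 := (h1.mul h2).mul_const ((Real.exp 1 * s) ^ ((s : ℝ)⁻¹))
  have h4 := (tendsto_const_nhds (x := Real.exp 1)).div h3 (by positivity)
  rw [mul_one, one_mul] at h4
  exact h4

lemma tendsto_limit :
    Tendsto (fun s : ℕ => Real.exp 1 / (Real.exp 1 * s) ^ ((s : ℝ)⁻¹)) atTop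
      (𝓝 (Real.exp 1)) := by
  have h1 : Tendsto (fun s : ℕ => Real.exp 1 * (s : ℝ)) atTop atTop :=
    tendsto_natCast_atTop_atTop.const_mul_atTop (Real.exp_pos 1)
  have h2 := (tendsto_rpow_div_mul_add (Real.exp 1) 1 0 zero_ne_one).comp h1
  have h3 := (tendsto_const_nhds (x := Real.exp 1)).div h2 one_ne_zero
  rw [div_one] at h3
  refine h3.congr fun s => ?_
  simp only [Pi.div_apply, Function.comp]
  congr 2
  rw [one_mul, add_zero, div_mul_cancel_left₀ (Real.exp_pos 1).ne']

lemma growth_le (n m : ℕ) (hn : 0 < n) :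
    (((planarSet n m).ncard : ℝ) / (n.factorial : ℝ)) ^ ((n : ℝ)⁻¹) ≤ 2 ^ growthExp := by
  have hfac : (0 : ℝ) < n.factorial := by exact_mod_cast n.factorial_pos
  have h : ((planarSet n m).ncard : ℝ) / (n.factorial : ℝ) ≤ ((2 : ℝ) ^ growthExp) ^ n := by
    rw [div_le_iff₀ hfac, ← pow_mul, mul_comm]
    exact_mod_cast ncard_planarSet_le n m
  refine (Real.rpow_le_rpow (by positivity) h (by positivity)).trans (le_of_eq ?_)
  exact Real.pow_rpow_inv_natCast (by positivity) hn.ne'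

end Asymptotics

end PlanarGrowth

theorem growth_liminf (m : ℕ → ℕ)
    (hm : ∀ᶠ n : ℕ in atTop, n ≤ m n ∧ (m n : ℝ) ≤ 3 * (n : ℝ) - 6) :
    Real.exp 1 ≤
      liminf (fun n : ℕ =>
        (((planarSet n (m n)).ncard : ℝ) / (Nat.factorial n : ℝ)) ^ ((n : ℝ)⁻¹)) atTop := by
  -- for real sequences `liminf` is meaningful only in the presence of an upper bound
  have hcob : IsCoboundedUnder (· ≥ ·) atTop (fun n : ℕ =>
      (((planarSet n (m n)).ncard : ℝ) / (Nat.factorial n : ℝ)) ^ ((n : ℝ)⁻¹)) := by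
    refine IsBoundedUnder.isCoboundedUnder_ge ⟨2 ^ PlanarGrowth.growthExp, ?_⟩
    rw [eventually_map]
    filter_upwards [eventually_gt_atTop 0] with n hn
    exact PlanarGrowth.growth_le n (m n) hn
  refine le_of_tendsto PlanarGrowth.tendsto_limit ?_
  filter_upwards [eventually_ge_atTop 3] with s hs
  have hlim := PlanarGrowth.tendsto_lowerSeq s (by omega)
  rw [← hlim.liminf_eq]
  refine liminf_le_liminf ?_ hlim.isBoundedUnder_ge hcob
  filter_upwards [hm, eventually_gt_atTop 0] with n hn hn0
  have h2 : m n + 6 ≤ 3 * n := by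
    have : (m n : ℝ) + 6 ≤ 3 * n := by linarith [hn.2]
    exact_mod_cast this
  exact PlanarGrowth.lowerSeq_le s n (m n) hs hn0 hn.1 h2
end

section
/- Let H be a fixed connected planar graph with more edges than vertices (e(H) > |H|), and let m:ℕ→ℕ satisfy m(n) ≤ (1+o(1))n as n→∞, with 𝒫(n,m(n)) nonempty for all large n. Then the probability that P_{n,m(n)} has a component isomorphic to H tends to 0 as n→∞. -/
/-!
The probability is bounded by injecting the graphs with an `H`-component into a family that is
small compared with `𝒫(n, m)`. Write `h` for the number of vertices of `H`.

* Deleting the edges of a component isomorphic to `H` leaves a planar graph with `m - e(H)` edges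
  and an ordered `h`-tuple of isolated vertices, from which the graph is recovered
  (`exists_isoPair`). An isolated vertex can be turned into a leaf in at least `n / 2` ways, and the
  result determines the original up to at most `n` choices, so each isolated vertex may be traded
  for an edge at the cost of a factor two (`isoPairs_le`). Hence there are at most
  `2 ^ h |𝒫(n, m - d)|` graphs with an `H`-component, where `d = e(H) - h ≥ 1`.
* For every `K` and `n` large, `K |𝒫(n, t)| ≤ |𝒫(n, t + 1)|` whenever `t < m`. By double counting
  (`planarSet_step`) it suffices that a planar graph with at most `(1 + o(1)) n` edges has at least
  `2 K n` addable non-edges (`addable_superlinear`). If it has many components, the edges between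
  different components are addable. Otherwise its cyclomatic number is `o(n)`, and its vertices
  split into `o(n)` classes such that any two vertices of a class can be joined (`exists_classes`):
  leaves are put in the class of their neighbour, and once no leaf is left the classes are the set
  of isolated vertices, the single vertices of degree at least three, and the maximal chains of
  vertices of degree two. Cauchy–Schwarz then gives superlinearly many joinable pairs.

So the probability is at most `2 ^ h / K` for all large `n`, with `K` arbitrary.

All the planarity arguments are statements about minors. Of the two excluded minors they use only
the properties collected in `Robust`, which guarantee that suppressing a vertex of degree at most
two or deleting a bridge destroys no such minor.
-/

open SimpleGraph Filter Asymptotics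

/-! ### Minors under bridges, suppression and contraction -/

/-- Connectedness of the vertex set `s` in `G`, phrased through closed subsets: a nonempty
subset of `s` closed under adjacency inside `s` is all of `s`. -/
def ConnSet {V : Type*} (G : SimpleGraph V) (s : Set V) : Prop :=
  s.Nonempty ∧ ∀ T ⊆ s, T.Nonempty → (∀ u ∈ T, ∀ v ∈ s, G.Adj u v → v ∈ T) → T = s

theorem connSet_iff {V : Type*} (G : SimpleGraph V) (s : Set V) :
    (G.induce s).Connected ↔ ConnSet G s := by
  constructor
  · intro hc
    refine ⟨Set.nonempty_coe_sort.mp hc.nonempty, fun T hT ⟨t, ht⟩ hcl => ?_⟩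
    refine Set.Subset.antisymm hT fun v hv => ?_
    have hr := hc.preconnected ⟨t, hT ht⟩ ⟨v, hv⟩
    rw [SimpleGraph.reachable_iff_reflTransGen] at hr
    have : ∀ w : s, Relation.ReflTransGen (G.induce s).Adj ⟨t, hT ht⟩ w → (w : V) ∈ T := by
      intro w hw
      induction hw with
      | refl => exact ht
      | tail _ hbc ih => exact hcl _ ih _ (Subtype.property _) hbc
    exact this ⟨v, hv⟩ hr
  · rintro ⟨⟨x, hx⟩, hcl⟩
    have key : ∀ a b : s, (G.induce s).Reachable a b := by
      intro a b
      have := hcl {v | ∃ hv : v ∈ s, (G.induce s).Reachable a ⟨v, hv⟩}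
        (fun v ⟨hv, _⟩ => hv) ⟨a, a.2, .refl _⟩ (by
          rintro u ⟨hu, hr⟩ v hv huv
          exact ⟨hv, hr.trans (SimpleGraph.Adj.reachable (by simpa using huv))⟩)
      exact (this.ge b.2).2
    have : Nonempty s := ⟨⟨x, hx⟩⟩
    exact ⟨key⟩

theorem isMinor_iff {α β : Type*} (H : SimpleGraph α) (G : SimpleGraph β) :
    IsMinor H G ↔ ∃ f : α → Set β, (∀ a, ConnSet G (f a)) ∧
      (∀ a b, a ≠ b → Disjoint (f a) (f b)) ∧
      (∀ a b, H.Adj a b → ∃ u ∈ f a, ∃ v ∈ f b, G.Adj u v) := by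
  simp only [IsMinor, connSet_iff]

theorem ConnSet.mono {V : Type*} {G G' : SimpleGraph V} {s : Set V} (h : ConnSet G s)
    (hle : ∀ u ∈ s, ∀ v ∈ s, G.Adj u v → G'.Adj u v) : ConnSet G' s :=
  ⟨h.1, fun T hT hne hcl => h.2 T hT hne fun u hu v hv huv =>
    hcl u hu v hv (hle u (hT hu) v hv huv)⟩

theorem IsMinor.mono {α V : Type*} {M : SimpleGraph α} {G G' : SimpleGraph V} (hle : G ≤ G')
    (h : IsMinor M G) : IsMinor M G' := by
  rw [isMinor_iff] at *
  obtain ⟨f, h1, h2, h3⟩ := h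
  refine ⟨f, fun a => (h1 a).mono fun u _ v _ huv => hle huv, h2, fun a b hab => ?_⟩
  obtain ⟨u, hu, v, hv, huv⟩ := h3 a b hab
  exact ⟨u, hu, v, hv, hle huv⟩

/-- What the arguments below use about `K₅` and `K₃,₃`: minimum degree at least three, and
connectedness (with diameter at most two) after the deletion of any vertex. -/
structure Robust {α : Type*} (M : SimpleGraph α) : Prop where
  exists_nbr : ∀ c d₁ d₂, ∃ d, M.Adj c d ∧ d ≠ d₁ ∧ d ≠ d₂
  link : ∀ c a b, a ≠ c → b ≠ c → M.Adj a b ∨ ∃ d, d ≠ c ∧ M.Adj a d ∧ M.Adj d b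

theorem robust_K5 : Robust (completeGraph (Fin 5)) := by
  constructor
  · simp only [completeGraph, SimpleGraph.top_adj]; decide
  · simp only [completeGraph, SimpleGraph.top_adj]; decide

theorem robust_K33 : Robust (completeBipartiteGraph (Fin 3) (Fin 3)) := by
  constructor
  · simp only [completeBipartiteGraph]; decide
  · simp only [completeBipartiteGraph]; decide

/-- A transfer of minors that works for every robust graph transfers planarity. -/
theorem IsPlanar.of_transfer {V : Type*} {G G' : SimpleGraph V} (hG : IsPlanar G)
    (h5 : Robust (completeGraph (Fin 5)) → IsMinor (completeGraph (Fin 5)) G' →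
      IsMinor (completeGraph (Fin 5)) G)
    (h33 : Robust (completeBipartiteGraph (Fin 3) (Fin 3)) →
      IsMinor (completeBipartiteGraph (Fin 3) (Fin 3)) G' →
      IsMinor (completeBipartiteGraph (Fin 3) (Fin 3)) G) : IsPlanar G' :=
  ⟨fun h => hG.1 (h5 robust_K5 h), fun h => hG.2 (h33 robust_K33 h)⟩

theorem IsPlanar.mono {V : Type*} {G G' : SimpleGraph V} (hle : G' ≤ G) (hG : IsPlanar G) :
    IsPlanar G' :=
  hG.of_transfer (fun _ => IsMinor.mono hle) (fun _ => IsMinor.mono hle)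

/-- Suppressing a vertex `v` of degree at most two (its neighbours lie in `{a, b}`) keeps every
robust minor. -/
theorem IsMinor.suppress {α V : Type*} {M : SimpleGraph α} (hM : Robust M)
    {G G' : SimpleGraph V} (v a b : V) (hnb : ∀ u, G.Adj v u → u = a ∨ u = b)
    (hle : ∀ u w, u ≠ v → w ≠ v → G.Adj u w → G'.Adj u w)
    (hab : a ≠ b → G.Adj v a → G.Adj v b → G'.Adj a b)
    (h : IsMinor M G) : IsMinor M G' := by
  rw [isMinor_iff] at *
  obtain ⟨f, h1, h2, h3⟩ := h
  have huniq : ∀ c d u, u ∈ f c → u ∈ f d → c = d := fun c d u hc hd => by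
    by_contra hcd
    exact Set.disjoint_left.mp (h2 c d hcd) hc hd
  -- A branch set `{v}` would give its index at most two neighbours.
  have hne : ∀ c, (f c \ {v}).Nonempty := by
    intro c
    by_contra hemp
    have hsub : ∀ u ∈ f c, u = v := by
      intro u hu
      by_contra huv
      exact hemp ⟨u, hu, huv⟩
    have hex : ∀ z : V, ∃ d₁, ∀ d, z ∈ f d → d = d₁ := by
      intro z
      by_cases hz : ∃ d, z ∈ f d
      · obtain ⟨d, hd⟩ := hz
        exact ⟨d, fun d' hd' => huniq _ _ z hd' hd⟩
      · exact ⟨c, fun d hd => (hz ⟨d, hd⟩).elim⟩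
    obtain ⟨d₁, hd₁⟩ := hex a
    obtain ⟨d₂, hd₂⟩ := hex b
    obtain ⟨d, hcd, hn1, hn2⟩ := hM.exists_nbr c d₁ d₂
    obtain ⟨u, hu, w, hw, huw⟩ := h3 c d hcd
    rw [hsub u hu] at huw
    rcases hnb w huw with rfl | rfl
    · exact hn1 (hd₁ d hw)
    · exact hn2 (hd₂ d hw)
  -- The branch set of `v` contains a neighbour of `v`.
  have hin : ∀ c, v ∈ f c → ∃ u ∈ f c, G.Adj v u := by
    intro c hv
    by_contra hcon
    push Not at hcon
    have := (h1 c).2 {v} (by simpa using hv) ⟨v, rfl⟩ (by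
      rintro u rfl w hw huw
      exact (hcon w hw huw).elim)
    obtain ⟨w, hw, hwv⟩ := hne c
    rw [← this] at hw
    exact hwv hw
  -- An edge from `v` to `w` outside the branch set of `v` is replaced by the edge `ab`.
  have hvw : ∀ c w, v ∈ f c → w ∉ f c → G.Adj v w → ∃ u ∈ f c \ {v}, G'.Adj u w := by
    intro c w hv hw hadj
    obtain ⟨u, hu, hvu⟩ := hin c hv
    refine ⟨u, ⟨hu, hvu.ne'⟩, ?_⟩
    have huw : u ≠ w := fun h => hw (h ▸ hu)
    rcases hnb w hadj with rfl | rfl <;> rcases hnb u hvu with rfl | rfl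
    · exact (huw rfl).elim
    · exact (hab huw.symm hadj hvu).symm
    · exact hab huw hvu hadj
    · exact (huw rfl).elim
  refine ⟨fun c => f c \ {v}, fun c => ⟨hne c, ?_⟩, fun c d hcd =>
    (h2 c d hcd).mono Set.sdiff_subset Set.sdiff_subset, ?_⟩
  · intro T hT hTne hcl
    have hTs : ∀ u ∈ T, u ∈ f c ∧ u ≠ v := fun u hu => hT hu
    refine Set.Subset.antisymm hT ?_
    by_cases hv : v ∈ f c
    · by_cases hT' : ∃ u ∈ T, G.Adj v u
      · obtain ⟨u, hu, hvu⟩ := hT'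
        have := (h1 c).2 (insert v T) (by
            intro w hw
            rcases hw with rfl | hw
            exacts [hv, (hTs w hw).1]) ⟨v, Or.inl rfl⟩ (by
          intro w hw z hz hwz
          by_cases hzv : z = v
          · exact Or.inl hzv
          right
          rcases hw with rfl | hw
          · by_cases huz : u = z
            · exact huz ▸ hu
            · refine hcl u hu z ⟨hz, hzv⟩ ?_
              rcases hnb z hwz with rfl | rfl <;> rcases hnb u hvu with rfl | rfl
              · exact (huz rfl).elim
              · exact (hab (Ne.symm huz) hwz hvu).symm
              · exact hab huz hvu hwz
              · exact (huz rfl).elim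
          · exact hcl w hw z ⟨hz, hzv⟩ (hle w z (hTs w hw).2 hzv hwz))
        rintro w ⟨hw, hwv⟩
        rw [← this] at hw
        exact hw.resolve_left hwv
      · push Not at hT'
        have := (h1 c).2 T (fun u hu => (hTs u hu).1) hTne (by
          intro u hu w hw huw
          by_cases hwv : w = v
          · subst hwv; exact (hT' u hu huw.symm).elim
          · exact hcl u hu w ⟨hw, hwv⟩ (hle u w (hTs u hu).2 hwv huw))
        rw [this]; exact Set.sdiff_subset
    · have := (h1 c).2 T (fun u hu => (hTs u hu).1) hTne (by
          intro u hu w hw huw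
          have hwv : w ≠ v := fun h => hv (h ▸ hw)
          exact hcl u hu w ⟨hw, hwv⟩ (hle u w (hTs u hu).2 hwv huw))
      rw [this]; exact Set.sdiff_subset
  · intro c d hcd
    obtain ⟨u, hu, w, hw, huw⟩ := h3 c d hcd
    have hcd' : c ≠ d := hcd.ne
    by_cases huv : u = v
    · subst huv
      obtain ⟨u', hu', hadj⟩ := hvw c w hu (fun h => hcd' (huniq _ _ w h hw)) huw
      exact ⟨u', hu', w, ⟨hw, huw.ne'⟩, hadj⟩
    · by_cases hwv : w = v
      · subst hwv
        obtain ⟨w', hw', hadj⟩ := hvw d u hw (fun h => hcd' (huniq _ _ u hu h)) huw.symm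
        exact ⟨u, ⟨hu, huv⟩, w', hw', hadj.symm⟩
      · exact ⟨u, ⟨hu, huv⟩, w, ⟨hw, hwv⟩, hle u w huv hwv huw⟩

/-- If `G'` is contained in the graph obtained from `G` by contracting the edge `yz` onto `z`
(leaving `y` isolated), then every robust minor of `G'` is a minor of `G`. -/
theorem IsMinor.of_contract {α V : Type*} {M : SimpleGraph α} (hM : Robust M)
    {G G' : SimpleGraph V} (y z : V) (hyz : G.Adj y z)
    (hy : ∀ u, ¬ G'.Adj y u)
    (hle : ∀ u w, G'.Adj u w →
      G.Adj u w ∨ (u = z ∧ G.Adj y w) ∨ (w = z ∧ G.Adj y u))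
    (h : IsMinor M G') : IsMinor M G := by
  rw [isMinor_iff] at *
  obtain ⟨f, h1, h2, h3⟩ := h
  have huniq : ∀ c d u, u ∈ f c → u ∈ f d → c = d := fun c d u hc hd => by
    by_contra hcd
    exact Set.disjoint_left.mp (h2 c d hcd) hc hd
  have hyf : ∀ c, y ∉ f c := by
    intro c hyc
    have hs := (h1 c).2 {y} (by simpa using hyc) ⟨y, rfl⟩ (by
      rintro u rfl w _ huw
      exact (hy w huw).elim)
    obtain ⟨d, hd, -, -⟩ := hM.exists_nbr c c c
    obtain ⟨u, hu, w, hw, huw⟩ := h3 c d hd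
    rw [← hs] at hu
    rw [Set.mem_singleton_iff.mp hu] at huw
    exact hy w huw
  refine ⟨fun c => f c ∪ {u | u = y ∧ z ∈ f c}, fun c => ?_, ?_, ?_⟩
  · refine ⟨(h1 c).1.mono Set.subset_union_left, fun T hT hTne hcl => ?_⟩
    refine Set.Subset.antisymm hT ?_
    have hTs : ∀ u ∈ T, u ∈ f c ∨ (u = y ∧ z ∈ f c) := fun u hu => hT hu
    have hyzT : z ∈ f c → (y ∈ T ↔ z ∈ T) := fun hz =>
      ⟨fun h => hcl y h z (Or.inl hz) hyz, fun h => hcl z h y (Or.inr ⟨rfl, hz⟩) hyz.symm⟩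
    have := (h1 c).2 (T ∩ f c) Set.inter_subset_right (by
        obtain ⟨t, ht⟩ := hTne
        rcases hTs t ht with h | ⟨rfl, hz⟩
        · exact ⟨t, ht, h⟩
        · exact ⟨z, (hyzT hz).mp ht, hz⟩) (by
      rintro u ⟨huT, huf⟩ w hw huw
      refine ⟨?_, hw⟩
      rcases hle u w huw with h | ⟨rfl, h⟩ | ⟨rfl, h⟩
      · exact hcl u huT w (Or.inl hw) h
      · exact hcl y ((hyzT huf).mpr huT) w (Or.inl hw) h
      · exact (hyzT hw).mp (hcl u huT y (Or.inr ⟨rfl, hw⟩) h.symm))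
    rintro w (hw | ⟨rfl, hz⟩)
    · rw [← this] at hw; exact hw.1
    · rw [hyzT hz]
      rw [← this] at hz; exact hz.1
  · intro a b hab
    rw [Set.disjoint_left]
    rintro u (hu | ⟨rfl, hu⟩) (hu' | ⟨h', hu'⟩)
    · exact hab (huniq _ _ u hu hu')
    · exact hyf a (h' ▸ hu)
    · exact hyf _ hu'
    · exact hab (huniq _ _ z hu hu')
  · intro a b hab
    obtain ⟨u, hu, w, hw, huw⟩ := h3 a b hab
    rcases hle u w huw with h | ⟨rfl, h⟩ | ⟨rfl, h⟩
    · exact ⟨u, Or.inl hu, w, Or.inl hw, h⟩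
    · exact ⟨y, Or.inr ⟨rfl, hu⟩, w, Or.inl hw, h⟩
    · exact ⟨u, Or.inl hu, y, Or.inr ⟨rfl, hw⟩, h.symm⟩

/-- `G` with the edge `xy` added (`G` itself if `x = y`). -/
abbrev addE {V : Type*} (G : SimpleGraph V) (x y : V) : SimpleGraph V :=
  G ⊔ SimpleGraph.fromEdgeSet {s(x, y)}

theorem addE_adj {V : Type*} (G : SimpleGraph V) (x y u w : V) :
    (addE G x y).Adj u w ↔
      G.Adj u w ∨ (u ≠ w ∧ ((u = x ∧ w = y) ∨ (u = y ∧ w = x))) := by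
  simp [addE, SimpleGraph.fromEdgeSet_adj, and_comm]

theorem addE_comm {V : Type*} (G : SimpleGraph V) (x y : V) : addE G x y = addE G y x := by
  simp only [addE, Sym2.eq_swap]

theorem addE_of_adj {V : Type*} (G : SimpleGraph V) {x y : V} (h : G.Adj x y ∨ x = y) :
    addE G x y = G := by
  ext u w
  rw [addE_adj]
  constructor
  · rintro (h' | ⟨hne, ⟨rfl, rfl⟩ | ⟨rfl, rfl⟩⟩)
    · exact h'
    · exact h.resolve_right hne
    · exact (h.resolve_right hne.symm).symm
  · exact Or.inl

/-- A set connected in `G + xy`, where the side `A` of the bridge contains `x` but not `y`,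
meets `A` in a set connected in `G`, provided that set is nonempty. -/
theorem ConnSet.side {V : Type*} {G : SimpleGraph V} {A s : Set V} {x y : V}
    (hA : ∀ u w, G.Adj u w → (u ∈ A ↔ w ∈ A)) (hx : x ∈ A) (hy : y ∉ A)
    (hs : ConnSet (addE G x y) s) (hne : (s ∩ A).Nonempty) : ConnSet G (s ∩ A) := by
  refine ⟨hne, fun T hT hTne hcl => Set.Subset.antisymm hT ?_⟩
  have hTs : ∀ u ∈ T, u ∈ s ∧ u ∈ A := fun u hu => hT hu
  by_cases hxT : x ∈ T
  · have := hs.2 (T ∪ (s \ A)) (by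
        rintro u (hu | hu)
        exacts [(hTs u hu).1, hu.1]) ⟨x, Or.inl hxT⟩ (by
      intro u hu w hw huw
      by_cases hwA : w ∈ A
      · left
        rw [addE_adj] at huw
        rcases huw with h | ⟨-, ⟨rfl, rfl⟩ | ⟨rfl, rfl⟩⟩
        · rcases hu with hu | hu
          · exact hcl u hu w ⟨hw, hwA⟩ h
          · exact (hu.2 ((hA u w h).mpr hwA)).elim
        · exact (hy hwA).elim
        · exact hxT
      · exact Or.inr ⟨hw, hwA⟩)
    rintro w ⟨hw, hwA⟩
    rw [← this] at hw
    exact hw.resolve_right fun h => h.2 hwA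
  · have := hs.2 T (fun u hu => (hTs u hu).1) hTne (by
      intro u hu w hw huw
      rw [addE_adj] at huw
      rcases huw with h | ⟨-, ⟨rfl, rfl⟩ | ⟨rfl, rfl⟩⟩
      · exact hcl u hu w ⟨hw, (hA u w h).mp (hTs u hu).2⟩ h
      · exact (hxT hu).elim
      · exact (hy (hTs _ hu).2).elim)
    rw [this]; exact Set.inter_subset_left

/-- Robust minors do not need bridges: adding an edge `xy` between a union `A` of components
of `G` and its complement creates no new robust minor. -/
theorem IsMinor.of_bridge {α V : Type*} {M : SimpleGraph α} (hM : Robust M)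
    {G : SimpleGraph V} {A : Set V} {x y : V}
    (hA : ∀ u w, G.Adj u w → (u ∈ A ↔ w ∈ A)) (hx : x ∈ A) (hy : y ∉ A)
    (h : IsMinor M (addE G x y)) : IsMinor M G := by
  rw [isMinor_iff] at *
  obtain ⟨f, h1, h2, h3⟩ := h
  have huniq : ∀ c d u, u ∈ f c → u ∈ f d → c = d := fun c d u hc hd => by
    by_contra hcd
    exact Set.disjoint_left.mp (h2 c d hcd) hc hd
  have hA' : ∀ u w, G.Adj u w → (u ∈ Aᶜ ↔ w ∈ Aᶜ) := fun u w h => not_congr (hA u w h)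
  have hx' : x ∉ Aᶜ := fun h => h hx
  by_cases hc : ∃ c, x ∈ f c
  swap
  · push Not at hc
    have hG : ∀ u w, u ≠ x → w ≠ x → (addE G x y).Adj u w → G.Adj u w := by
      intro u w hu hw huw
      rw [addE_adj] at huw
      rcases huw with h | ⟨-, ⟨rfl, rfl⟩ | ⟨rfl, rfl⟩⟩
      exacts [h, (hu rfl).elim, (hw rfl).elim]
    have hfx : ∀ c u, u ∈ f c → u ≠ x := fun c u hu h => hc c (h ▸ hu)
    refine ⟨f, fun c => (h1 c).mono fun u hu w hw => hG u w (hfx c u hu) (hfx c w hw), h2, ?_⟩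
    intro a b hab
    obtain ⟨u, hu, w, hw, huw⟩ := h3 a b hab
    exact ⟨u, hu, w, hw, hG u w (hfx a u hu) (hfx b w hw) huw⟩
  obtain ⟨c, hc⟩ := hc
  have hcx : ∀ d u, d ≠ c → u ∈ f d → u ≠ x := fun d u hd hu h => hd (huniq _ _ x (h ▸ hu) hc)
  -- Edges avoiding `x` do not cross from `A` to its complement.
  have hcross : ∀ u w, u ≠ x → w ≠ x → (addE G x y).Adj u w → (u ∈ A ↔ w ∈ A) := by
    intro u w hu hw huw
    rw [addE_adj] at huw
    rcases huw with h | ⟨-, ⟨rfl, rfl⟩ | ⟨rfl, rfl⟩⟩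
    exacts [hA u w h, (hu rfl).elim, (hw rfl).elim]
  have hside : ∀ d, d ≠ c → f d ⊆ A ∨ f d ⊆ Aᶜ := by
    intro d hd
    by_cases hne : (f d ∩ A).Nonempty
    · left
      have := (h1 d).2 (f d ∩ A) Set.inter_subset_left hne (by
        rintro u ⟨hu, huA⟩ w hw huw
        exact ⟨hw, (hcross u w (hcx d u hd hu) (hcx d w hd hw) huw).mp huA⟩)
      rw [← this]; exact Set.inter_subset_right
    · right
      intro u hu huA
      exact hne ⟨u, hu, huA⟩
  have hsame : ∀ d e, d ≠ c → e ≠ c → M.Adj d e → f d ⊆ A → f e ⊆ A := by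
    intro d e hd he hde hdA
    refine (hside e he).resolve_right fun heA => ?_
    obtain ⟨u, hu, w, hw, huw⟩ := h3 d e hde
    exact heA hw ((hcross u w (hcx d u hd hu) (hcx e w he hw) huw).mp (hdA hu))
  have hall : ∀ d e, d ≠ c → e ≠ c → f d ⊆ A → f e ⊆ A := by
    intro d e hd he hdA
    rcases hM.link c d e hd he with h | ⟨g, hg, hdg, hge⟩
    · exact hsame d e hd he h hdA
    · exact hsame g e hg he hge (hsame d g hd hg hdg hdA)
  -- Once all the other branch sets lie on one side `B`, cutting `f c` down to `B` works.
  have finish : ∀ B : Set V, (∀ u w, G.Adj u w → (u ∈ B ↔ w ∈ B)) →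
      (∀ d, d ≠ c → f d ⊆ B) → ConnSet G (f c ∩ B) → (∀ d, ConnSet G (f d ∩ B) ∨ d = c) →
      (∀ d, d ≠ c → y ∉ f d) →
      ∃ f : α → Set V, (∀ a, ConnSet G (f a)) ∧
      (∀ a b, a ≠ b → Disjoint (f a) (f b)) ∧
      (∀ a b, M.Adj a b → ∃ u ∈ f a, ∃ v ∈ f b, G.Adj u v) := by
    intro B hB hsub hconn hother hyB
    have hedge : ∀ u w d e, d ≠ c → u ∈ f d → w ∈ f e →
        (addE G x y).Adj u w → G.Adj u w := by
      intro u w d e hd hu hw huw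
      rw [addE_adj] at huw
      rcases huw with h | ⟨-, ⟨rfl, rfl⟩ | ⟨rfl, rfl⟩⟩
      · exact h
      · exact (hcx d _ hd hu rfl).elim
      · exact (hyB d hd hu).elim
    refine ⟨fun d => f d ∩ B, fun d => ?_, fun a b hab =>
      (h2 a b hab).mono Set.inter_subset_left Set.inter_subset_left, fun a b hab => ?_⟩
    · rcases hother d with h | rfl
      exacts [h, hconn]
    · obtain ⟨u, hu, w, hw, huw⟩ := h3 a b hab
      by_cases ha : a = c
      · have hb : b ≠ c := fun h => hab.ne (ha.trans h.symm)
        have hG := (hedge w u b a hb hw hu huw.symm).symm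
        have hwB := hsub b hb hw
        exact ⟨u, ⟨hu, (hB u w hG).mpr hwB⟩, w, ⟨hw, hwB⟩, hG⟩
      · have hG := hedge u w a b ha hu hw huw
        have huB := hsub a ha hu
        exact ⟨u, ⟨hu, huB⟩, w, ⟨hw, (hB u w hG).mp huB⟩, hG⟩
  obtain ⟨d₀, hcd₀, -, -⟩ := hM.exists_nbr c c c
  have hd₀ : d₀ ≠ c := hcd₀.ne'
  rcases hside d₀ hd₀ with hA₀ | hA₀
  · have hsub : ∀ d, d ≠ c → f d ⊆ A := fun d hd => hall d₀ d hd₀ hd hA₀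
    refine finish A hA hsub ((h1 c).side hA hx hy ⟨x, hc, hx⟩) (fun d => ?_) ?_
    · by_cases hd : d = c
      · exact Or.inr hd
      · left
        refine (h1 d).side hA hx hy ?_
        obtain ⟨u, hu⟩ := (h1 d).1
        exact ⟨u, hu, hsub d hd hu⟩
    · exact fun d hd hyd => hy (hsub d hd hyd)
  · have hsub : ∀ d, d ≠ c → f d ⊆ Aᶜ := by
      intro d hd
      refine (hside d hd).resolve_left fun h => ?_
      obtain ⟨u, hu⟩ := (h1 d₀).1
      exact hA₀ hu (hall d d₀ hd hd₀ h hu)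
    have hyc : y ∈ f c := by
      by_contra hyc
      have hcA : f c ∩ A = f c := (h1 c).2 (f c ∩ A) Set.inter_subset_left ⟨x, hc, hx⟩ (by
        rintro u ⟨hu, huA⟩ w hw huw
        refine ⟨hw, ?_⟩
        rw [addE_adj] at huw
        rcases huw with h | ⟨-, ⟨rfl, rfl⟩ | ⟨rfl, rfl⟩⟩
        exacts [(hA u w h).mp huA, (hyc hw).elim, (hyc hu).elim])
      -- All the neighbours of `c` would have `y` in their branch set.
      have hnby : ∀ d, M.Adj c d → y ∈ f d := by
        intro d hcd
        obtain ⟨u, hu, w, hw, huw⟩ := h3 c d hcd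
        have huA : u ∈ A := by rw [← hcA] at hu; exact hu.2
        have hwA := hsub d hcd.ne' hw
        rw [addE_adj] at huw
        rcases huw with h | ⟨-, ⟨rfl, rfl⟩ | ⟨rfl, rfl⟩⟩
        exacts [(hwA ((hA u w h).mp huA)).elim, hw, (hy huA).elim]
      obtain ⟨d, hcd, hne, -⟩ := hM.exists_nbr c d₀ d₀
      exact hne (huniq _ _ y (hnby d hcd) (hnby d₀ hcd₀))
    have h1' : ∀ d, ConnSet (addE G y x) (f d) := fun d => addE_comm G x y ▸ h1 d
    refine finish Aᶜ hA' hsub ((h1' c).side hA' hy hx' ⟨y, hyc, hy⟩) (fun d => ?_) ?_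
    · by_cases hd : d = c
      · exact Or.inr hd
      · left
        refine (h1' d).side hA' hy hx' ?_
        obtain ⟨u, hu⟩ := (h1 d).1
        exact ⟨u, hu, hsub d hd hu⟩
    · exact fun d hd hyd => hd (huniq _ _ y hyd hyc)

theorem IsPlanar.bridge {V : Type*} {G : SimpleGraph V} (hG : IsPlanar G) {A : Set V} {x y : V}
    (hA : ∀ u w, G.Adj u w → (u ∈ A ↔ w ∈ A)) (hx : x ∈ A) (hy : y ∉ A) :
    IsPlanar (addE G x y) :=
  hG.of_transfer (fun hM => IsMinor.of_bridge hM hA hx hy)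
    (fun hM => IsMinor.of_bridge hM hA hx hy)

/-- If all neighbours of `v` equal `w` and `G'` contains `G - v`, an edge added at `w` to `G'` can
be added to `G` at the leaf `v` instead. -/
theorem IsPlanar.shift_leaf {V : Type*} {G G' : SimpleGraph V} {v w x : V} (hxv : x ≠ v)
    (hnb : ∀ u, G.Adj v u → u = w) (hle : ∀ u z, u ≠ v → z ≠ v → G.Adj u z → G'.Adj u z)
    (h : IsPlanar (addE G' w x)) : IsPlanar (addE G v x) := by
  have key : ∀ {α : Type} {M : SimpleGraph α}, Robust M → IsMinor M (addE G v x) →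
      IsMinor M (addE G' w x) := by
    intro α M hM hm
    refine hm.suppress hM v w x ?_ ?_ ?_
    · intro u hu
      rw [addE_adj] at hu
      rcases hu with h | ⟨hne, ⟨-, h⟩ | ⟨h, -⟩⟩
      exacts [Or.inl (hnb u h), Or.inr h, (hxv h.symm).elim]
    · intro u z hu hz huz
      rw [addE_adj] at huz ⊢
      rcases huz with h | ⟨hne, ⟨h, -⟩ | ⟨-, h⟩⟩
      exacts [Or.inl (hle u z hu hz h), (hu h).elim, (hz h).elim]
    · intro hwx _ _
      rw [addE_adj]
      exact Or.inr ⟨hwx, Or.inl ⟨rfl, rfl⟩⟩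
  exact h.of_transfer key key

/-- If `y` has degree at most two, an edge at `y` can be shifted to a neighbour `z` of `y`:
contract `yz` and then subdivide the other edge at `y`. -/
theorem IsPlanar.shift_chain {V : Type*} {G : SimpleGraph V} {x y z z' : V}
    (hxy : x ≠ y) (hyz : G.Adj y z) (hnb : ∀ u, G.Adj y u → u = z ∨ u = z')
    (h : IsPlanar (addE G x y)) : IsPlanar (addE G x z) := by
  -- the common contraction of `G + xy` and `G + xz`
  let C : SimpleGraph V :=
    { Adj := fun u w => u ≠ w ∧ u ≠ y ∧ w ≠ y ∧ ((addE G x z).Adj u w ∨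
        (u = z ∧ G.Adj y w) ∨ (w = z ∧ G.Adj y u))
      symm := ⟨fun u w ⟨h1, h2, h3, h4⟩ => ⟨h1.symm, h3, h2, by
        rcases h4 with h | h | h
        exacts [Or.inl h.symm, Or.inr (Or.inr h), Or.inr (Or.inl h)]⟩⟩
      loopless := ⟨fun u h => h.1 rfl⟩ }
  have key : ∀ {α : Type} {M : SimpleGraph α}, Robust M → IsMinor M (addE G x z) →
      IsMinor M (addE G x y) := by
    intro α M hM hm
    have hC : IsMinor M C := by
      refine hm.suppress hM y z z' ?_ ?_ ?_
      · intro u hu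
        rw [addE_adj] at hu
        rcases hu with h | ⟨hne, ⟨h, -⟩ | ⟨h, -⟩⟩
        exacts [hnb u h, (hxy h.symm).elim, (hyz.ne h).elim]
      · intro u w hu hw huw
        exact ⟨huw.ne, hu, hw, Or.inl huw⟩
      · intro hzz' _ h2
        refine ⟨hzz', hyz.ne', h2.ne', Or.inr (Or.inl ⟨rfl, ?_⟩)⟩
        rw [addE_adj] at h2
        rcases h2 with h | ⟨hne, ⟨h, -⟩ | ⟨h, -⟩⟩
        exacts [h, (hxy h.symm).elim, (hyz.ne h).elim]
    refine hC.of_contract hM y z ((addE_adj ..).mpr (Or.inl hyz))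
      (fun u (h : C.Adj y u) => h.2.1 rfl) ?_
    rintro u w ⟨hne, hu, hw, h⟩
    simp only [addE_adj] at h ⊢
    grind
  exact h.of_transfer key key

/-! ### Classes of pairwise joinable vertices -/

theorem edgeCount_addE {V : Type*} [Finite V] (G : SimpleGraph V) {x y : V} (hne : x ≠ y)
    (h : ¬ G.Adj x y) : edgeCount (addE G x y) = edgeCount G + 1 := by
  have hset : (addE G x y).edgeSet = insert s(x, y) G.edgeSet := by
    ext e
    induction e with
    | h u w =>
      simp only [SimpleGraph.mem_edgeSet, addE_adj, Set.mem_insert_iff, Sym2.eq_iff]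
      grind
  rw [edgeCount, hset, Set.ncard_insert_of_notMem (by simpa using h) (Set.toFinite _)]
  rfl

theorem edgeCount_eq_card {V : Type*} [Fintype V] (G : SimpleGraph V) [Fintype G.edgeSet] :
    edgeCount G = G.edgeFinset.card := by
  rw [edgeCount, Set.ncard_eq_toFinset_card']
  rfl

/-- `R` meets every component of `G`, phrased through nonempty adjacency-closed sets. -/
def Hits {V : Type*} (G : SimpleGraph V) (R : Finset V) : Prop :=
  ∀ T : Set V, T.Nonempty → (∀ u ∈ T, ∀ w, G.Adj u w → w ∈ T) → ∃ r ∈ R, r ∈ T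

/-- `π` is constant only on pairs whose addition keeps `G` planar: the fibres of `π` are classes
of vertices that are pairwise joinable (one pair at a time). -/
def Joinable {V ι : Type*} (G : SimpleGraph V) (π : V → ι) : Prop :=
  ∀ x y, π x = π y → IsPlanar (addE G x y)

/-- If all non-isolated vertices of a subgraph `GD` of `G` have degree at most two in `G`, two
vertices in a common component of `GD` can be joined: the new edge is moved along the chain. -/
theorem planar_addE_of_chain {V : Type*} {G GD : SimpleGraph V} (hG : IsPlanar G)
    (hGD : ∀ u w, GD.Adj u w → G.Adj u w ∧ ∃ z', ∀ t, G.Adj u t → t = w ∨ t = z')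
    {x y : V} (h : GD.Reachable x y) : IsPlanar (addE G x y) := by
  rw [SimpleGraph.reachable_iff_reflTransGen] at h
  induction h with
  | refl => rw [addE_of_adj G (Or.inr rfl)]; exact hG
  | @tail y z _ hyz ih =>
    obtain ⟨hadj, z', hz'⟩ := hGD y z hyz
    by_cases hxy : x = y
    · subst hxy
      rw [addE_of_adj G (Or.inl hadj)]; exact hG
    · exact ih.shift_chain hxy hadj hz'

open Classical in
/-- In a graph without leaves, the classes are: the isolated vertices; each vertex of degree at
least three; each component of the graph induced on the vertices of degree two. -/
theorem exists_classes_base {V : Type} [Fintype V] (G : SimpleGraph V) (hG : IsPlanar G)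
    (R : Finset V) (hR : Hits G R) (hleaf : ∀ v, G.degree v ≠ 1) :
    ∃ (ι : Type) (π : V → ι), Joinable G π ∧
      (Set.range π).ncard + 8 * Fintype.card V ≤ 1 + 8 * (edgeCount G + R.card) := by
  let GD : SimpleGraph V :=
    { Adj := fun u w => G.Adj u w ∧ G.degree u = 2 ∧ G.degree w = 2
      symm := ⟨fun u w ⟨h1, h2, h3⟩ => ⟨h1.symm, h3, h2⟩⟩
      loopless := ⟨fun u h => h.1.ne rfl⟩ }
  have hGD : ∀ u w, GD.Adj u w → G.Adj u w ∧ ∃ z', ∀ t, G.Adj u t → t = w ∨ t = z' := by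
    rintro u w ⟨hadj, hu, -⟩
    refine ⟨hadj, ?_⟩
    rw [← SimpleGraph.card_neighborFinset_eq_degree, Finset.card_eq_two] at hu
    obtain ⟨a, b, -, hab⟩ := hu
    have hm : ∀ t, G.Adj u t ↔ t = a ∨ t = b := fun t => by
      rw [← SimpleGraph.mem_neighborFinset, hab]; simp
    rcases (hm w).mp hadj with rfl | rfl
    · exact ⟨b, fun t ht => (hm t).mp ht⟩
    · exact ⟨a, fun t ht => ((hm t).mp ht).symm⟩
  have hiso : ∀ v, G.degree v = 0 → ∀ u, ¬ G.Adj v u := by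
    intro v hv u hvu
    have := (G.degree_pos_iff_exists_adj v).mpr ⟨u, hvu⟩
    omega
  let π : V → Option GD.ConnectedComponent := fun x =>
    if G.degree x = 0 then none else some (GD.connectedComponentMk x)
  refine ⟨_, π, ?_, ?_⟩
  · intro x y hxy
    by_cases hx : G.degree x = 0
    · by_cases hxy' : x = y
      · rw [addE_of_adj G (Or.inr hxy')]; exact hG
      refine hG.bridge (A := {x}) (fun u w huw => ?_) rfl (fun h => hxy' h.symm)
      constructor
      · rintro rfl; exact (hiso _ hx w huw).elim
      · rintro rfl; exact (hiso _ hx u huw.symm).elim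
    · by_cases hy : G.degree y = 0
      · simp [π, hx, hy] at hxy
      · simp only [π, hx, hy, if_false, Option.some.injEq] at hxy
        exact planar_addE_of_chain hG hGD (SimpleGraph.ConnectedComponent.exact hxy)
  · let I : Finset V := Finset.univ.filter fun v => G.degree v = 0
    let B : Finset V := Finset.univ.filter fun v => 3 ≤ G.degree v
    -- `X` meets all the classes of non-isolated vertices
    let X : Finset V := (R \ I) ∪ (B ∪ B.biUnion fun b => G.neighborFinset b)
    have hX : ∀ x, G.degree x ≠ 0 → ∃ u ∈ X, GD.Reachable x u := by
      intro x hx0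
      by_cases hxB : 3 ≤ G.degree x
      · exact ⟨x, by simp [X, B, hxB], .refl _⟩
      have hx2 : G.degree x = 2 := by have := hleaf x; omega
      have hT2 : ∀ u, GD.Reachable x u → G.degree u = 2 := by
        intro u hu
        rw [SimpleGraph.reachable_iff_reflTransGen] at hu
        induction hu with
        | refl => exact hx2
        | tail _ h _ => exact h.2.2
      by_cases hcl : ∀ u ∈ {u | GD.Reachable x u}, ∀ w, G.Adj u w → w ∈ {u | GD.Reachable x u}
      · obtain ⟨r, hr, hrT⟩ := hR _ ⟨x, .refl _⟩ hcl
        refine ⟨r, ?_, hrT⟩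
        have := hT2 r hrT
        simp [X, I, hr, this]
      · push Not at hcl
        obtain ⟨u, hu, w, huw, hw⟩ := hcl
        refine ⟨u, ?_, hu⟩
        have hw3 : 3 ≤ G.degree w := by
          have h0 : 0 < G.degree w := (G.degree_pos_iff_exists_adj w).mpr ⟨u, huw.symm⟩
          have h1 := hleaf w
          have h2 : G.degree w ≠ 2 := fun h2 =>
            hw (SimpleGraph.Reachable.trans hu
              (SimpleGraph.Adj.reachable (show GD.Adj u w from ⟨huw, hT2 u hu, h2⟩)))
          omega
        simp only [X, B, Finset.mem_union, Finset.mem_biUnion, Finset.mem_filter,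
          Finset.mem_univ, true_and, SimpleGraph.mem_neighborFinset]
        exact Or.inr (Or.inr ⟨w, hw3, huw.symm⟩)
    have hrange : (Set.range π).ncard ≤ 1 + X.card := by
      have hsub : Set.range π ⊆
          ((insert none (X.image fun u => some (GD.connectedComponentMk u)) :
            Finset (Option GD.ConnectedComponent)) : Set (Option GD.ConnectedComponent)) := by
        rintro _ ⟨x, rfl⟩
        by_cases hx : G.degree x = 0
        · simp [π, hx]
        · obtain ⟨u, hu, hr⟩ := hX x hx
          simp only [π, hx, if_false, Finset.coe_insert, Finset.coe_image, Set.mem_insert_iff]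
          exact Or.inr ⟨u, hu, congrArg some (SimpleGraph.ConnectedComponent.sound hr.symm)⟩
      refine (Set.ncard_le_ncard hsub (Finset.finite_toSet _)).trans ?_
      rw [Set.ncard_coe_finset]
      refine (Finset.card_insert_le _ _).trans ?_
      have := Finset.card_image_le (s := X) (f := fun u => some (GD.connectedComponentMk u))
      omega
    have hIR : I ⊆ R := by
      intro v hv
      have hv0 : G.degree v = 0 := by simpa [I] using hv
      obtain ⟨r, hr, hrv⟩ := hR {v} ⟨v, rfl⟩ (by
        rintro u rfl w huw
        exact (hiso _ hv0 w huw).elim)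
      rw [Set.mem_singleton_iff] at hrv
      exact hrv ▸ hr
    have hRI : (R \ I).card + I.card = R.card := Finset.card_sdiff_add_card_eq_card hIR
    have hXc : X.card ≤ (R \ I).card + (B.card + ∑ b ∈ B, G.degree b) := by
      refine (Finset.card_union_le _ _).trans (Nat.add_le_add_left ?_ _)
      refine (Finset.card_union_le _ _).trans (Nat.add_le_add_left ?_ _)
      exact Finset.card_biUnion_le
    have hdeg : B.card + ∑ b ∈ B, G.degree b + 8 * Fintype.card V ≤
        8 * edgeCount G + 8 * I.card := by
      have hs := G.sum_degrees_eq_twice_card_edges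
      rw [← edgeCount_eq_card] at hs
      -- valid vertex by vertex, since no degree equals one
      have hp : ∑ v : V, ((if 3 ≤ G.degree v then 1 + G.degree v else 0) + 8) ≤
          ∑ v : V, (4 * G.degree v + (if G.degree v = 0 then 8 else 0)) := by
        refine Finset.sum_le_sum fun v _ => ?_
        have := hleaf v
        split_ifs <;> omega
      rw [Finset.sum_add_distrib, Finset.sum_add_distrib, ← Finset.mul_sum, hs,
        ← Finset.sum_filter, ← Finset.sum_filter, Finset.sum_add_distrib] at hp
      simp only [Finset.sum_const, smul_eq_mul, Finset.card_univ, mul_one] at hp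
      change B.card + ∑ b ∈ B, G.degree b + _ ≤ _ + I.card * 8 at hp
      omega
    omega

open Classical in
/-- A planar graph with `m` edges on `n` vertices whose components are hit by `R` splits into at
most `1 + 8 (m + |R| - n)` classes of pairwise joinable vertices. A leaf may join the class of its
neighbour, so leaves can be stripped off until none is left. -/
theorem exists_classes {V : Type} [Fintype V] (k : ℕ) :
    ∀ (G : SimpleGraph V) (_ : IsPlanar G) (R : Finset V) (_ : Hits G R) (_ : edgeCount G = k),
    ∃ (ι : Type) (π : V → ι), Joinable G π ∧
      (Set.range π).ncard + 8 * Fintype.card V ≤ 1 + 8 * (edgeCount G + R.card) := by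
  induction k with
  | zero =>
    intro G hG R hR hk
    refine exists_classes_base G hG R hR fun v hv => ?_
    obtain ⟨w, hw⟩ := (G.degree_pos_iff_exists_adj v).mp (by omega)
    rw [edgeCount, Set.ncard_eq_zero] at hk
    have : s(v, w) ∈ G.edgeSet := hw
    rw [hk] at this
    exact this
  | succ k ih =>
    intro G hG R hR hk
    by_cases hleaf : ∀ v, G.degree v ≠ 1
    · exact exists_classes_base G hG R hR hleaf
    push Not at hleaf
    obtain ⟨v, hv⟩ := hleaf
    rw [← SimpleGraph.card_neighborFinset_eq_degree, Finset.card_eq_one] at hv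
    obtain ⟨w, hw⟩ := hv
    have hnb : ∀ u, G.Adj v u ↔ u = w := fun u => by
      rw [← SimpleGraph.mem_neighborFinset, hw]; simp
    have hvw : G.Adj v w := (hnb w).mpr rfl
    let G' : SimpleGraph V :=
      { Adj := fun u z => G.Adj u z ∧ u ≠ v ∧ z ≠ v
        symm := ⟨fun u z ⟨h1, h2, h3⟩ => ⟨h1.symm, h3, h2⟩⟩
        loopless := ⟨fun u h => h.1.ne rfl⟩ }
    have hG'adj : ∀ u z, G'.Adj u z ↔ G.Adj u z ∧ u ≠ v ∧ z ≠ v := fun _ _ => Iff.rfl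
    have hsplit : G = addE G' v w := by
      ext u z
      rw [addE_adj, hG'adj]
      constructor
      · intro h
        by_cases hu : u = v
        · subst hu
          exact Or.inr ⟨h.ne, Or.inl ⟨rfl, (hnb z).mp h⟩⟩
        · by_cases hz : z = v
          · subst hz
            exact Or.inr ⟨h.ne, Or.inr ⟨(hnb u).mp h.symm, rfl⟩⟩
          · exact Or.inl ⟨h, hu, hz⟩
      · rintro (h | ⟨-, ⟨rfl, rfl⟩ | ⟨rfl, rfl⟩⟩)
        exacts [h.1, hvw, hvw.symm]
    have hcount : edgeCount G = edgeCount G' + 1 := by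
      conv_lhs => rw [hsplit]
      exact edgeCount_addE G' hvw.ne fun h => h.2.1 rfl
    let R' : Finset V := insert v (R.image fun s => if s = v then w else s)
    have hR'card : R'.card ≤ R.card + 1 :=
      (Finset.card_insert_le _ _).trans (Nat.add_le_add_right Finset.card_image_le _)
    have hR' : Hits G' R' := by
      intro T hT hcl
      by_cases hvT : v ∈ T
      · exact ⟨v, Finset.mem_insert_self _ _, hvT⟩
      by_cases hwT : w ∈ T
      · obtain ⟨r, hr, hrT⟩ := hR (insert v T) ⟨v, Or.inl rfl⟩ (by
          rintro u (rfl | hu) z huz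
          · exact Or.inr ((hnb z).mp huz ▸ hwT)
          · by_cases hz : z = v
            · exact Or.inl hz
            · exact Or.inr (hcl u hu z ⟨huz, fun h => hvT (h ▸ hu), hz⟩))
        refine ⟨if r = v then w else r, Finset.mem_insert_of_mem
          (Finset.mem_image_of_mem _ hr), ?_⟩
        split_ifs with h
        exacts [hwT, hrT.resolve_left h]
      · obtain ⟨r, hr, hrT⟩ := hR T hT (by
          intro u hu z huz
          have hz : z ≠ v := by
            rintro rfl
            exact hwT ((hnb u).mp huz.symm ▸ hu)
          exact hcl u hu z ⟨huz, fun h => hvT (h ▸ hu), hz⟩)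
        refine ⟨if r = v then w else r, Finset.mem_insert_of_mem
          (Finset.mem_image_of_mem _ hr), ?_⟩
        rw [if_neg (show r ≠ v from fun h => hvT (h ▸ hrT))]
        exact hrT
    obtain ⟨ι, π, hπ, hcard⟩ := ih G' (hG.mono fun u z (h : G'.Adj u z) => h.1) R' hR' (by omega)
    refine ⟨ι, fun x => π (if x = v then w else x), ?_, ?_⟩
    · have hleafcase : ∀ y, y ≠ v → π w = π y → IsPlanar (addE G v y) := fun y hy h =>
        (hπ w y h).shift_leaf hy (fun u hu => (hnb u).mp hu) fun u z hu hz huz =>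
          (hG'adj u z).mpr ⟨huz, hu, hz⟩
      intro x y hxy
      by_cases hx : x = v
      · by_cases hy : y = v
        · rw [addE_of_adj G (Or.inr (hx.trans hy.symm))]; exact hG
        · subst hx
          simp only [if_true, hy, if_false] at hxy
          exact hleafcase y hy hxy
      · by_cases hy : y = v
        · subst hy
          simp only [if_true, hx, if_false] at hxy
          rw [addE_comm]
          exact hleafcase x hx hxy.symm
        · simp only [hx, hy, if_false] at hxy
          have h1 := hπ x y hxy
          have h2 : addE G x y = addE (addE G' x y) v w := by
            conv_lhs => rw [hsplit]
            exact sup_right_comm _ _ _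
          rw [h2]
          refine h1.bridge (A := {v}) (fun u z huz => ?_) rfl fun h => hvw.ne h.symm
          rw [addE_adj, hG'adj] at huz
          simp only [Set.mem_singleton_iff]
          grind
    · have hsub : Set.range (fun x => π (if x = v then w else x)) ⊆ Set.range π := by
        rintro _ ⟨x, rfl⟩
        exact ⟨_, rfl⟩
      have := Set.ncard_le_ncard hsub (Set.finite_range π)
      omega

/-! ### Planar graphs with few edges have many addable non-edges -/

open Classical in
/-- If every `y ∈ N x` gives an addable non-edge `xy`, then counting ordered pairs bounds the
number of addable non-edges from below. -/
theorem sum_card_le_addable {V : Type*} [Fintype V] (G : SimpleGraph V) (N : V → Finset V)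
    (hN : ∀ x, ∀ y ∈ N x, x ≠ y ∧ ¬ G.Adj x y ∧ IsPlanar (addE G x y)) :
    ∑ x, (N x).card ≤ 2 * (addableSet G).ncard := by
  let Q : Finset (Σ _ : V, V) := Finset.univ.sigma N
  let f : (Σ _ : V, V) → Sym2 V := fun p => s(p.1, p.2)
  have h1 : Q.card = ∑ x, (N x).card := Finset.card_sigma _ _
  have h2 : Q.card ≤ 2 * (Q.image f).card := by
    refine Finset.card_le_mul_card_image Q 2 fun e _ => ?_
    induction e with
    | h a b =>
      refine (Finset.card_le_card (t := {⟨a, b⟩, ⟨b, a⟩}) ?_).trans Finset.card_le_two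
      rintro ⟨c, d⟩ hp
      have := (Finset.mem_filter.mp hp).2
      simp only [f, Sym2.eq_iff] at this
      rcases this with ⟨rfl, rfl⟩ | ⟨rfl, rfl⟩ <;> simp
  have h3 : ((Q.image f : Finset (Sym2 V)) : Set (Sym2 V)) ⊆ addableSet G := by
    intro e he
    obtain ⟨⟨x, y⟩, hp, rfl⟩ := Finset.mem_image.mp (Finset.mem_coe.mp he)
    obtain ⟨ha, hb, hc⟩ := hN x y (Finset.mem_sigma.mp hp).2
    exact ⟨by simpa [f] using ha, by simpa [f] using hb, hc⟩
  have h4 := Set.ncard_le_ncard h3 (Set.toFinite _)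
  rw [Set.ncard_coe_finset] at h4
  omega

open Classical in
/-- Cauchy–Schwarz for the sizes of the fibres of `π`. -/
theorem sq_card_le_fibres {V ι : Type*} [Fintype V] (π : V → ι) :
    Fintype.card V ^ 2 ≤
      (Set.range π).ncard * ∑ x, (Finset.univ.filter fun y => π y = π x).card := by
  let s : Finset ι := Finset.univ.image π
  have hs : (Set.range π).ncard = s.card := by
    rw [← Set.ncard_coe_finset]
    simp [s]
  have h1 : Fintype.card V = ∑ i ∈ s, (Finset.univ.filter fun y => π y = i).card := by
    rw [← Finset.card_univ]
    exact Finset.card_eq_sum_card_image π _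
  have h2 : ∑ x, (Finset.univ.filter fun y => π y = π x).card =
      ∑ i ∈ s, (Finset.univ.filter fun y => π y = i).card ^ 2 := by
    rw [Finset.sum_comp (fun i => (Finset.univ.filter fun y => π y = i).card) π]
    exact Finset.sum_congr rfl fun i _ => by rw [smul_eq_mul, sq]
  rw [hs, h2, h1]
  exact sq_sum_le_card_mul_sum_sq

open Classical in
/-- Planar graphs with at most `(1 + o(1)) n` edges have superlinearly many addable non-edges:
either there are many components, and any two of them may be joined, or the cyclomatic number is
small, and then there are few (hence large) classes of pairwise joinable vertices. -/
theorem addable_superlinear (K n : ℕ) (G : SimpleGraph (Fin n)) (hG : IsPlanar G)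
    (hm2 : edgeCount G ≤ 2 * n)
    (hm : (2 * K + 5) * (1 + 8 * (edgeCount G + (2 * K + 1) - n)) ≤ n) :
    K * n ≤ (addableSet G).ncard := by
  let rep : Fin n → Fin n := fun x => (G.connectedComponentMk x).out
  have hrep : ∀ x, G.Reachable (rep x) x := fun x =>
    SimpleGraph.ConnectedComponent.exact (Quot.out_eq _)
  have hrep' : ∀ x y, G.Reachable x y → rep x = rep y := fun x y h =>
    congrArg Quot.out (SimpleGraph.ConnectedComponent.sound h)
  let R : Finset (Fin n) := Finset.univ.image rep
  by_cases hκ : 2 * K + 1 ≤ R.card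
  · have h := sum_card_le_addable G (fun x => R.erase (rep x)) (by
      intro x y hy
      obtain ⟨hne, hyR⟩ := Finset.mem_erase.mp hy
      obtain ⟨z, -, rfl⟩ := Finset.mem_image.mp hyR
      have hnr : ¬ G.Reachable x (rep z) := fun hr => hne (hrep' x z (hr.trans (hrep z))).symm
      refine ⟨fun h => hnr (h ▸ .refl _), fun h => hnr h.reachable, ?_⟩
      exact hG.bridge (A := {u | G.Reachable x u}) (fun u w huw =>
        ⟨fun h => SimpleGraph.Reachable.trans h huw.reachable,
          fun h => SimpleGraph.Reachable.trans h huw.symm.reachable⟩) (.refl _) hnr)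
    have hc : ∀ x, (R.erase (rep x)).card = R.card - 1 := fun x =>
      Finset.card_erase_of_mem (Finset.mem_image_of_mem _ (Finset.mem_univ x))
    simp only [hc, Finset.sum_const, Finset.card_univ, Fintype.card_fin, smul_eq_mul] at h
    have : n * (2 * K) ≤ n * (R.card - 1) := Nat.mul_le_mul_left _ (by omega)
    nlinarith
  · have hR : Hits G R := by
      rintro T ⟨t, ht⟩ hcl
      refine ⟨rep t, Finset.mem_image_of_mem _ (Finset.mem_univ t), ?_⟩
      have hr := (hrep t).symm
      rw [SimpleGraph.reachable_iff_reflTransGen] at hr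
      generalize rep t = r at hr
      induction hr with
      | refl => exact ht
      | tail _ h ih => exact hcl _ ih _ h
    obtain ⟨ι, π, hπ, hcard⟩ := exists_classes _ G hG R hR rfl
    rw [Fintype.card_fin] at hcard
    have h := sum_card_le_addable G
      (fun x => Finset.univ.filter fun y => π y = π x ∧ x ≠ y ∧ ¬ G.Adj x y) (by
      intro x y hy
      obtain ⟨-, h1, h2, h3⟩ := Finset.mem_filter.mp hy
      exact ⟨h2, h3, hπ x y h1.symm⟩)
    have hcs := sq_card_le_fibres π
    rw [Fintype.card_fin] at hcs
    have hfib : ∀ x, (Finset.univ.filter fun y => π y = π x).card ≤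
        (Finset.univ.filter fun y => π y = π x ∧ x ≠ y ∧ ¬ G.Adj x y).card + (1 + G.degree x) := by
      intro x
      have hsub : (Finset.univ.filter fun y => π y = π x) ⊆
          (Finset.univ.filter fun y => π y = π x ∧ x ≠ y ∧ ¬ G.Adj x y) ∪
            ({x} ∪ G.neighborFinset x) := by
        intro y hy
        simp only [Finset.mem_filter, Finset.mem_univ, true_and, Finset.mem_union,
          Finset.mem_singleton, SimpleGraph.mem_neighborFinset] at hy ⊢
        grind
      refine (Finset.card_le_card hsub).trans ((Finset.card_union_le _ _).trans
        (Nat.add_le_add_left ((Finset.card_union_le _ _).trans ?_) _))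
      rw [Finset.card_singleton, SimpleGraph.card_neighborFinset_eq_degree]
    have hsum := Finset.sum_le_sum fun x (_ : x ∈ Finset.univ) => hfib x
    have hs := G.sum_degrees_eq_twice_card_edges
    rw [← edgeCount_eq_card] at hs
    rw [Finset.sum_add_distrib, Finset.sum_add_distrib, hs] at hsum
    simp only [Finset.sum_const, Finset.card_univ, Fintype.card_fin, smul_eq_mul,
      mul_one] at hsum
    set S := ∑ x, (Finset.univ.filter fun y => π y = π x).card
    set N := (Set.range π).ncard
    set a := (addableSet G).ncard
    have hS : S ≤ 2 * a + 5 * n := by omega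
    have hN : (2 * K + 5) * N ≤ n :=
      (Nat.mul_le_mul_left _ (show N ≤ 1 + 8 * (edgeCount G + (2 * K + 1) - n) by omega)).trans hm
    rcases Nat.eq_zero_or_pos n with h0 | hpos
    · rw [h0]; simp
    have h5 : (2 * K + 5) * n ^ 2 ≤ n * (2 * a + 5 * n) :=
      calc (2 * K + 5) * n ^ 2 ≤ (2 * K + 5) * (N * S) := Nat.mul_le_mul_left _ hcs
        _ = (2 * K + 5) * N * S := by ring
        _ ≤ n * (2 * a + 5 * n) := Nat.mul_le_mul hN hS
    have h6 : n * (K * n) ≤ n * a := by nlinarith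
    exact Nat.le_of_mul_le_mul_left h6 hpos

/-! ### Counting graphs with a component isomorphic to `H` -/

open Classical in
/-- Double counting of the pairs `(G, G + e)` with `e` addable. -/
theorem planarSet_step (n t a : ℕ) (ha : ∀ G ∈ planarSet n t, a ≤ (addableSet G).ncard) :
    (planarSet n t).ncard * a ≤ (planarSet n (t + 1)).ncard * (t + 1) := by
  rw [Set.ncard_eq_toFinset_card', Set.ncard_eq_toFinset_card']
  refine Finset.card_mul_le_card_mul
    (fun G G' => ∃ e ∈ addableSet G, G' = G ⊔ SimpleGraph.fromEdgeSet {e}) ?_ ?_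
  · intro G hG
    rw [Set.mem_toFinset] at hG
    refine (ha G hG).trans ?_
    rw [← Set.ncard_coe_finset]
    have hinj : Set.InjOn (fun e => G ⊔ SimpleGraph.fromEdgeSet {e}) (addableSet G) := by
      intro e he e' he' hee
      have h1 : e ∈ (G ⊔ SimpleGraph.fromEdgeSet {e'}).edgeSet := by
        have : e ∈ (G ⊔ SimpleGraph.fromEdgeSet {e}).edgeSet := by
          simp [he.1]
        exact (congrArg (fun F : SimpleGraph (Fin n) => e ∈ F.edgeSet) hee).mp this
      simp only [SimpleGraph.edgeSet_sup, SimpleGraph.edgeSet_fromEdgeSet, Set.mem_union] at h1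
      exact h1.resolve_left he.2.1 |>.1
    rw [← hinj.ncard_image]
    refine Set.ncard_le_ncard ?_ (Finset.finite_toSet _)
    rintro _ ⟨e, he, rfl⟩
    rw [Finset.mem_coe, Finset.mem_bipartiteAbove, Set.mem_toFinset]
    refine ⟨⟨he.2.2, ?_⟩, e, he, rfl⟩
    induction e with
    | h x y => rw [← hG.2]; exact edgeCount_addE G (by simpa using he.1) he.2.1
  · intro G' hG'
    rw [Set.mem_toFinset] at hG'
    rw [← hG'.2, edgeCount, ← Set.ncard_coe_finset]
    refine (Set.ncard_le_ncard (t := (fun e => G'.deleteEdges {e}) '' G'.edgeSet) ?_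
      (Set.toFinite _)).trans (Set.ncard_image_le (Set.toFinite _))
    intro G hG
    rw [Finset.mem_coe, Finset.mem_bipartiteBelow] at hG
    obtain ⟨-, e, he, rfl⟩ := hG
    refine ⟨e, by simp [he.1], ?_⟩
    ext u w
    simp only [SimpleGraph.deleteEdges_adj, SimpleGraph.sup_adj, SimpleGraph.fromEdgeSet_adj,
      Set.mem_singleton_iff]
    constructor
    · rintro ⟨h | h, h'⟩
      exacts [h, (h' h.1).elim]
    · intro h
      refine ⟨Or.inl h, fun heq => he.2.1 ?_⟩
      rw [← heq]; exact h

/-- Planar graphs with `t` edges, together with an ordered `j`-tuple of distinct isolated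
vertices. -/
def isoPairs (n j t : ℕ) : Set ((Fin j → Fin n) × SimpleGraph (Fin n)) :=
  {p | Function.Injective p.1 ∧ p.2 ∈ planarSet n t ∧ ∀ i u, ¬ p.2.Adj (p.1 i) u}

open Classical in
/-- Double counting: the first distinguished isolated vertex is turned into a leaf attached to
any vertex outside the tuple. -/
theorem isoPairs_step (n j t : ℕ) :
    (isoPairs n (j + 1) t).ncard * (n - (j + 1)) ≤ (isoPairs n j (t + 1)).ncard * n := by
  rw [Set.ncard_eq_toFinset_card', Set.ncard_eq_toFinset_card']
  refine Finset.card_mul_le_card_mul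
    (fun p q => q.1 = Fin.tail p.1 ∧ ∃ u ∉ Set.range p.1, q.2 = addE p.2 (p.1 0) u) ?_ ?_
  · rintro ⟨φ, F⟩ hp
    rw [Set.mem_toFinset] at hp
    obtain ⟨hφ, hF, hiso⟩ := hp
    have hinj : Function.Injective fun i : Fin j => φ i.succ :=
      hφ.comp (Fin.succ_injective j)
    have hcard : n - (j + 1) = (Finset.univ.image φ)ᶜ.card := by
      rw [Finset.card_compl, Finset.card_image_of_injective _ hφ]
      simp
    rw [hcard]
    refine Finset.card_le_card_of_injOn (fun u => (Fin.tail φ, addE F (φ 0) u)) ?_ ?_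
    · intro u hu
      have hu' : ∀ i, φ i ≠ u := by simpa using hu
      rw [Finset.mem_coe, Finset.mem_bipartiteAbove, Set.mem_toFinset]
      refine ⟨⟨hinj, ⟨?_, ?_⟩, ?_⟩, rfl, u, by simpa using hu', rfl⟩
      · refine hF.1.bridge (A := {φ 0}) (fun a b hab => ?_) rfl (fun h => hu' 0 h.symm)
        simp only [Set.mem_singleton_iff]
        constructor
        · rintro rfl; exact (hiso 0 b hab).elim
        · rintro rfl; exact (hiso 0 a hab.symm).elim
      · rw [edgeCount_addE F (hu' 0) (hiso 0 u), hF.2]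
      · intro i a h
        rw [addE_adj] at h
        rcases h with h | ⟨-, ⟨h, -⟩ | ⟨h, -⟩⟩
        · exact hiso i.succ a h
        · exact absurd (hφ h) (Fin.succ_ne_zero i)
        · exact hu' i.succ h
    · intro u hu w hw huw
      have hu' : ∀ i, φ i ≠ u := by simpa using hu
      have h1 : (addE F (φ 0) w).Adj (φ 0) u := by
        have huw' : addE F (φ 0) u = addE F (φ 0) w := (Prod.ext_iff.mp huw).2
        rw [← huw', addE_adj]
        exact Or.inr ⟨hu' 0, Or.inl ⟨rfl, rfl⟩⟩
      rw [addE_adj] at h1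
      rcases h1 with h | ⟨-, ⟨-, h⟩ | ⟨-, h⟩⟩
      exacts [(hiso 0 u h).elim, h, (hu' 0 h.symm).elim]
  · rintro ⟨ψ, F'⟩ -
    refine (Finset.card_le_card_of_injOn (t := Finset.univ) (fun p => p.1 0)
      (fun _ _ => Finset.mem_coe.mpr (Finset.mem_univ _)) ?_).trans_eq (by simp)
    -- the tuple and the graph are recovered from the first entry of the tuple
    have hrec : ∀ p ∈ ((isoPairs n (j + 1) t).toFinset.bipartiteBelow
        (fun p q => q.1 = Fin.tail p.1 ∧ ∃ u ∉ Set.range p.1, q.2 = addE p.2 (p.1 0) u) (ψ, F')),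
        p.1 = Fin.cons (p.1 0) ψ ∧
          ∀ a b, p.2.Adj a b ↔ F'.Adj a b ∧ a ≠ p.1 0 ∧ b ≠ p.1 0 := by
      rintro ⟨φ, F⟩ hp
      rw [Finset.mem_bipartiteBelow, Set.mem_toFinset] at hp
      obtain ⟨⟨hφ, hF, hiso⟩, h1, u, hu, h2⟩ := hp
      simp only at h1 h2
      subst h1 h2
      refine ⟨(Fin.cons_self_tail φ).symm, fun a b => ?_⟩
      rw [addE_adj]
      constructor
      · intro h
        refine ⟨Or.inl h, ?_, ?_⟩
        · rintro rfl; exact hiso 0 b h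
        · rintro rfl; exact hiso 0 a h.symm
      · rintro ⟨h | ⟨-, ⟨h, -⟩ | ⟨-, h⟩⟩, ha, hb⟩
        exacts [h, (ha h).elim, (hb h).elim]
    intro p hp q hq hpq
    obtain ⟨h1, h2⟩ := hrec p hp
    obtain ⟨h3, h4⟩ := hrec q hq
    simp only at hpq
    refine Prod.ext ?_ ?_
    · rw [h1, h3, hpq]
    · ext a b
      rw [h2, h4, hpq]

/-- Turning the `j` distinguished isolated vertices into leaves, one at a time: each step costs a
factor `n / (n - j) ≤ 2`. -/
theorem isoPairs_le (n h : ℕ) (hn : 2 * h < n) :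
    ∀ j ≤ h, ∀ t, (isoPairs n j t).ncard ≤ 2 ^ j * (planarSet n (t + j)).ncard := by
  intro j
  induction j with
  | zero =>
    intro _ t
    rw [pow_zero, one_mul]
    refine Set.ncard_le_ncard_of_injOn Prod.snd (fun p hp => hp.2.1) ?_ (Set.toFinite _)
    intro p _ q _ hpq
    exact Prod.ext (Subsingleton.elim _ _) hpq
  | succ j ih =>
    intro hj t
    have h1 := isoPairs_step n j t
    have h2 := ih (by omega) (t + 1)
    rw [show t + 1 + j = t + (j + 1) by ring] at h2
    set P := (planarSet n (t + (j + 1))).ncard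
    have hpos : 0 < n - (j + 1) := by omega
    refine Nat.le_of_mul_le_mul_right ?_ hpos
    calc (isoPairs n (j + 1) t).ncard * (n - (j + 1))
        ≤ (isoPairs n j (t + 1)).ncard * n := h1
      _ ≤ (2 ^ j * P) * (2 * (n - (j + 1))) := Nat.mul_le_mul h2 (by omega)
      _ = 2 ^ (j + 1) * P * (n - (j + 1)) := by ring

/-- The graphs in `𝒫(n, m)` with a component isomorphic to `H`. -/
def badSet {h : ℕ} (H : SimpleGraph (Fin h)) (n m : ℕ) : Set (SimpleGraph (Fin n)) :=
  {G ∈ planarSet n m | ∃ W : Finset (Fin n),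
    IsComponent G W ∧ Nonempty (H ≃g G.induce (W : Set (Fin n)))}

/-- The copy of `H` on the vertices `φ 0, φ 1, …` (for injective `φ`). -/
def copyOf {h n : ℕ} (H : SimpleGraph (Fin h)) (φ : Fin h → Fin n) : SimpleGraph (Fin n) :=
  SimpleGraph.fromRel fun u w => ∃ i j, H.Adj i j ∧ φ i = u ∧ φ j = w

theorem copyOf_adj {h n : ℕ} (H : SimpleGraph (Fin h)) {φ : Fin h → Fin n}
    (hφ : Function.Injective φ) (u w : Fin n) :
    (copyOf H φ).Adj u w ↔ ∃ i j, H.Adj i j ∧ φ i = u ∧ φ j = w := by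
  rw [copyOf, SimpleGraph.fromRel_adj]
  constructor
  · rintro ⟨-, h | ⟨i, j, hij, h1, h2⟩⟩
    exacts [h, ⟨j, i, hij.symm, h2, h1⟩]
  · rintro ⟨i, j, hij, rfl, rfl⟩
    exact ⟨fun h => hij.ne (hφ h), Or.inl ⟨i, j, hij, rfl, rfl⟩⟩

theorem edgeCount_copyOf {h n : ℕ} (H : SimpleGraph (Fin h)) {φ : Fin h → Fin n}
    (hφ : Function.Injective φ) : edgeCount (copyOf H φ) = edgeCount H := by
  have : (copyOf H φ).edgeSet = Sym2.map φ '' H.edgeSet := by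
    ext e
    induction e with
    | h u w =>
      rw [SimpleGraph.mem_edgeSet, copyOf_adj H hφ]
      constructor
      · rintro ⟨i, j, hij, rfl, rfl⟩
        exact ⟨s(i, j), hij, rfl⟩
      · rintro ⟨e, he, hew⟩
        induction e with
        | h i j =>
          rw [Sym2.map_mk, Sym2.eq_iff] at hew
          rcases hew with ⟨h1, h2⟩ | ⟨h1, h2⟩
          · exact ⟨i, j, he, h1, h2⟩
          · exact ⟨j, i, SimpleGraph.Adj.symm (G := H) he, h2, h1⟩
  rw [edgeCount, this, Set.ncard_image_of_injective _ (Sym2.map.injective hφ)]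
  rfl

/-- Deleting the edges of a component isomorphic to `H` leaves `h` isolated vertices, and the
graph is recovered once it is known how `H` was placed on them. -/
theorem exists_isoPair {h n m : ℕ} (H : SimpleGraph (Fin h)) {G : SimpleGraph (Fin n)}
    (hG : G ∈ badSet H n m) :
    edgeCount H ≤ m ∧ ∃ p ∈ isoPairs n h (m - edgeCount H), p.2 ⊔ copyOf H p.1 = G := by
  obtain ⟨⟨hpl, hm⟩, W, ⟨-, hW⟩, ⟨f⟩⟩ := hG
  let φ : Fin h → Fin n := fun i => (f i : Fin n)
  have hφ : Function.Injective φ := fun i j hij => f.injective (Subtype.ext hij)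
  have hφW : ∀ i, φ i ∈ W := fun i => (f i).2
  have hsurj : ∀ w ∈ W, ∃ i, φ i = w := fun w hw => by
    obtain ⟨i, hi⟩ := f.surjective ⟨w, hw⟩
    exact ⟨i, congrArg Subtype.val hi⟩
  have hadj : ∀ i j, G.Adj (φ i) (φ j) ↔ H.Adj i j := fun i j => f.map_adj_iff
  let F : SimpleGraph (Fin n) :=
    { Adj := fun u w => G.Adj u w ∧ u ∉ W ∧ w ∉ W
      symm := ⟨fun u w ⟨h1, h2, h3⟩ => ⟨h1.symm, h3, h2⟩⟩
      loopless := ⟨fun u h => h.1.ne rfl⟩ }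
  have hFadj : ∀ u w, F.Adj u w ↔ G.Adj u w ∧ u ∉ W ∧ w ∉ W := fun _ _ => Iff.rfl
  have hsup : F ⊔ copyOf H φ = G := by
    ext u w
    rw [SimpleGraph.sup_adj, copyOf_adj H hφ, hFadj]
    constructor
    · rintro (h | ⟨i, j, hij, rfl, rfl⟩)
      exacts [h.1, (hadj i j).mpr hij]
    · intro huw
      by_cases hu : u ∈ W
      · obtain ⟨i, rfl⟩ := hsurj u hu
        obtain ⟨j, rfl⟩ := hsurj w (hW _ hu w huw)
        exact Or.inr ⟨i, j, (hadj i j).mp huw, rfl, rfl⟩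
      · exact Or.inl ⟨huw, hu, fun hw => hu (hW w hw u huw.symm)⟩
  have hdisj : Disjoint F.edgeSet (copyOf H φ).edgeSet := by
    rw [Set.disjoint_left]
    intro e
    induction e with
    | h u w =>
      intro h1 h2
      rw [SimpleGraph.mem_edgeSet] at h1
      rw [SimpleGraph.mem_edgeSet, copyOf_adj H hφ] at h2
      obtain ⟨i, j, -, rfl, -⟩ := h2
      exact h1.2.1 (hφW i)
  have hcount : edgeCount F + edgeCount H = m := by
    rw [← edgeCount_copyOf H hφ, ← hm]
    conv_rhs => rw [← hsup]
    rw [edgeCount, edgeCount, edgeCount, SimpleGraph.edgeSet_sup,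
      Set.ncard_union_eq hdisj (Set.toFinite _) (Set.toFinite _)]
  refine ⟨by omega, (φ, F), ⟨hφ, ⟨hpl.mono fun u w (h : F.Adj u w) => h.1, ?_⟩, ?_⟩, hsup⟩
  · simp only; omega
  · intro i u h
    exact h.2.1 (hφW i)

/-- For `n` large and `m` close enough to `n` (or smaller), a component isomorphic to `H` has
probability at most `2 ^ h / K`. -/
theorem badSet_bound {h : ℕ} (H : SimpleGraph (Fin h)) (hmulti : h < edgeCount H)
    (K n m : ℕ) (hn : 2 * h < n) (hm2 : m ≤ 2 * n)
    (hm : (2 * (2 * K) + 5) * (1 + 8 * (m + (2 * (2 * K) + 1) - n)) ≤ n) :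
    (badSet H n m).ncard * K ≤ 2 ^ h * (planarSet n m).ncard := by
  rcases (badSet H n m).eq_empty_or_nonempty with hemp | ⟨G₀, hG₀⟩
  · rw [hemp]; simp
  have hem := (exists_isoPair H hG₀).1
  have hbad : (badSet H n m).ncard ≤ (isoPairs n h (m - edgeCount H)).ncard := by
    refine (Set.ncard_le_ncard (t := (fun p => p.2 ⊔ copyOf H p.1) ''
      isoPairs n h (m - edgeCount H)) ?_ (Set.toFinite _)).trans
      (Set.ncard_image_le (Set.toFinite _))
    intro G hG
    exact (exists_isoPair H hG).2
  have hiso := isoPairs_le n h hn h le_rfl (m - edgeCount H)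
  have hstep : ∀ t, t + 1 ≤ m → (planarSet n t).ncard * K ≤ (planarSet n (t + 1)).ncard := by
    intro t ht
    have h1 := planarSet_step n t (2 * K * n) fun G hG => by
      refine addable_superlinear (2 * K) n G hG.1 (by rw [hG.2]; omega) (le_trans ?_ hm)
      rw [hG.2]
      exact Nat.mul_le_mul_left _ (by omega)
    have h2 : (planarSet n (t + 1)).ncard * (t + 1) ≤ (planarSet n (t + 1)).ncard * (2 * n) :=
      Nat.mul_le_mul_left _ (by omega)
    refine Nat.le_of_mul_le_mul_right (c := 2 * n) ?_ (by omega)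
    calc (planarSet n t).ncard * K * (2 * n) = (planarSet n t).ncard * (2 * K * n) := by ring
      _ ≤ _ := h1.trans h2
  have hchain : ∀ d t, t + d ≤ m →
      (planarSet n t).ncard * K ^ d ≤ (planarSet n (t + d)).ncard := by
    intro d
    induction d with
    | zero => intro t _; simp
    | succ d ih =>
      intro t ht
      calc (planarSet n t).ncard * K ^ (d + 1) = (planarSet n t).ncard * K ^ d * K := by ring
        _ ≤ (planarSet n (t + d)).ncard * K := Nat.mul_le_mul_right _ (ih t (by omega))
        _ ≤ _ := hstep (t + d) (by omega)
  have hd := hchain (edgeCount H - h) (m - edgeCount H + h) (by omega)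
  rw [show m - edgeCount H + h + (edgeCount H - h) = m by omega] at hd
  have hKd : K ≤ K ^ (edgeCount H - h) := Nat.le_self_pow (by omega) K
  calc (badSet H n m).ncard * K
      ≤ 2 ^ h * (planarSet n (m - edgeCount H + h)).ncard * K ^ (edgeCount H - h) :=
        Nat.mul_le_mul (hbad.trans hiso) hKd
    _ = 2 ^ h * ((planarSet n (m - edgeCount H + h)).ncard * K ^ (edgeCount H - h)) := by ring
    _ ≤ 2 ^ h * (planarSet n m).ncard := Nat.mul_le_mul_left _ hd

theorem multicyclic_component_whp_zero (h : ℕ) (H : SimpleGraph (Fin h))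
    (hconn : H.Connected) (hplanar : IsPlanar H) (hmulti : h < edgeCount H) (m : ℕ → ℕ)
    (hmu : ∀ ε : ℝ, 0 < ε → ∀ᶠ n : ℕ in atTop, (m n : ℝ) ≤ (1 + ε) * n)
    (hne : ∀ᶠ n : ℕ in atTop, (planarSet n (m n)).Nonempty) :
    Tendsto (fun n : ℕ =>
        planarProb n (m n) fun G => ∃ W : Finset (Fin n),
          IsComponent G W ∧ Nonempty (H ≃g G.induce (W : Set (Fin n))))
      atTop (nhds 0) := by
  refine tendsto_order.2 ⟨fun a ha => Eventually.of_forall fun n =>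
    ha.trans_le (div_nonneg (Nat.cast_nonneg _) (Nat.cast_nonneg _)), fun δ hδ => ?_⟩
  obtain ⟨K, hK⟩ := exists_nat_gt ((2 : ℝ) ^ h / δ)
  have hK0 : (0 : ℝ) < K := lt_trans (by positivity) hK
  obtain ⟨C, hC⟩ : ∃ C, C = 2 * (2 * K) + 5 := ⟨_, rfl⟩
  have hC0 : (0 : ℝ) < C := by rw [hC]; positivity
  filter_upwards [hmu (1 / (16 * C)) (by positivity),
    eventually_ge_atTop (2 * C * (32 * K + 9)), eventually_gt_atTop (2 * h)] with n h1 h2 h3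
  have h4 : 16 * C * m n ≤ 16 * C * n + n := by
    have : (16 * C * m n : ℝ) ≤ 16 * C * n + n := by
      calc (16 * C * m n : ℝ) ≤ 16 * C * ((1 + 1 / (16 * C)) * n) := by gcongr
        _ = 16 * C * n + n := by field_simp
    exact_mod_cast this
  have hbound := badSet_bound H hmulti K n (m n) h3 (by nlinarith) (by
    rw [← hC]
    rcases le_total (m n + (2 * (2 * K) + 1)) n with h5 | h5
    · rw [Nat.sub_eq_zero_of_le h5]
      nlinarith
    · obtain ⟨x, hx⟩ := Nat.exists_eq_add_of_le h5
      rw [hx, Nat.add_sub_cancel_left]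
      have h6 : 16 * C * (m n + (2 * (2 * K) + 1)) = 16 * C * (n + x) := by rw [hx]
      nlinarith)
  change ((badSet H n (m n)).ncard : ℝ) / ((planarSet n (m n)).ncard : ℝ) < δ
  have hb : ((badSet H n (m n)).ncard : ℝ) * K ≤ 2 ^ h * (planarSet n (m n)).ncard := by
    exact_mod_cast hbound
  rcases Nat.eq_zero_or_pos (planarSet n (m n)).ncard with h0 | hpos
  · rw [h0]; simpa using hδ
  have hP : (0 : ℝ) < (planarSet n (m n)).ncard := by exact_mod_cast hpos
  rw [div_lt_iff₀ hδ] at hK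
  rw [div_lt_iff₀ hP]
  nlinarith
end
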